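/- Let n and r be positive integers with 2^{n−1} − 1 ≤ r ≤ 2^n − 2. Then a very general complex hypersurface X ⊂ ℙ^n × ℙ^{r+1} of bidegree (d, 2) with d ≥ 2^n + n − 1 is not stably rational. -/

import Mathlib

/-!
The proof is elementary: it replaces unramified cohomology by explicit Pfister forms and places.

*Degeneration.*  A very general equation `F` has coefficients that are algebraically independent
over `ℚ` (`veryGenerally_of_indep`).  By Chevalley's extension theorem there is then a valuation
ring `O ⊂ ℂ` over which `F` reduces to any prescribed equation with rational coefficients
(`exists_degeneration`).  The special equation is `cc · z₀² + Σ_ε cf_ε · z_ε² = 0`, where `ε` runs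
over subsets of `{1, …, n}`, the `cf_ε` are up to squares the entries of the `n`-fold Pfister form
`Φ` with slots `λ_i λ_n`, and `cc` is `ℓ^{2k} + ℓ · (…)` with `ℓ = Σ λ_i` (up to a power of `λ_n`).
The lower bound on `r` allows all `ε` containing the first index to occur, the upper bound allows the
`ε` to be distinct.

*The generic point.*  `Φ` stays anisotropic over the function field of the special quadric bundle
(`generic_facts`).  Otherwise the quadric would be represented by the pure part of `Φ`, and the
Cassels–Pfister theorem would embed its diagonal form into that pure part; along `ℓ = 0` this is
impossible for dimension reasons (`no_pure_rep`).  The residue map of `O` extends to a place of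
the function field of `{F = 0}`, first by the Gauss extension and then along an inert quadratic
extension, and `Φ` is anisotropic at the reduction of the generic point (`exists_place`).

*Curves.*  Call a point of the base trivial if one of its coordinates `λ_i` is zero or `Φ` is
isotropic there.  Along a polynomial curve on the special quadric bundle `Φ` is locally isotropic
wherever a slot has odd valuation (`isoAt_of_curve`), so a local-global principle for Pfister
forms over `L[X]` (`pf_local_global`) shows that triviality passes from `X = 0` to `X = ∞` (`edge`).
For a curve on `{F = 0}` the place gives one such curve for each edge of a Newton polygon, and
triviality of the reduction passes from the lowest to the highest coefficient vector
(`Place.curve`).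

*Conclusion.*  If `{F = 0}` were stably rational, a line in the parametrising affine space would join
a complex point to the generic point.  Complex points have trivial reductions since the residue
field of `O` is quadratically closed, hence the generic point would be trivial as well
(`Place.no_param`), a contradiction.
-/

noncomputable section
open MvPolynomial

/-- The rational function field `ℂ(t₁, …, t_d)`. -/
abbrev RatFF (d : ℕ) : Type := FractionRing (MvPolynomial (Fin d) ℂ)

/-- An affine ℂ-algebra `R` (a chart, or an affine cone, of a variety `V`) has stably
rational fraction field: `Frac(R)(y₁,…,y_m) ≅ ℂ(t₁,…,t_d)` for some `m`, `d`.
If `R` is the coordinate ring of the affine cone over a projective variety `V`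
(so that `Frac R = ℂ(V)(t)` is stably birational to `ℂ(V)`), this holds if and only if
`V` is stably rational, i.e. `V × ℙᵐ` is birational to a projective space for some `m`. -/
def IsStablyRationalSpec (R : Type*) [CommRing R] [Algebra ℂ R] : Prop :=
  ∃ m d : ℕ, Nonempty (FractionRing (MvPolynomial (Fin m) R) ≃ₐ[ℂ] RatFF d)

/-- The fraction field of the affine ℂ-algebra `R` embeds into a purely transcendental
extension of `ℂ`.  If `R` is the coordinate ring of the affine cone over a projective
variety `V`, this holds if and only if `V` is unirational. -/
def IsUnirationalSpec (R : Type*) [CommRing R] [Algebra ℂ R] : Prop :=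
  ∃ d : ℕ, Nonempty (FractionRing R →ₐ[ℂ] RatFF d)

/-- `Z` is an algebraic (Zariski closed) subset of a parameter space `V` with coordinates
`coords`: it is the common zero locus of a set of polynomial functions in the coordinates. -/
def IsAlgSubsetOn {V : Type*} (coords : Set (V → ℂ)) (Z : Set V) : Prop :=
  ∃ S : Set (V → ℂ),
    S ⊆ ↑(Algebra.adjoin ℂ coords) ∧ Z = {v | ∀ f ∈ S, f v = 0}

/-- `P` holds for a very general point of the parameter space `V`: it holds away from a
countable union of proper algebraic subsets. -/
def VeryGenerallyOn {V : Type*} (coords : Set (V → ℂ)) (P : V → Prop) : Prop :=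
  ∃ Z : ℕ → Set V,
    (∀ m, IsAlgSubsetOn coords (Z m) ∧ Z m ≠ Set.univ) ∧ ∀ v, (∀ m, v ∉ Z m) → P v

noncomputable section
open MvPolynomial

/-- The bihomogeneous coordinate ring `ℂ[x₀,…,xₙ, z₀,…,z_{r+1}]` of `ℙⁿ × ℙ^{r+1}`. -/
abbrev BiAmb (n r : ℕ) := MvPolynomial (Fin (n+1) ⊕ Fin (r+2)) ℂ

/-- The space of bihomogeneous polynomials of bidegree `(d, 2)` on `ℙⁿ × ℙ^{r+1}`:
each such `F` defines the hypersurface `{F = 0} ⊂ ℙⁿ × ℙ^{r+1}` of bidegree `(d, 2)`. -/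
def BidegSpace (n r d : ℕ) : Type :=
  {F : BiAmb n r // ∀ m : (Fin (n+1) ⊕ Fin (r+2)) →₀ ℕ, coeff m F ≠ 0 →
    (∑ i, m (Sum.inl i)) = d ∧ (∑ j, m (Sum.inr j)) = 2}

/-- The coefficients, as coordinates on the parameter space of bidegree `(d,2)` polynomials. -/
def bidegCoords (n r d : ℕ) : Set (BidegSpace n r d → ℂ) :=
  {f | ∃ m : (Fin (n+1) ⊕ Fin (r+2)) →₀ ℕ, f = fun F => coeff m F.1}

/-- The coordinate ring of the affine (double) cone over the hypersurface `{F = 0}`;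
the corresponding affine variety is stably birational to `{F = 0}`. -/
def BiConeRing {n r d : ℕ} (F : BidegSpace n r d) : Type :=
  BiAmb n r ⧸ Ideal.span {F.1}

instance {n r d : ℕ} (F : BidegSpace n r d) : CommRing (BiConeRing F) := Ideal.Quotient.commRing _
instance {n r d : ℕ} (F : BidegSpace n r d) : Algebra ℂ (BiConeRing F) := Ideal.Quotient.algebra ℂ


namespace QB

/-! ### Diagonal Pfister forms -/

/-- Index set of the `n`-fold Pfister form: subsets of `{0, …, n-1}`. -/
abbrev J (n : ℕ) := Fin n → Bool

/-- The monomial `∏_{i ∈ ε} y i`. -/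
def mon {A : Type*} [CommRing A] {n : ℕ} (y : Fin n → A) (ε : J n) : A :=
  ∏ i, if ε i then y i else 1

/-- The Pfister form `Σ_ε (∏_{i ∈ ε} y i) w_ε²`. -/
def pf {A : Type*} [CommRing A] {n : ℕ} (y : Fin n → A) (w : J n → A) : A :=
  ∑ ε, mon y ε * w ε ^ 2

/-- Anisotropy of the Pfister form with slots `y`. -/
def Aniso {A : Type*} [CommRing A] {n : ℕ} (y : Fin n → A) : Prop :=
  ∀ w : J n → A, pf y w = 0 → w = 0

lemma mon_cons {A : Type*} [CommRing A] {n : ℕ} (y : Fin (n+1) → A) (b : Bool) (ε : J n) :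
    mon y (Fin.cons b ε) = (if b then y 0 else 1) * mon (Fin.tail y) ε := by
  simp [mon, Fin.prod_univ_succ, Fin.tail]

lemma sum_J_succ {A : Type*} [AddCommMonoid A] {n : ℕ} (f : J (n+1) → A) :
    ∑ ε, f ε = ∑ ε, f (Fin.cons false ε) + ∑ ε, f (Fin.cons true ε) := by
  rw [← (Fin.consEquiv (fun _ : Fin (n+1) => Bool)).sum_comp, Fintype.sum_prod_type]
  simp [Fin.consEquiv, add_comm]

lemma pf_succ {A : Type*} [CommRing A] {n : ℕ} (y : Fin (n+1) → A) (w : J (n+1) → A) :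
    pf y w = pf (Fin.tail y) (fun ε => w (Fin.cons false ε))
      + y 0 * pf (Fin.tail y) (fun ε => w (Fin.cons true ε)) := by
  simp only [pf, sum_J_succ, mon_cons, Finset.mul_sum]
  simp [mul_assoc]

lemma pf_zero {A : Type*} [CommRing A] (y : Fin 0 → A) (w : J 0 → A) (ε : J 0) :
    pf y w = w ε ^ 2 := by
  simp only [pf, mon, Finset.univ_unique, Finset.sum_singleton, Finset.univ_eq_empty,
    Finset.prod_empty, one_mul]
  exact congrArg (fun ε => w ε ^ 2) (Subsingleton.elim _ _)

/-- The splitting `A^{J (n+1)} = A^{J n} × A^{J n}`. -/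
def splitJ (A : Type*) [CommRing A] (n : ℕ) : (J (n+1) → A) ≃ₗ[A] (J n → A) × (J n → A) where
  toFun w := (fun ε => w (Fin.cons false ε), fun ε => w (Fin.cons true ε))
  invFun p ε := if ε 0 then p.2 (Fin.tail ε) else p.1 (Fin.tail ε)
  map_add' _ _ := rfl
  map_smul' _ _ := rfl
  left_inv w := by
    funext ε
    have h : Fin.cons (ε 0) (Fin.tail ε) = ε := Fin.cons_self_tail ε
    cases h0 : ε 0 <;> simp only [h0] at h <;> simp [h, h0]
  right_inv p := by simp

/-- The polar form of `pf y`, without the factor two. -/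
def pb {A : Type*} [CommRing A] {n : ℕ} (y : Fin n → A) (v w : J n → A) : A :=
  ∑ ε, mon y ε * (v ε * w ε)

lemma pf_add {A : Type*} [CommRing A] {n : ℕ} (y : Fin n → A) (v w : J n → A) :
    pf y (v + w) = pf y v + pf y w + 2 * pb y v w := by
  simp only [pf, pb, Finset.mul_sum, ← Finset.sum_add_distrib, Pi.add_apply]
  exact Finset.sum_congr rfl fun _ _ => by ring

lemma pf_smul {A : Type*} [CommRing A] {n : ℕ} (y : Fin n → A) (c : A) (w : J n → A) :
    pf y (c • w) = c ^ 2 * pf y w := by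
  simp only [pf, Finset.mul_sum, Pi.smul_apply, smul_eq_mul]
  exact Finset.sum_congr rfl fun _ _ => by ring

lemma pb_smul {A : Type*} [CommRing A] {n : ℕ} (y : Fin n → A) (c : A) (v w : J n → A) :
    pb y v (c • w) = c * pb y v w := by
  simp only [pb, Finset.mul_sum, Pi.smul_apply, smul_eq_mul]
  exact Finset.sum_congr rfl fun _ _ => by ring

/-- A linear map multiplying the form by `s` multiplies twice its polar form by `s`. -/
lemma pb_sim {K : Type*} [Field K] {n : ℕ} {y : Fin n → K}
    {σ : (J n → K) →ₗ[K] (J n → K)} {s : K} (h : ∀ p, pf y (σ p) = s * pf y p)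
    (v w : J n → K) : 2 * pb y (σ v) (σ w) = s * (2 * pb y v w) := by
  have h1 := h (v + w)
  rw [map_add, pf_add, pf_add, h, h] at h1
  linear_combination h1

/-- The basis vector of the empty subset. -/
def e0 {A : Type*} [CommRing A] {n : ℕ} : J n → A := Pi.single (fun _ => false) 1

lemma splitJ_e0 {A : Type*} [CommRing A] {n : ℕ} :
    splitJ A n e0 = (e0, 0) := by
  have hf : (fun _ => false : J (n+1)) = Fin.cons false (fun _ => false) := by
    funext i; refine Fin.cases ?_ (fun j => ?_) i <;> simp
  ext ε <;> simp only [splitJ, e0, hf, LinearEquiv.coe_mk, LinearMap.coe_mk, AddHom.coe_mk,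
    Pi.single_apply, Fin.cons_inj] <;> simp

/-- An anisotropic Pfister form is round: every nonzero vector `w` is the image of the
vector of the empty subset under a similarity with factor the value of the form at `w`. -/
lemma pf_round {K : Type*} [Field K] : ∀ {n : ℕ} (y : Fin n → K), Aniso y → ∀ w : J n → K,
    ∃ σ : (J n → K) →ₗ[K] (J n → K), (∀ p, pf y (σ p) = pf y w * pf y p) ∧ σ e0 = w := by
  intro n
  induction n with
  | zero =>
    intro y _ w
    refine ⟨w (fun _ => false) • LinearMap.id, fun p => ?_, ?_⟩
    · rw [LinearMap.smul_apply, LinearMap.id_apply, pf_smul]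
      rw [pf_zero y w (fun _ => false)]
    · funext ε
      simp [e0, Subsingleton.elim ε (fun _ => false)]
  | succ n ih =>
    intro y hy w
    set a := y 0
    set z := Fin.tail y with hz
    have hpf : ∀ w, pf y w = pf z (splitJ K n w).1 + a * pf z (splitJ K n w).2 := pf_succ y
    have hanis : Aniso z := by
      intro v hv
      have h1 := hy ((splitJ K n).symm (v, 0)) (by rw [hpf]; simpa [pf] using hv)
      have h2 := congrArg (splitJ K n) h1
      rw [LinearEquiv.apply_symm_apply, map_zero] at h2
      exact congrArg Prod.fst h2
    obtain ⟨σ1, h1, h1'⟩ := ih z hanis (splitJ K n w).1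
    obtain ⟨σ2, h2, h2'⟩ := ih z hanis (splitJ K n w).2
    set s := pf z (splitJ K n w).1
    set t := pf z (splitJ K n w).2
    -- it suffices to find the third block
    suffices hX : ∃ X : (J n → K) →ₗ[K] (J n → K), (∀ q, pf z (X q) = t * pf z q) ∧
        ∀ p q, 2 * pb z (σ1 p) (X q) = 2 * pb z (σ2 p) (σ1 q) by
      obtain ⟨X, hX1, hX2⟩ := hX
      refine ⟨(splitJ K n).symm.toLinearMap ∘ₗ
        (((σ1.coprod ((-a) • X)).prod (σ2.coprod σ1))) ∘ₗ (splitJ K n).toLinearMap, ?_, ?_⟩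
      · intro p
        rw [hpf, hpf w, hpf p]
        simp only [LinearMap.comp_apply, LinearEquiv.coe_coe, LinearEquiv.apply_symm_apply,
          LinearMap.prod_apply, Function.prod_apply, LinearMap.coprod_apply, LinearMap.smul_apply,
          pf_add, pf_smul, pb_smul, h1, h2, hX1]
        have := hX2 (splitJ K n p).1 (splitJ K n p).2
        linear_combination (-a) * this
      · apply (splitJ K n).injective
        simp only [LinearMap.comp_apply, LinearEquiv.coe_coe, LinearEquiv.apply_symm_apply,
          splitJ_e0, LinearMap.prod_apply, Function.prod_apply, LinearMap.coprod_apply, map_zero, add_zero,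
          h1', h2']
    by_cases hw2 : (splitJ K n w).2 = 0
    · have ht : t = 0 := by simp [t, hw2, pf]
      refine ⟨0, fun q => by simp [ht, pf], fun p q => ?_⟩
      have : σ2 p = 0 := hanis _ (by rw [h2, ht, zero_mul])
      simp [this, pb]
    by_cases hw1 : (splitJ K n w).1 = 0
    · have hs : s = 0 := by simp [s, hw1, pf]
      have : ∀ q, σ1 q = 0 := fun q => hanis _ (by rw [h1, hs, zero_mul])
      exact ⟨σ2, h2, fun p q => by simp [this, pb]⟩
    have hs : s ≠ 0 := fun h => hw1 (hanis _ h)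
    have ht : t ≠ 0 := fun h => hw2 (hanis _ h)
    have hinj : Function.Injective σ2 := by
      rw [injective_iff_map_eq_zero]
      intro v hv
      have := h2 v
      rw [hv] at this
      refine hanis _ ((mul_eq_zero.1 (this.symm.trans ?_)).resolve_left ht)
      simp [pf]
    let e2 := LinearEquiv.ofInjectiveEndo σ2 hinj
    have he2 : ∀ q, σ2 (e2.symm q) = q := fun q => e2.apply_symm_apply q
    refine ⟨(t / s) • (σ1 ∘ₗ e2.symm.toLinearMap ∘ₗ σ1), fun q => ?_, fun p q => ?_⟩
    · have h3 := h2 (e2.symm (σ1 q))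
      rw [he2, h1] at h3
      simp only [LinearMap.smul_apply, LinearMap.comp_apply, pf_smul, LinearEquiv.coe_coe, h1]
      field_simp
      linear_combination -h3
    · simp only [LinearMap.smul_apply, LinearMap.comp_apply, pb_smul, LinearEquiv.coe_coe]
      have h3 := pb_sim h1 p (e2.symm (σ1 q))
      have h4 := pb_sim h2 p (e2.symm (σ1 q))
      rw [he2] at h4
      field_simp
      linear_combination t * h3 - s * h4

/-- An isotropic Pfister form is hyperbolic: it vanishes on a subspace of half the dimension. -/
lemma pf_hyp {K : Type*} [Field K] : ∀ {n : ℕ} (y : Fin n → K), ¬ Aniso y →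
    ∃ W : Submodule K (J n → K), 2 ^ n ≤ 2 * Module.finrank K W ∧ ∀ w ∈ W, pf y w = 0 := by
  intro n
  induction n with
  | zero =>
    intro y hy
    refine absurd (fun w hw => ?_) hy
    funext ε
    rw [pf_zero y w ε] at hw
    exact pow_eq_zero_iff two_ne_zero |>.1 hw
  | succ n ih =>
    intro y hy
    set a := y 0
    set z := Fin.tail y with hz
    have hpf : ∀ w, pf y w = pf z (splitJ K n w).1 + a * pf z (splitJ K n w).2 := pf_succ y
    by_cases hanis : Aniso z
    · have : ∃ w, pf y w = 0 ∧ w ≠ 0 := by simpa [Aniso] using hy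
      obtain ⟨w, hw0, hw⟩ := this
      obtain ⟨σ1, h1, -⟩ := pf_round z hanis (splitJ K n w).1
      obtain ⟨σ2, h2, -⟩ := pf_round z hanis (splitJ K n w).2
      rw [hpf] at hw0
      have hw2 : (splitJ K n w).2 ≠ 0 := by
        intro h
        rw [h] at hw0
        have h1 : (splitJ K n w).1 = 0 := hanis _ (by simpa [pf] using hw0)
        exact hw ((splitJ K n).injective (by rw [map_zero]; exact Prod.ext h1 h))
      have hinj : Function.Injective σ2 := by
        rw [injective_iff_map_eq_zero]
        intro v hv
        have := h2 v
        rw [hv] at this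
        refine hanis _ ((mul_eq_zero.1 (this.symm.trans ?_)).resolve_left fun h => hw2 (hanis _ h))
        simp [pf]
      let f := (splitJ K n).symm.toLinearMap ∘ₗ (σ1.prod σ2)
      have hf : Function.Injective f := by
        intro p q hpq
        have := (splitJ K n).symm.injective hpq
        exact hinj (congrArg Prod.snd this)
      refine ⟨LinearMap.range f, ?_, ?_⟩
      · rw [LinearMap.finrank_range_of_inj hf]
        simp [pow_succ, mul_comm]
      · rintro _ ⟨p, rfl⟩
        rw [hpf]
        simp only [f, LinearMap.comp_apply, LinearEquiv.coe_coe, LinearEquiv.apply_symm_apply,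
          LinearMap.prod_apply, Function.prod_apply, h1, h2]
        linear_combination pf z p * hw0
    · obtain ⟨W, hW, hW'⟩ := ih z hanis
      let f := (splitJ K n).symm.toLinearMap ∘ₗ (W.subtype.prodMap W.subtype)
      have hf : Function.Injective f := (splitJ K n).symm.injective.comp
        (Function.Injective.prodMap W.injective_subtype W.injective_subtype)
      refine ⟨LinearMap.range f, ?_, ?_⟩
      · rw [LinearMap.finrank_range_of_inj hf, Module.finrank_prod, pow_succ]
        omega
      · rintro _ ⟨p, rfl⟩
        rw [hpf]
        simp [f, hW' _ p.1.2, hW' _ p.2.2]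

/-! ### Isotropy of residue forms -/

/-- Total weight of a subset, for weights `a`. -/
def wt {n : ℕ} (a : Fin n → ℕ) (ε : J n) : ℕ := ∑ i, if ε i then a i else 0

lemma mon_mul_pow {A : Type*} [CommRing A] {n : ℕ} (c : A) (a : Fin n → ℕ) (u : Fin n → A)
    (ε : J n) : mon (fun i => c ^ a i * u i) ε = c ^ wt a ε * mon u ε := by
  simp only [mon, wt, ← Finset.prod_pow_eq_pow_sum, ← Finset.prod_mul_distrib]
  refine Finset.prod_congr rfl fun i _ => ?_
  split_ifs <;> simp

lemma mon_insertNth {A : Type*} [CommRing A] {n : ℕ} (u : Fin (n+1) → A) (i : Fin (n+1)) (b : Bool)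
    (δ : J n) : mon u (i.insertNth b δ) = (if b then u i else 1) * mon (fun j => u (i.succAbove j)) δ := by
  simp [mon, Fin.prod_univ_succAbove _ i]

lemma wt_insertNth {n : ℕ} (u : Fin (n+1) → ℕ) (i : Fin (n+1)) (b : Bool)
    (δ : J n) : wt u (i.insertNth b δ) = (if b then u i else 0) + wt (fun j => u (i.succAbove j)) δ := by
  simp [wt, Fin.sum_univ_succAbove _ i]

/-- Let the weight of `i₀` be odd.  If the part of the Pfister form on subsets of some fixed
parity is isotropic, then the part on odd subsets vanishes on a subspace of half its
dimension: both parts are similar to the same Pfister form with one slot less. -/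
lemma odd_part_hyp {k : Type*} [Field k] {n : ℕ} (u : Fin (n+1) → k) (hu : ∀ i, u i ≠ 0)
    (a : Fin (n+1) → ℕ) (i₀ : Fin (n+1)) (ha : a i₀ % 2 = 1) (b : ℕ) (x : J (n+1) → k)
    (hxb : ∀ ε, wt a ε % 2 ≠ b % 2 → x ε = 0) (hx : x ≠ 0) (hpx : pf u x = 0) :
    ∃ W : Submodule k (J (n+1) → k), 2 ^ (n+1) ≤ 4 * Module.finrank k W ∧
      ∀ w ∈ W, (∀ ε, wt a ε % 2 = 0 → w ε = 0) ∧ pf u w = 0 := by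
  set c := u i₀ with hc
  have hc0 : c ≠ 0 := hu i₀
  let a' : Fin n → ℕ := fun j => a (i₀.succAbove j)
  let u' : Fin n → k := fun j => c ^ a' j * u (i₀.succAbove j)
  let bit : ℕ → J n → Bool := fun b δ => decide ((b + wt a' δ) % 2 = 1)
  let ρ : ℕ → J n → J (n+1) := fun b δ => i₀.insertNth (bit b δ) δ
  let q : ℕ → J n → k := fun b δ => c ^ ((b + wt a' δ) / 2)
  have hq0 : ∀ b δ, q b δ ≠ 0 := fun b δ => pow_ne_zero _ hc0
  have hmon : ∀ b δ, mon u (ρ b δ) * q b δ ^ 2 = c ^ b * mon u' δ := by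
    intro b δ
    have h1 : mon u' δ = c ^ wt a' δ * mon (fun j => u (i₀.succAbove j)) δ := mon_mul_pow _ _ _ _
    rw [h1, mon_insertNth, ← mul_assoc, ← pow_add, ← pow_mul]
    have h2 : c ^ (b + wt a' δ) = (if bit b δ then c else 1) * c ^ ((b + wt a' δ) / 2 * 2) := by
      by_cases h : (b + wt a' δ) % 2 = 1
      · simp only [bit, h, decide_true, if_true, ← pow_succ']
        congr 1; omega
      · simp only [bit, h, decide_false, Bool.false_eq_true, if_false, one_mul]
        congr 1; omega
    rw [h2]; ring
  have hwt : ∀ (v : Bool) δ, wt a (i₀.insertNth v δ) = (if v then a i₀ else 0) + wt a' δ :=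
    fun v δ => wt_insertNth _ _ _ _
  have hsum : ∀ (b : ℕ) (f : J (n+1) → k), (∀ ε, wt a ε % 2 ≠ b % 2 → f ε = 0) →
      ∑ ε, f ε = ∑ δ, f (ρ b δ) := by
    intro b f hf
    rw [← (Fin.insertNthEquiv (fun _ : Fin (n+1) => Bool) i₀).sum_comp, Fintype.sum_prod_type_right]
    refine Finset.sum_congr rfl fun δ _ => ?_
    rw [Fintype.sum_bool]
    change f (i₀.insertNth true δ) + f (i₀.insertNth false δ) = f (i₀.insertNth (bit b δ) δ)
    by_cases h : (b + wt a' δ) % 2 = 1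
    · rw [hf (i₀.insertNth false δ) (by rw [hwt]; simp; omega)]
      simp [bit, h]
    · rw [hf (i₀.insertNth true δ) (by rw [hwt]; simp; omega)]
      simp [bit, h]
  have hnot : ¬ Aniso u' := by
    intro han
    apply hx
    have h1 : pf u' (fun δ => x (ρ b δ) / q b δ) = 0 := by
      have h2 : c ^ b * pf u' (fun δ => x (ρ b δ) / q b δ) = 0 := by
        rw [← hpx, pf, pf, hsum b _ (fun ε h => by rw [hxb ε h]; simp), Finset.mul_sum]
        refine Finset.sum_congr rfl fun δ _ => ?_
        rw [← mul_assoc, ← hmon, div_pow, mul_assoc, mul_div_cancel₀ _ (pow_ne_zero 2 (hq0 b δ))]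
      exact (mul_eq_zero.1 h2).resolve_left (pow_ne_zero _ hc0)
    have h3 := han _ h1
    funext ε
    by_cases h : wt a ε % 2 = b % 2
    · have h4 : ε = ρ b (i₀.removeNth ε) := by
        have h5 := hwt (ε i₀) (i₀.removeNth ε)
        rw [Fin.insertNth_self_removeNth] at h5
        conv_lhs => rw [← Fin.insertNth_self_removeNth i₀ ε]
        simp only [ρ, bit]
        congr 1
        cases h6 : ε i₀ <;> simp [h6] at h5 <;> simp <;> omega
      have h5 := congrFun h3 (i₀.removeNth ε)
      simp only [Pi.zero_apply, div_eq_zero_iff, hq0, or_false] at h5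
      rw [h4, h5]; rfl
    · exact hxb ε h
  obtain ⟨W, hW, hW'⟩ := pf_hyp u' hnot
  let T : (J n → k) →ₗ[k] (J (n+1) → k) :=
    { toFun := fun w ε => if wt a ε % 2 = 1 then q 1 (i₀.removeNth ε) * w (i₀.removeNth ε) else 0
      map_add' := fun v w => by
        funext ε; simp only [Pi.add_apply]; split_ifs <;> ring
      map_smul' := fun r w => by
        funext ε; simp only [Pi.smul_apply, smul_eq_mul, RingHom.id_apply]; split_ifs <;> ring }
  have hTρ : ∀ w δ, T w (ρ 1 δ) = q 1 δ * w δ := by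
    intro w δ
    have h1 : wt a (ρ 1 δ) % 2 = 1 := by
      simp only [ρ]
      rw [hwt]
      by_cases h : (1 + wt a' δ) % 2 = 1
      · simp [bit, h]; omega
      · simp [bit, h]; omega
    have h2 : i₀.removeNth (ρ 1 δ) = δ := by simp [ρ]
    simp only [T, LinearMap.coe_mk, AddHom.coe_mk, h1, if_true, h2]
  have hT : Function.Injective T := by
    rw [injective_iff_map_eq_zero]
    intro w hw
    funext δ
    have := hTρ w δ
    rw [hw] at this
    exact (mul_eq_zero.1 this.symm).resolve_left (hq0 1 δ)
  refine ⟨W.map T, ?_, ?_⟩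
  · rw [← (Submodule.equivMapOfInjective T hT W).finrank_eq]
    rw [pow_succ]; omega
  · rintro _ ⟨w, hw, rfl⟩
    have h0 : ∀ ε, wt a ε % 2 = 0 → T w ε = 0 := by
      intro ε h
      simp [T, h]
    refine ⟨h0, ?_⟩
    rw [pf, hsum 1 _ (fun ε h => by rw [h0 ε (by omega)]; simp)]
    have : ∀ δ, mon u (ρ 1 δ) * T w (ρ 1 δ) ^ 2 = c * (mon u' δ * w δ ^ 2) := by
      intro δ
      rw [hTρ, mul_pow, ← mul_assoc, hmon]; ring
    simp only [this, ← Finset.mul_sum]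
    have h3 := hW' w hw
    rw [pf] at h3
    rw [h3, mul_zero]

open Polynomial in
/-- Local isotropy, at the prime `π`, of the Pfister form with polynomial slots: the form takes
a value that is more divisible by `π` than one of its terms. -/
def IsoAt {L : Type*} [Field L] {n : ℕ} (π : L[X]) (y : Fin n → L[X]) : Prop :=
  ∃ (w : J n → L[X]) (ε₀ : J n) (e : ℕ), π ^ e ∣ pf y w ∧ ¬ π ^ e ∣ mon y ε₀ * w ε₀ ^ 2

lemma prime_not_dvd_mon {A : Type*} [CommRing A] {n : ℕ} {π : A} (hπ : Prime π)
    {u : Fin n → A} (hu : ∀ i, ¬ π ∣ u i) (ε : J n) : ¬ π ∣ mon u ε := by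
  rw [mon, hπ.dvd_finset_prod_iff]
  rintro ⟨i, -, h⟩
  split_ifs at h
  · exact hu i h
  · exact hπ.not_unit (isUnit_of_dvd_one h)

lemma pow_mul_eq_pow_mul {A : Type*} [CommRing A] [IsDomain A] {π x y : A} (hπ : Prime π)
    {a b : ℕ} (hx : ¬ π ∣ x) (hy : ¬ π ∣ y) (h : π ^ a * x = π ^ b * y) : a = b ∧ x = y := by
  have key : ∀ {a b : ℕ} {x y : A}, ¬ π ∣ x → π ^ a * x = π ^ b * y → b ≤ a := by
    intro a b x y hx h
    by_contra! hlt
    obtain ⟨c, rfl⟩ := Nat.exists_eq_add_of_lt hlt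
    rw [add_assoc, pow_add, mul_assoc] at h
    have := mul_left_cancel₀ (pow_ne_zero a hπ.ne_zero) h
    exact hx ⟨π ^ c * y, by rw [this]; ring⟩
  have hab : a = b := le_antisymm (key hy h.symm) (key hx h)
  subst hab
  exact ⟨rfl, mul_left_cancel₀ (pow_ne_zero a hπ.ne_zero) h⟩

open Polynomial in
lemma exists_pow_mul {L : Type*} [Field L] {π f : L[X]} (hπ : Prime π) (hf : f ≠ 0) :
    ∃ (a : ℕ) (u : L[X]), f = π ^ a * u ∧ ¬ π ∣ u := by
  obtain ⟨u, hu, h⟩ := (FiniteMultiplicity.of_not_isUnit hπ.not_unit hf).exists_eq_pow_mul_and_not_dvd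
  exact ⟨_, u, hu, h⟩

open Polynomial in
/-- The terms of least `π`-adic valuation give an isotropic vector of one of the residue forms. -/
lemma IsoAt.extract {L : Type*} [Field L] {n : ℕ} {π : L[X]} (hπ : Prime π)
    {a : Fin n → ℕ} {u : Fin n → L[X]} (hu : ∀ i, ¬ π ∣ u i)
    (h : IsoAt π (fun i => π ^ a i * u i)) :
    ∃ (b : ℕ) (x : J n → L[X]), (∀ ε, wt a ε % 2 ≠ b % 2 → x ε = 0) ∧ (∃ ε, ¬ π ∣ x ε) ∧
      π ∣ pf u x := by
  classical
  obtain ⟨w, ε₀, e, h1, h2⟩ := h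
  simp only [pf, mon_mul_pow] at h1 h2
  set t : J n → L[X] := fun ε => π ^ wt a ε * mon u ε * w ε ^ 2 with ht
  have hex : ∃ μ : ℕ, ∃ ε, ¬ π ^ (μ + 1) ∣ t ε := ⟨e, ε₀, fun h => h2 (dvd_trans (pow_dvd_pow _ (by omega)) h)⟩
  set μ := Nat.find hex with hμ
  obtain ⟨ε₁, hε₁⟩ := Nat.find_spec hex
  have hdiv : ∀ ε, π ^ μ ∣ t ε := by
    intro ε
    rcases Nat.eq_zero_or_pos μ with h0 | h0
    · rw [h0]; simp
    · have := Nat.find_min hex (m := μ - 1) (by omega)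
      push Not at this
      have h3 := this ε
      rwa [Nat.sub_add_cancel h0] at h3
  have hμe : μ + 1 ≤ e := by
    have he : e ≠ 0 := by rintro rfl; simp at h2
    have : μ ≤ e - 1 := Nat.find_min' hex ⟨ε₀, by rwa [Nat.sub_add_cancel (by omega)]⟩
    omega
  have hx : ∀ ε, ∃ x : L[X], (wt a ε % 2 ≠ μ % 2 → x = 0) ∧ (¬ π ^ (μ+1) ∣ t ε → ¬ π ∣ x) ∧
      π ^ (μ + 1) ∣ t ε - π ^ μ * (mon u ε * x ^ 2) := by
    intro ε
    by_cases hd : π ^ (μ + 1) ∣ t ε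
    · exact ⟨0, fun _ => rfl, fun h => absurd hd h, by simpa using hd⟩
    · have hw : w ε ≠ 0 := by
        intro h0; apply hd; simp [ht, h0]
      obtain ⟨β, x, hx, hx'⟩ := exists_pow_mul hπ hw
      have h3 : t ε = π ^ (wt a ε + 2 * β) * (mon u ε * x ^ 2) := by
        simp only [ht, hx]; ring
      have h4 : ¬ π ∣ mon u ε * x ^ 2 := by
        intro h
        rcases hπ.dvd_or_dvd h with h | h
        · exact prime_not_dvd_mon hπ hu ε h
        · exact hx' (hπ.dvd_of_dvd_pow h)
      have h5 : wt a ε + 2 * β = μ := by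
        obtain ⟨z, hz⟩ := hdiv ε
        have hz' : ¬ π ∣ z := fun h => hd (by
          rw [hz, pow_succ]; exact mul_dvd_mul_left _ h)
        exact (pow_mul_eq_pow_mul hπ h4 hz' (h3.symm.trans hz)).1
      refine ⟨x, fun h => absurd (by omega) h, fun _ => hx', ?_⟩
      rw [h3, h5, sub_self]; exact dvd_zero _
  choose x hx1 hx2 hx3 using hx
  refine ⟨μ, x, hx1, ⟨ε₁, hx2 _ hε₁⟩, ?_⟩
  have h3 : π ^ (μ + 1) ∣ π ^ μ * pf u x := by
    have h4 : π ^ (μ + 1) ∣ ∑ ε, t ε - ∑ ε, π ^ μ * (mon u ε * x ε ^ 2) := by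
      rw [← Finset.sum_sub_distrib]; exact Finset.dvd_sum fun ε _ => hx3 ε
    rw [pf, Finset.mul_sum]
    exact (dvd_sub_right (dvd_trans (pow_dvd_pow _ hμe) h1)).1 h4
  rw [pow_succ] at h3
  exact (mul_dvd_mul_iff_left (pow_ne_zero _ hπ.ne_zero)).1 h3

open Polynomial in
lemma exists_squarefree_mul_sq {L : Type*} [Field L] (m : L[X]) (hm : m ≠ 0) :
    ∃ o s : L[X], m = o * s ^ 2 ∧ Squarefree o := by
  induction h : m.natDegree using Nat.strong_induction_on generalizing m with
  | _ N ih =>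
    by_cases hs : Squarefree m
    · exact ⟨m, 1, by simp, hs⟩
    · simp only [Squarefree, not_forall] at hs
      obtain ⟨x, ⟨m', rfl⟩, hx⟩ := hs
      have hx0 : x ≠ 0 := by rintro rfl; simp at hm
      have hm0 : m' ≠ 0 := by rintro rfl; simp at hm
      have hxd : 0 < x.natDegree := by
        rw [pos_iff_ne_zero]; intro h0
        exact hx ((isUnit_iff_degree_eq_zero).2 (by rw [degree_eq_natDegree hx0, h0]; rfl))
      obtain ⟨o, s, h1, h2⟩ := ih m'.natDegree (by
        rw [← h, natDegree_mul (mul_ne_zero hx0 hx0) hm0, natDegree_mul hx0 hx0]; omega) m' hm0 rfl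
      exact ⟨o, x * s, by rw [h1]; ring, h2⟩

open Polynomial in
lemma squarefree_part_local {L : Type*} [Field L] {π o s U : L[X]} (hπ : Prime π) {k : ℕ}
    (ho : Squarefree o) (hs : s ≠ 0) (hU : ¬ π ∣ U) (h : π ^ k * U = o * s ^ 2) :
    ∃ o' s' : L[X], ¬ π ∣ o' ∧ ¬ π ∣ s' ∧ o' * s' ^ 2 = U ∧ o = π ^ (k % 2) * o' := by
  obtain ⟨σ, s', hs1, hs2⟩ := exists_pow_mul hπ hs
  obtain ⟨ν, o', ho1, ho2⟩ := exists_pow_mul hπ ho.ne_zero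
  have hν : ν ≤ 1 := by
    by_contra! hlt
    refine hπ.not_unit (ho π ?_)
    rw [ho1, ← sq]
    exact dvd_mul_of_dvd_left (pow_dvd_pow _ hlt) _
  have h1 : ¬ π ∣ o' * s' ^ 2 := by
    intro h
    rcases hπ.dvd_or_dvd h with h | h
    · exact ho2 h
    · exact hs2 (hπ.dvd_of_dvd_pow h)
  have h2 : π ^ k * U = π ^ (ν + 2 * σ) * (o' * s' ^ 2) := by
    rw [h, hs1, ho1]; ring
  obtain ⟨h3, h4⟩ := pow_mul_eq_pow_mul hπ hU h1 h2
  refine ⟨o', s', ho2, hs2, h4.symm, ?_⟩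
  rw [ho1]; congr 2; omega

/-! ### A local-global principle over a polynomial ring -/

open Polynomial Classical in
/-- At a prime where some slot has odd valuation and the form is locally isotropic, membership in
a subspace of codimension `(3/4) 2ⁿ` modulo `π` forces the squarefree form to be divisible
by `π²`. -/
lemma local_subspace {L : Type*} [Field L] {n : ℕ} {π : L[X]} [Fact (Irreducible π)]
    {y : Fin (n+1) → L[X]} (hy : ∀ i, y i ≠ 0) {o s : J (n+1) → L[X]}
    (hos : ∀ ε, mon y ε = o ε * s ε ^ 2) (ho : ∀ ε, Squarefree (o ε))
    (hiso : (∃ (i : Fin (n+1)) (a : ℕ) (u : L[X]), y i = π ^ (2 * a + 1) * u ∧ ¬ π ∣ u) → IsoAt π y)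
    (hd : ∃ ε, π ∣ o ε) :
    2 * (Finset.univ.filter fun ε => π ∣ o ε).card ≤ 2 ^ (n+1) ∧
    ∃ I : Submodule (AdjoinRoot π) (J (n+1) → AdjoinRoot π),
      2 ^ (n+1) ≤ 4 * Module.finrank (AdjoinRoot π) I ∧
      ∀ w : J (n+1) → L[X], (fun ε => AdjoinRoot.mk π (w ε)) ∈ I → π ^ 2 ∣ ∑ ε, o ε * w ε ^ 2 := by
  classical
  have hirr : Irreducible π := Fact.out
  have hπ : Prime π := hirr.prime
  have hmk : ∀ f : L[X], AdjoinRoot.mk π f = 0 ↔ π ∣ f := fun f => AdjoinRoot.mk_eq_zero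
  choose a u hyu hu using fun i => exists_pow_mul hπ (hy i)
  have hyu' : y = fun i => π ^ a i * u i := funext hyu
  have hs0 : ∀ ε, s ε ≠ 0 := by
    intro ε h
    have h1 := hos ε
    rw [h] at h1
    have : mon y ε ≠ 0 := by
      rw [mon, Finset.prod_ne_zero_iff]; intro i _; split_ifs
      · exact hy i
      · exact one_ne_zero
    exact this (by rw [h1]; simp)
  have hloc : ∀ ε, ∃ o' s' : L[X], ¬ π ∣ o' ∧ ¬ π ∣ s' ∧ o' * s' ^ 2 = mon u ε ∧
      o ε = π ^ (wt a ε % 2) * o' := fun ε =>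
    squarefree_part_local hπ (ho ε) (hs0 ε) (prime_not_dvd_mon hπ hu ε) (by
      rw [← mon_mul_pow, ← hyu', hos])
  choose o' s' ho' hs' hos' hoo' using hloc
  have hodd : ∀ ε, π ∣ o ε ↔ wt a ε % 2 = 1 := by
    intro ε
    rw [hoo' ε]
    rcases Nat.mod_two_eq_zero_or_one (wt a ε) with h | h
    · simp [h, ho']
    · simp [h]
  have hi : ∃ i₀, a i₀ % 2 = 1 := by
    by_contra! hcon
    obtain ⟨ε, hε⟩ := hd
    rw [hodd] at hε
    have : 2 ∣ wt a ε := Finset.dvd_sum fun i _ => by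
      split_ifs
      · have := hcon i; omega
      · exact dvd_zero 2
    omega
  obtain ⟨i₀, hi₀⟩ := hi
  constructor
  · -- flipping the membership of `i₀` changes the parity
    let fl : J (n+1) → J (n+1) := fun ε => Function.update ε i₀ (!ε i₀)
    have hfl : ∀ ε, fl (fl ε) = ε := by
      intro ε; simp [fl]
    have hinj : Function.Injective fl := fun p q h => by rw [← hfl p, h, hfl]
    have hpar : ∀ ε, wt a ε % 2 = 1 → ¬ wt a (fl ε) % 2 = 1 := by
      intro ε h
      have h1 : wt a ε = (if ε i₀ then a i₀ else 0) + ∑ i ∈ Finset.univ.erase i₀, if ε i then a i else 0 :=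
        (Finset.add_sum_erase _ (fun i => if ε i then a i else 0) (Finset.mem_univ i₀)).symm
      have h2 : wt a (fl ε) = (if (fl ε) i₀ then a i₀ else 0) + ∑ i ∈ Finset.univ.erase i₀, if (fl ε) i then a i else 0 :=
        (Finset.add_sum_erase _ (fun i => if (fl ε) i then a i else 0) (Finset.mem_univ i₀)).symm
      have h3 : ∑ i ∈ Finset.univ.erase i₀, (if (fl ε) i then a i else 0)
          = ∑ i ∈ Finset.univ.erase i₀, if ε i then a i else 0 :=
        Finset.sum_congr rfl fun i hi => by
          simp [fl, Finset.ne_of_mem_erase hi]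
      rw [h3] at h2
      cases h4 : ε i₀ <;> simp [fl, h4] at h1 h2 ⊢ <;> omega
    have h1 : ((Finset.univ.filter fun ε => π ∣ o ε).image fl) ⊆ (Finset.univ.filter fun ε => ¬ π ∣ o ε) := by
      intro ε hε
      simp only [Finset.mem_image, Finset.mem_filter, Finset.mem_univ, true_and] at hε ⊢
      obtain ⟨δ, h, rfl⟩ := hε
      rw [hodd] at h ⊢
      exact hpar δ h
    have h2 := Finset.card_le_card h1
    rw [Finset.card_image_of_injective _ hinj] at h2
    have h3 := Finset.card_filter_add_card_filter_not (s := (Finset.univ : Finset (J (n+1)))) (fun ε => π ∣ o ε)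
    have h4 : (Finset.univ : Finset (J (n+1))).card = 2 ^ (n+1) := by simp
    omega
  · have hI : IsoAt π y := hiso ⟨i₀, a i₀ / 2, u i₀, by
      rw [show 2 * (a i₀ / 2) + 1 = a i₀ by omega]; exact hyu i₀, hu i₀⟩
    rw [hyu'] at hI
    obtain ⟨b, x, hxb, ⟨ε₁, hε₁⟩, hx⟩ := IsoAt.extract hπ hu hI
    have hmon : ∀ ε, mon (fun i => AdjoinRoot.mk π (u i)) ε = AdjoinRoot.mk π (mon u ε) := by
      intro ε
      simp only [mon, map_prod]
      exact Finset.prod_congr rfl fun i _ => by split_ifs <;> simp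
    obtain ⟨W, hW, hW'⟩ := odd_part_hyp (fun i => AdjoinRoot.mk π (u i))
      (fun i h => hu i ((hmk _).1 h)) a i₀ hi₀ b (fun ε => AdjoinRoot.mk π (x ε))
      (fun ε h => by rw [hxb ε h, map_zero])
      (fun h => hε₁ ((hmk _).1 (congrFun h ε₁)))
      (by simp only [pf, hmon, ← map_pow, ← map_mul, ← map_sum]; exact (hmk _).2 hx)
    let T : (J (n+1) → AdjoinRoot π) →ₗ[AdjoinRoot π] (J (n+1) → AdjoinRoot π) :=
      { toFun := fun w ε => AdjoinRoot.mk π (s' ε) * w ε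
        map_add' := fun v w => by funext ε; simp only [Pi.add_apply]; ring
        map_smul' := fun r w => by
          funext ε; simp only [Pi.smul_apply, smul_eq_mul, RingHom.id_apply]; ring }
    have hT : Function.Injective T := by
      rw [injective_iff_map_eq_zero]
      intro w hw
      funext ε
      exact (mul_eq_zero.1 (congrFun hw ε)).resolve_left fun h => hs' ε ((hmk _).1 h)
    refine ⟨W.map T, by rwa [← (Submodule.equivMapOfInjective T hT W).finrank_eq], ?_⟩
    rintro w ⟨v, hv, hvw⟩
    obtain ⟨hv0, hpv⟩ := hW' v hv
    have hvw' : ∀ ε, AdjoinRoot.mk π (s' ε) * v ε = AdjoinRoot.mk π (w ε) := fun ε => congrFun hvw ε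
    have hev : ∀ ε, wt a ε % 2 = 0 → π ∣ w ε := by
      intro ε h
      rw [← hmk, ← hvw', hv0 ε h, mul_zero]
    -- even terms are divisible by `π²`; the odd terms are `π` times a value of the residue form
    have hsplit : ∀ ε, π ^ 2 ∣ o ε * w ε ^ 2 - (if wt a ε % 2 = 1 then π * (o' ε * w ε ^ 2) else 0) := by
      intro ε
      rcases Nat.mod_two_eq_zero_or_one (wt a ε) with h | h
      · simp only [h, zero_ne_one, if_false, sub_zero]
        exact dvd_mul_of_dvd_right (pow_dvd_pow_of_dvd (hev ε h) 2) _
      · simp only [h, if_true]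
        rw [hoo' ε, h]
        simp [mul_assoc]
    have h1 : π ^ 2 ∣ ∑ ε, o ε * w ε ^ 2 - ∑ ε, (if wt a ε % 2 = 1 then π * (o' ε * w ε ^ 2) else 0) := by
      rw [← Finset.sum_sub_distrib]; exact Finset.dvd_sum fun ε _ => hsplit ε
    refine (dvd_sub_left ?_).1 h1
    have h2 : ∑ ε, (if wt a ε % 2 = 1 then π * (o' ε * w ε ^ 2) else 0)
        = π * ∑ ε, (if wt a ε % 2 = 1 then (o' ε * w ε ^ 2) else 0) := by
      rw [Finset.mul_sum]; exact Finset.sum_congr rfl fun ε _ => by split_ifs <;> simp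
    rw [h2, sq]
    refine mul_dvd_mul_left _ ((hmk _).1 ?_)
    rw [map_sum]
    rw [pf] at hpv
    rw [← hpv]
    refine Finset.sum_congr rfl fun ε _ => ?_
    rcases Nat.mod_two_eq_zero_or_one (wt a ε) with h | h
    · simp [h, hv0 ε h]
    · simp only [h, if_true]
      rw [hmon, ← hos' ε, map_mul, map_mul, map_pow, map_pow, ← hvw']
      ring

open Polynomial Classical in
lemma natDegree_squarefree_le {L : Type*} [Field L] {o : L[X]} (ho : Squarefree o) (S : Finset L[X])
    (hS : ∀ π, Irreducible π → π.Monic → π ∣ o → π ∈ S) :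
    o.natDegree ≤ ∑ π ∈ S, if π ∣ o then π.natDegree else 0 := by
  classical
  open UniqueFactorizationMonoid in
  have h0 : o ≠ 0 := ho.ne_zero
  have hnd : (normalizedFactors o).Nodup := (squarefree_iff_nodup_normalizedFactors h0).1 ho
  have hprod : ∏ π ∈ (normalizedFactors o).toFinset, π = (normalizedFactors o).prod := by
    rw [Finset.prod_eq_multiset_prod, Multiset.toFinset_val, hnd.dedup, Multiset.map_id']
  have hassoc := prod_normalizedFactors h0
  rw [← hprod] at hassoc
  have hdeg : o.natDegree = ∑ π ∈ (normalizedFactors o).toFinset, π.natDegree := by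
    rw [← natDegree_prod]
    · exact (natDegree_eq_of_degree_eq (degree_eq_degree_of_associated hassoc)).symm
    · intro π hπ
      exact (irreducible_of_normalized_factor π (Multiset.mem_toFinset.1 hπ)).ne_zero
  rw [hdeg, ← Finset.sum_filter]
  refine Finset.sum_le_sum_of_subset ?_
  intro π hπ
  have hπ' := Multiset.mem_toFinset.1 hπ
  have hdvd := dvd_of_mem_normalizedFactors hπ'
  have hirr := irreducible_of_normalized_factor π hπ'
  have hmonic : π.Monic := by
    rw [← normalize_normalized_factor π hπ']; exact monic_normalize hirr.ne_zero
  exact Finset.mem_filter.2 ⟨hS π hirr hmonic hdvd, hdvd⟩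

open Polynomial in
/-- Let the slots have even degree and even order at `0`.  If the Pfister form is locally isotropic
at `X` and at all primes where some slot has odd valuation, it is isotropic.  The solution
comes from a dimension count for vectors of bounded degree satisfying the local conditions; on those,
the squarefree form is a constant multiple of a fixed square, and the constant is killed at `0`. -/
theorem pf_local_global {L : Type*} [Field L] {n : ℕ} (y : Fin (n+1) → L[X]) (hy : ∀ i, y i ≠ 0)
    (hdeg : ∀ i, Even (y i).natDegree)
    (hX : ∀ i, ∃ (a : ℕ) (u : L[X]), y i = Polynomial.X ^ (2 * a) * u ∧ ¬ Polynomial.X ∣ u)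
    (hiso : ∀ π : L[X], Irreducible π →
      (∃ (i : Fin (n+1)) (a : ℕ) (u : L[X]), y i = π ^ (2 * a + 1) * u ∧ ¬ π ∣ u) → IsoAt π y)
    (h0 : IsoAt Polynomial.X y) : ∃ w : J (n+1) → L[X], w ≠ 0 ∧ pf y w = 0 := by
  classical
  have hm0 : ∀ ε, mon y ε ≠ 0 := by
    intro ε
    rw [mon, Finset.prod_ne_zero_iff]; intro i _; split_ifs
    · exact hy i
    · exact one_ne_zero
  choose o s hos ho using fun ε => exists_squarefree_mul_sq (mon y ε) (hm0 ε)
  have hs0 : ∀ ε, s ε ≠ 0 := fun ε h => hm0 ε (by rw [hos, h]; simp)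
  have ho0 : ∀ ε, o ε ≠ 0 := fun ε => (ho ε).ne_zero
  -- it suffices to make the squarefree form isotropic
  suffices hQ : ∃ w : J (n+1) → L[X], w ≠ 0 ∧ ∑ ε, o ε * w ε ^ 2 = 0 by
    obtain ⟨w, hw, hw0⟩ := hQ
    obtain ⟨ε₁, hε₁⟩ := Function.ne_iff.1 hw
    refine ⟨fun ε => w ε * ∏ δ ∈ Finset.univ.erase ε, s δ, Function.ne_iff.2 ⟨ε₁, ?_⟩, ?_⟩
    · exact mul_ne_zero hε₁ (Finset.prod_ne_zero_iff.2 fun δ _ => hs0 δ)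
    · have : ∀ ε, mon y ε * (w ε * ∏ δ ∈ Finset.univ.erase ε, s δ) ^ 2
          = (∏ δ, s δ) ^ 2 * (o ε * w ε ^ 2) := by
        intro ε
        rw [← Finset.mul_prod_erase _ s (Finset.mem_univ ε), hos]; ring
      rw [pf]
      simp only [this, ← Finset.mul_sum, hw0, mul_zero]
  have hodeg : ∀ ε, 2 ∣ (o ε).natDegree := by
    intro ε
    have h1 : (mon y ε).natDegree = (o ε).natDegree + 2 * (s ε).natDegree := by
      rw [hos, natDegree_mul (ho0 ε) (pow_ne_zero 2 (hs0 ε)), natDegree_pow]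
    have h2 : Even (mon y ε).natDegree := by
      rw [mon, natDegree_prod _ _ (by intro i _; split_ifs; exacts [hy i, one_ne_zero])]
      refine Finset.even_sum _ fun i _ => ?_
      split_ifs
      · exact hdeg i
      · simp
    have := h2.two_dvd
    omega
  let S : Finset L[X] := (UniqueFactorizationMonoid.normalizedFactors (∏ ε, o ε)).toFinset
  have hP0 : ∏ ε, o ε ≠ 0 := Finset.prod_ne_zero_iff.2 fun ε _ => ho0 ε
  have hSirr : ∀ π ∈ S, Irreducible π := fun π hπ =>
    UniqueFactorizationMonoid.irreducible_of_normalized_factor π (Multiset.mem_toFinset.1 hπ)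
  have hSmon : ∀ π ∈ S, π.Monic := fun π hπ => by
    rw [← UniqueFactorizationMonoid.normalize_normalized_factor π (Multiset.mem_toFinset.1 hπ)]
    exact monic_normalize (hSirr π hπ).ne_zero
  have hSd : ∀ π ∈ S, ∃ ε, π ∣ o ε := by
    intro π hπ
    have h1 := UniqueFactorizationMonoid.dvd_of_mem_normalizedFactors (Multiset.mem_toFinset.1 hπ)
    obtain ⟨ε, -, h⟩ := ((hSirr π hπ).prime.dvd_finset_prod_iff _).1 h1
    exact ⟨ε, h⟩
  have hSall : ∀ ε π, Irreducible π → π.Monic → π ∣ o ε → π ∈ S := by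
    intro ε π hπ hm hd
    obtain ⟨q, hq, hassoc⟩ := UniqueFactorizationMonoid.exists_mem_normalizedFactors_of_dvd hP0 hπ
      (hd.trans (Finset.dvd_prod_of_mem o (Finset.mem_univ ε)))
    have hq' : q ∈ S := Multiset.mem_toFinset.2 hq
    rwa [eq_of_monic_of_associated hm (hSmon q hq') hassoc]
  let P : L[X] := ∏ π ∈ S, π
  set D := ∑ π ∈ S, π.natDegree with hD
  have hPD : P.natDegree = D := natDegree_prod _ _ fun π hπ => (hSirr π hπ).ne_zero
  have hPm : P.Monic := monic_prod_of_monic _ _ hSmon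
  have hloc : ∀ π : S, 2 * (Finset.univ.filter fun ε => π.1 ∣ o ε).card ≤ 2 ^ (n+1) ∧
    ∃ I : Submodule (AdjoinRoot π.1) (J (n+1) → AdjoinRoot π.1),
      ((haveI : Fact (Irreducible π.1) := ⟨hSirr π.1 π.2⟩;
        2 ^ (n+1) ≤ 4 * Module.finrank (AdjoinRoot π.1) I)) ∧
      ∀ w : J (n+1) → L[X], (fun ε => AdjoinRoot.mk π.1 (w ε)) ∈ I → π.1 ^ 2 ∣ ∑ ε, o ε * w ε ^ 2 := by
    intro π
    haveI : Fact (Irreducible π.1) := ⟨hSirr π.1 π.2⟩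
    exact local_subspace hy hos ho (hiso π.1 (hSirr π.1 π.2)) (hSd π.1 π.2)
  choose hcard I hI1 hI2 using hloc
  have hole : ∀ ε, (o ε).natDegree ≤ ∑ π ∈ S, if π ∣ o ε then π.natDegree else 0 := fun ε =>
    natDegree_squarefree_le (ho ε) S (hSall ε)
  have holeD : ∀ ε, (o ε).natDegree ≤ D := fun ε => (hole ε).trans
    (Finset.sum_le_sum fun π _ => by split_ifs <;> simp)
  have hosum : 2 * ∑ ε, (o ε).natDegree ≤ 2 ^ (n+1) * D := by
    calc 2 * ∑ ε, (o ε).natDegree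
        ≤ 2 * ∑ ε, ∑ π ∈ S, (if π ∣ o ε then π.natDegree else 0) := by
          gcongr with ε; exact hole ε
      _ = ∑ π ∈ S, (2 * (Finset.univ.filter fun ε => π ∣ o ε).card) * π.natDegree := by
          rw [Finset.sum_comm, Finset.mul_sum]
          refine Finset.sum_congr rfl fun π _ => ?_
          rw [← Finset.sum_filter, Finset.sum_const, smul_eq_mul, mul_assoc]
      _ ≤ ∑ π ∈ S, 2 ^ (n+1) * π.natDegree := by
          refine Finset.sum_le_sum fun π hπ => ?_
          gcongr
          exact hcard ⟨π, hπ⟩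
      _ = 2 ^ (n+1) * D := by rw [hD, Finset.mul_sum]
  let U := (ε : J (n+1)) → degreeLT L (D + 1 - (o ε).natDegree / 2)
  let T : U →ₗ[L] ((π : S) → ((J (n+1) → AdjoinRoot π.1) ⧸ I π)) :=
    LinearMap.pi fun π =>
      ((I π).mkQ.restrictScalars L) ∘ₗ
        (LinearMap.pi fun ε => (AdjoinRoot.mkₐ π.1).toLinearMap ∘ₗ (degreeLT L _).subtype ∘ₗ
          LinearMap.proj ε)
  have hquot : ∀ π : S, Module.Finite L ((J (n+1) → AdjoinRoot π.1) ⧸ I π) ∧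
      4 * Module.finrank L ((J (n+1) → AdjoinRoot π.1) ⧸ I π) ≤ 3 * 2 ^ (n+1) * π.1.natDegree := by
    intro π
    haveI : Fact (Irreducible π.1) := ⟨hSirr π.1 π.2⟩
    have hne := (hSirr π.1 π.2).ne_zero
    haveI : Module.Finite L (AdjoinRoot π.1) := (AdjoinRoot.powerBasis hne).finite
    have h1 : Module.finrank L (AdjoinRoot π.1) = π.1.natDegree := by
      rw [(AdjoinRoot.powerBasis hne).finrank, AdjoinRoot.powerBasis_dim]
    have h2 := (I π).finrank_quotient_add_finrank
    have h3 : Module.finrank (AdjoinRoot π.1) (J (n+1) → AdjoinRoot π.1) = 2 ^ (n+1) := by simp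
    have h4 := Module.finrank_mul_finrank L (AdjoinRoot π.1) ((J (n+1) → AdjoinRoot π.1) ⧸ I π)
    have h5 := hI1 π
    refine ⟨Module.Finite.trans (AdjoinRoot π.1) _, ?_⟩
    rw [← h4, h1]
    have : 4 * Module.finrank (AdjoinRoot π.1) ((J (n+1) → AdjoinRoot π.1) ⧸ I π) ≤ 3 * 2 ^ (n+1) := by
      omega
    nlinarith
  haveI hfin : ∀ π : S, Module.Finite L ((J (n+1) → AdjoinRoot π.1) ⧸ I π) := fun π => (hquot π).1
  have htarget : 4 * Module.finrank L ((π : S) → ((J (n+1) → AdjoinRoot π.1) ⧸ I π))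
      ≤ 3 * 2 ^ (n+1) * D := by
    rw [Module.finrank_pi_fintype, Finset.mul_sum, hD, ← Finset.sum_coe_sort S, Finset.mul_sum]
    exact Finset.sum_le_sum fun π _ => (hquot π).2
  haveI hfdeg : ∀ k : ℕ, Module.Finite L (degreeLT L k) := fun k =>
    Module.Finite.equiv (degreeLTEquiv L k).symm
  have hU : Module.finrank L U + ∑ ε, (o ε).natDegree / 2 = 2 ^ (n+1) * (D + 1) := by
    have h1 : ∀ k : ℕ, Module.finrank L (degreeLT L k) = k := fun k => by
      rw [(degreeLTEquiv L k).finrank_eq]; simp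
    simp only [U]
    rw [Module.finrank_pi_fintype]
    simp only [h1]
    rw [← Finset.sum_add_distrib, Finset.sum_congr rfl (g := fun _ => D + 1)]
    · simp
    · intro ε _
      have := holeD ε
      omega
  have hhalf : ∑ ε, (o ε).natDegree = 2 * ∑ ε, (o ε).natDegree / 2 := by
    rw [Finset.mul_sum]
    exact Finset.sum_congr rfl fun ε _ => (Nat.mul_div_cancel' (hodeg ε)).symm
  have hker : 2 ^ (n+1) ≤ Module.finrank L (LinearMap.ker T) := by
    have h1 := LinearMap.finrank_range_add_finrank_ker T
    have h2 := Submodule.finrank_le (LinearMap.range T)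
    nlinarith
  -- on the kernel, the squarefree form is a constant multiple of `P²`
  have hconst : ∀ w ∈ LinearMap.ker T, ∃ c : L, ∑ ε, o ε * (w ε : L[X]) ^ 2 = Polynomial.C c * P ^ 2 := by
    intro w hw
    have hdvd : P ^ 2 ∣ ∑ ε, o ε * (w ε : L[X]) ^ 2 := by
      rw [← Finset.prod_pow]
      refine Finset.prod_dvd_of_coprime ?_ ?_
      · intro p hp q hq hpq
        refine IsCoprime.pow ?_
        refine ((hSirr p hp).coprime_iff_not_dvd).2 fun h => hpq ?_
        exact eq_of_monic_of_associated (hSmon p hp) (hSmon q hq)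
          ((hSirr p hp).associated_of_dvd (hSirr q hq) h)
      · intro π hπ
        apply hI2 ⟨π, hπ⟩
        have h1 := congrFun (LinearMap.mem_ker.1 hw) ⟨π, hπ⟩
        exact (Submodule.Quotient.mk_eq_zero _).1 h1
    obtain ⟨z, hz⟩ := hdvd
    have hdeg2 : (∑ ε, o ε * (w ε : L[X]) ^ 2).natDegree ≤ 2 * D := by
      refine natDegree_sum_le_of_forall_le _ _ fun ε _ => ?_
      refine natDegree_mul_le.trans ?_
      have h1 : (w ε : L[X]).natDegree ≤ D - (o ε).natDegree / 2 := by
        have h2 := mem_degreeLT.1 (w ε).2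
        by_cases hw0 : (w ε : L[X]) = 0
        · simp [hw0]
        · have h3 := (natDegree_lt_iff_degree_lt hw0).2 h2
          omega
      have h3 := natDegree_pow_le (p := (w ε : L[X])) (n := 2)
      have := holeD ε
      have := hodeg ε
      omega
    have hz0 : z.natDegree = 0 := by
      by_cases h : z = 0
      · simp [h]
      · rw [hz, natDegree_mul (pow_ne_zero 2 hPm.ne_zero) h, natDegree_pow, hPD] at hdeg2
        omega
    refine ⟨z.coeff 0, ?_⟩
    rw [hz, mul_comm, ← eq_C_of_natDegree_eq_zero hz0]
  -- the squarefree form at `0` is nonsingular and isotropic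
  choose a u hyu hu using hX
  have hyu' : y = fun i => Polynomial.X ^ (2 * a i) * u i := funext hyu
  have hwt : ∀ ε, wt (fun i => 2 * a i) ε % 2 = 0 := by
    intro ε
    refine Nat.mod_eq_zero_of_dvd (Finset.dvd_sum fun i _ => ?_)
    split_ifs <;> simp
  have hloc0 : ∀ ε, ∃ o' s' : L[X], ¬ Polynomial.X ∣ o' ∧ ¬ Polynomial.X ∣ s' ∧ o' * s' ^ 2 = mon u ε ∧
      o ε = Polynomial.X ^ (wt (fun i => 2 * a i) ε % 2) * o' := fun ε =>
    squarefree_part_local prime_X (ho ε) (hs0 ε) (prime_not_dvd_mon prime_X hu ε) (by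
      rw [← mon_mul_pow, ← hyu', hos])
  choose o' s' ho' hs' hos' hoo' using hloc0
  have hoo : ∀ ε, o ε = o' ε := fun ε => by rw [hoo' ε, hwt]; simp
  have hXP : P.eval 0 ≠ 0 := by
    intro h
    have h1 : Polynomial.X ∣ P := X_dvd_iff.2 (by rw [coeff_zero_eq_eval_zero, h])
    obtain ⟨π, hπ, h2⟩ := (prime_X.dvd_finset_prod_iff _).1 h1
    obtain ⟨ε, hε⟩ := hSd π hπ
    rw [hoo] at hε
    exact ho' ε (h2.trans hε)
  rw [hyu'] at h0
  obtain ⟨-, x, -, ⟨ε₁, hε₁⟩, hx⟩ := IsoAt.extract prime_X hu h0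
  let v : J (n+1) → L := fun ε => (s' ε * x ε).eval 0
  have hv0 : v ≠ 0 := Function.ne_iff.2 ⟨ε₁, fun h => by
    have h1 : Polynomial.X ∣ s' ε₁ * x ε₁ := X_dvd_iff.2 (by rw [coeff_zero_eq_eval_zero]; exact h)
    rcases prime_X.dvd_or_dvd h1 with h | h
    exacts [hs' _ h, hε₁ h]⟩
  have hv : ∑ ε, (o ε).eval 0 * v ε ^ 2 = 0 := by
    have h1 : (pf u x).eval 0 = 0 := by
      rw [← coeff_zero_eq_eval_zero]; exact X_dvd_iff.1 hx
    refine Eq.trans ?_ h1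
    rw [pf, eval_finset_sum]
    refine Finset.sum_congr rfl fun ε _ => ?_
    simp only [v, ← hos', hoo, Polynomial.eval_mul, Polynomial.eval_pow]; ring
  -- find a nonzero vector in the kernel with isotropic value at `0`
  let E : LinearMap.ker T →ₗ[L] (J (n+1) → L) :=
    (LinearMap.pi fun ε => (leval 0) ∘ₗ (degreeLT L _).subtype ∘ₗ LinearMap.proj ε) ∘ₗ
      (LinearMap.ker T).subtype
  have hE : ∀ w ε, E w ε = (w.1 ε : L[X]).eval 0 := fun w ε => rfl
  obtain ⟨w, hw0, hw⟩ : ∃ w : LinearMap.ker T, w ≠ 0 ∧ ∑ ε, (o ε).eval 0 * E w ε ^ 2 = 0 := by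
    by_cases hinj : Function.Injective E
    · have hfr : Module.finrank L (LinearMap.ker T) = Module.finrank L (J (n+1) → L) := by
        refine le_antisymm (LinearMap.finrank_le_finrank_of_injective hinj) ?_
        simpa using hker
      have htop : LinearMap.range E = ⊤ :=
        Submodule.eq_top_of_finrank_eq ((LinearMap.finrank_range_of_inj hinj).trans hfr)
      obtain ⟨w, hw⟩ : v ∈ LinearMap.range E := htop ▸ Submodule.mem_top
      refine ⟨w, ?_, by rw [hw]; exact hv⟩
      rintro rfl
      exact hv0 (by rw [← hw, map_zero])
    · rw [injective_iff_map_eq_zero] at hinj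
      push Not at hinj
      obtain ⟨w, hw, hw0⟩ := hinj
      exact ⟨w, hw0, by rw [hw]; simp⟩
  refine ⟨fun ε => (w.1 ε : L[X]), ?_, ?_⟩
  · intro h
    apply hw0
    apply Subtype.ext
    funext ε
    exact Subtype.ext (congrFun h ε)
  · obtain ⟨c, hc⟩ := hconst w.1 w.2
    have h1 := congrArg (Polynomial.eval 0) hc
    rw [eval_finset_sum] at h1
    simp only [Polynomial.eval_mul, Polynomial.eval_pow, Polynomial.eval_C] at h1
    have h2 : c * P.eval 0 ^ 2 = 0 := h1.symm.trans hw
    have h3 : c = 0 := (mul_eq_zero.1 h2).resolve_right (pow_ne_zero 2 hXP)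
    rw [hc, h3]; simp

/-! ### The special quadric bundle and curves on it -/

section Special
variable {A : Type*} [CommRing A] {n : ℕ}

/-- Size of a subset. -/
def sz (ε : J n) : ℕ := ∑ i, if ε i then 1 else 0

lemma sz_le (ε : J n) : sz ε ≤ n := by
  calc sz ε ≤ ∑ _i : Fin n, 1 := Finset.sum_le_sum fun i _ => by split_ifs <;> simp
    _ = n := by simp

/-- The slots `λ_i λ_n` (for `i < n`) of the Pfister form attached to a point
`(λ_0, …, λ_n)`. -/
def slot (u : Fin (n+1) → A) : Fin n → A := fun i => u i.castSucc * u (Fin.last n)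

/-- The coefficient `λ_n^{d-|ε|} ∏_{i ∈ ε} λ_i` of the special quadric bundle. -/
def cf (d : ℕ) (u : Fin (n+1) → A) (ε : J n) : A :=
  u (Fin.last n) ^ (d - sz ε) * mon (fun i => u i.castSucc) ε

/-- The distinguished coefficient of the special quadric bundle: up to a power of `λ_n`, it is
`ℓ^{2k} + ℓ λ_n^{2k-n-2} ∏ λ_i`, where `k = ⌊d/2⌋` and `ℓ = Σ λ_i`. -/
def cc (d : ℕ) (u : Fin (n+1) → A) : A :=
  u (Fin.last n) ^ (d - 2 * (d / 2)) * ((∑ i, u i) ^ (2 * (d / 2)) +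
    (∑ i, u i) * u (Fin.last n) ^ (2 * (d / 2) - n - 2) * ∏ i, u i)

/-- The form defining the special quadric bundle, in the coordinates `λ`. -/
def sp (d : ℕ) {r : ℕ} (e : Fin (r+2) → J n) (u : Fin (n+1) → A) (ζ : Fin (r+2) → A) : A :=
  cc d u * ζ 0 ^ 2 + ∑ j : Fin (r+1), cf d u (e j.succ) * ζ j.succ ^ 2

lemma mon_slot (u : Fin (n+1) → A) (ε : J n) :
    mon (slot u) ε = u (Fin.last n) ^ sz ε * mon (fun i => u i.castSucc) ε := by
  have := mon_mul_pow (u (Fin.last n)) (fun _ => 1) (fun i : Fin n => u i.castSucc) ε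
  rw [show wt (fun _ => 1) ε = sz ε from rfl] at this
  rw [← this]
  congr 1
  funext i
  simp [slot, mul_comm]

lemma map_mon {B : Type*} [CommRing B] (f : A →+* B) (y : Fin n → A) (ε : J n) :
    f (mon y ε) = mon (fun i => f (y i)) ε := by
  simp only [mon, map_prod]
  exact Finset.prod_congr rfl fun i _ => by split_ifs <;> simp

lemma map_pf {B : Type*} [CommRing B] (f : A →+* B) (y : Fin n → A) (w : J n → A) :
    f (pf y w) = pf (fun i => f (y i)) (fun ε => f (w ε)) := by
  simp [pf, map_mon]

lemma map_cf {B : Type*} [CommRing B] (f : A →+* B) (d : ℕ) (u : Fin (n+1) → A) (ε : J n) :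
    f (cf d u ε) = cf d (fun i => f (u i)) ε := by
  simp [cf, map_mon]

lemma map_cc {B : Type*} [CommRing B] (f : A →+* B) (d : ℕ) (u : Fin (n+1) → A) :
    f (cc d u) = cc d (fun i => f (u i)) := by
  simp [cc, map_sum, map_prod]

lemma map_sp {B : Type*} [CommRing B] (f : A →+* B) (d : ℕ) {r : ℕ} (e : Fin (r+2) → J n)
    (u : Fin (n+1) → A) (ζ : Fin (r+2) → A) :
    f (sp d e u ζ) = sp d e (fun i => f (u i)) (fun j => f (ζ j)) := by
  simp [sp, map_cc, map_cf, map_sum]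

/-- The Pfister form at a point of the base is undefined or isotropic. -/
def Triv (v : Fin (n+1) → A) : Prop := (∃ i, v i = 0) ∨ ¬ Aniso (slot v)

end Special

lemma not_pow_dvd_of {A : Type*} [CommRing A] [IsDomain A] {π x : A} (hπ : Prime π) {a b : ℕ} (hx : ¬ π ∣ x)
    (h : a < b) : ¬ π ^ b ∣ π ^ a * x := by
  rintro ⟨c, hc⟩
  obtain ⟨k, rfl⟩ := Nat.exists_eq_add_of_lt h
  rw [add_assoc, pow_add, mul_assoc] at hc
  have := mul_left_cancel₀ (pow_ne_zero a hπ.ne_zero) hc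
  exact hx ⟨π ^ k * c, by rw [this]; ring⟩

open Polynomial in
/-- Along a polynomial curve on the special quadric bundle, the Pfister form is locally isotropic at
every prime where the coordinates do not all have the same valuation.  Either `ℓ` has larger
valuation than some coordinate, and the identity `1·λ_n² + Σ λ_iλ_n = λ_n ℓ` applies, or the
distinguished coefficient is a square up to higher order and the curve itself gives the vector. -/
lemma isoAt_of_curve {L : Type*} [Field L] {n d r : ℕ} (hd : n + 2 ≤ 2 * (d / 2))
    (e : Fin (r+2) → J n) (he : Function.Injective e) (he0 : e 0 = fun _ => false)
    (u : Fin (n+1) → L[X]) (ζ : Fin (r+2) → L[X]) (hζ : ζ ≠ 0)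
    (hsp : sp d e u ζ = 0) {π : L[X]} (hπ : Prime π) (a : Fin (n+1) → ℕ) (U : Fin (n+1) → L[X])
    (hu : ∀ i, u i = π ^ a i * U i) (hU : ∀ i, ¬ π ∣ U i) (hne : ∃ i j, a i ≠ a j) :
    IsoAt π (slot u) := by
  classical
  obtain ⟨i₁, hi₁⟩ := Finite.exists_min a
  set m := a i₁ with hm
  set ℓ := ∑ i, u i with hℓ
  set R := u (Fin.last n) with hR
  have hmd : ∀ i, π ^ m ∣ u i := fun i => by
    rw [hu]; exact dvd_mul_of_dvd_left (pow_dvd_pow _ (hi₁ i)) _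
  by_cases hcase : π ^ (m + 1) ∣ ℓ
  · -- the vector with entries `λ_n` at the empty set and `1` at the singletons
    let sing : Fin n → J n := fun i k => decide (k = i)
    have hsing : Function.Injective sing := by
      intro i j h
      have := congrFun h i
      simpa [sing] using this
    have hsing0 : ∀ i, sing i ≠ fun _ => false := by
      intro i h
      have := congrFun h i
      simp [sing] at this
    let ι : Option (Fin n) → J n := fun o => o.elim (fun _ => false) sing
    have hι : Function.Injective ι := by
      rintro (_ | i) (_ | j) h
      · rfl
      · exact absurd h.symm (hsing0 j)
      · exact absurd h (hsing0 i)
      · exact congrArg some (hsing h)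
    let w : J n → L[X] := Function.extend ι (fun o => o.elim R fun _ => 1) 0
    have hmon0 : mon (slot u) (fun _ => false) = 1 := by simp [mon]
    have hmon1 : ∀ i, mon (slot u) (sing i) = u i.castSucc * R := by
      intro i
      rw [mon, Finset.prod_eq_single i]
      · simp [sing, slot, hR]
      · intro j _ hj; simp [sing, hj]
      · simp
    have hsum : pf (slot u) w = R * ℓ := by
      rw [pf, ← Fintype.sum_of_injective ι hι
        (fun o => mon (slot u) (ι o) * (o.elim R fun _ => 1) ^ 2)]
      · rw [Fintype.sum_option, hℓ, Fin.sum_univ_castSucc, mul_add, Finset.mul_sum]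
        simp only [ι, Option.elim, hmon0, hmon1]
        rw [add_comm, ← hR]
        congr 1
        · exact Finset.sum_congr rfl fun i _ => by ring
        · ring
      · intro ε hε
        simp only [w]
        rw [Function.extend_apply' _ _ _ (by rintro ⟨o, rfl⟩; exact hε ⟨o, rfl⟩)]
        simp
      · intro o; simp only [w]; rw [hι.extend_apply]
    have hw : ∀ o, w (ι o) = o.elim R fun _ => 1 := fun o => hι.extend_apply _ _ _
    have hdvd : π ^ (a (Fin.last n) + m + 1) ∣ pf (slot u) w := by
      rw [hsum, hR, hu (Fin.last n), mul_assoc, add_assoc, pow_add]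
      exact mul_dvd_mul_left _ (dvd_mul_of_dvd_right hcase _)
    rcases Fin.eq_castSucc_or_eq_last i₁ with ⟨i, hi⟩ | hi
    · refine ⟨w, ι (some i), _, hdvd, ?_⟩
      rw [hw]
      simp only [ι, Option.elim, hmon1, one_pow, mul_one, hR, hu]
      rw [show π ^ a i.castSucc * U i.castSucc * (π ^ a (Fin.last n) * U (Fin.last n))
        = π ^ (a (Fin.last n) + m) * (U i.castSucc * U (Fin.last n)) by rw [hm, hi]; ring]
      exact not_pow_dvd_of hπ (fun h => (hπ.dvd_or_dvd h).elim (hU _) (hU _)) (by omega)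
    · refine ⟨w, ι none, _, hdvd, ?_⟩
      rw [hw]
      simp only [ι, Option.elim, hmon0, one_mul, hR, hu]
      rw [show (π ^ a (Fin.last n) * U (Fin.last n)) ^ 2
        = π ^ (a (Fin.last n) + m) * (U (Fin.last n)) ^ 2 by rw [hm, hi]; ring]
      exact not_pow_dvd_of hπ (fun h => hU _ (hπ.dvd_of_dvd_pow h)) (by omega)
  · set k := d / 2 with hk
    let w : J n → L[X] := Function.extend e
      (Fin.cons (R ^ (d - k) * ℓ ^ k * ζ 0) fun j => R ^ (d - sz (e j.succ)) * ζ j.succ) 0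
    have hw0 : w (fun _ => false) = R ^ (d - k) * ℓ ^ k * ζ 0 := by
      rw [← he0]; simp only [w]; rw [he.extend_apply]; rfl
    have hwj : ∀ j : Fin (r+1), w (e j.succ) = R ^ (d - sz (e j.succ)) * ζ j.succ := by
      intro j; simp only [w]; rw [he.extend_apply]; rfl
    have hmon0 : mon (slot u) (fun _ => false) = 1 := by simp [mon]
    have hmonj : ∀ j : Fin (r+1), mon (slot u) (e j.succ) * w (e j.succ) ^ 2
        = R ^ d * (cf d u (e j.succ) * ζ j.succ ^ 2) := by
      intro j
      have h1 := sz_le (e j.succ)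
      rw [hwj, mon_slot, cf, ← hR]
      have h2 : R ^ d = R ^ sz (e j.succ) * R ^ (d - sz (e j.succ)) := by
        rw [← pow_add]; congr 1; omega
      rw [h2]; ring
    have hsum : pf (slot u) w
        = -(R ^ (2 * (d - k)) * (ℓ * R ^ (2 * k - n - 2) * ∏ i, u i) * ζ 0 ^ 2) := by
      have h1 : pf (slot u) w = ∑ j, mon (slot u) (e j) * w (e j) ^ 2 := by
        rw [pf]
        refine (Fintype.sum_of_injective e he _ _ ?_ fun _ => rfl).symm
        intro ε hε
        simp only [w]
        rw [Function.extend_apply' _ _ _ (by rintro ⟨o, rfl⟩; exact hε ⟨o, rfl⟩)]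
        simp
      rw [h1, Fin.sum_univ_succ, he0, hw0, hmon0]
      simp only [hmonj, ← Finset.mul_sum]
      have h2 : R ^ (2 * (d - k)) = R ^ d * R ^ (d - 2 * k) := by
        rw [← pow_add]; congr 1; omega
      rw [sp, cc, ← hℓ, ← hR, ← hk] at hsp
      have h3 : (R ^ (d - k) * ℓ ^ k * ζ 0) ^ 2 = R ^ (2 * (d - k)) * ℓ ^ (2 * k) * ζ 0 ^ 2 := by
        ring
      rw [h3, h2]
      linear_combination R ^ d * hsp
    by_cases hz : ζ 0 = 0
    · -- the curve lies in a Pfister neighbour, and the vector is globally isotropic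
      have hp0 : pf (slot u) w = 0 := by rw [hsum, hz]; simp
      have hj : ∃ j : Fin (r+1), ζ j.succ ≠ 0 := by
        by_contra! h
        exact hζ (funext fun j => Fin.cases hz h j)
      obtain ⟨j, hj⟩ := hj
      have hu0 : ∀ i, u i ≠ 0 := fun i => by
        rw [hu]
        exact mul_ne_zero (pow_ne_zero _ hπ.ne_zero) fun h => hU i (h ▸ dvd_zero π)
      have ht : mon (slot u) (e j.succ) * w (e j.succ) ^ 2 ≠ 0 := by
        refine mul_ne_zero ?_ (pow_ne_zero 2 ?_)
        · rw [mon, Finset.prod_ne_zero_iff]; intro i _; split_ifs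
          · exact mul_ne_zero (hu0 _) (hu0 _)
          · exact one_ne_zero
        · rw [hwj]; exact mul_ne_zero (pow_ne_zero _ (hu0 _)) hj
      obtain ⟨b, V, hV, hV'⟩ := exists_pow_mul hπ ht
      refine ⟨w, e j.succ, b + 1, by rw [hp0]; exact dvd_zero _, ?_⟩
      rw [hV]
      exact not_pow_dvd_of hπ hV' (by omega)
    · obtain ⟨b, V, hV, hV'⟩ := exists_pow_mul hπ hz
      obtain ⟨ℓ', hℓ'⟩ : π ^ m ∣ ℓ := Finset.dvd_sum fun i _ => hmd i
      have hℓ'' : ¬ π ∣ ℓ' := fun h => hcase (by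
        rw [hℓ', pow_succ]; exact mul_dvd_mul_left _ h)
      have hprod : π ^ ((n + 1) * m + 1) ∣ ∏ i, u i := by
        have h1 : ∏ i, u i = π ^ (∑ i, a i) * ∏ i, U i := by
          rw [← Finset.prod_pow_eq_pow_sum, ← Finset.prod_mul_distrib]
          exact Finset.prod_congr rfl fun i _ => hu i
        rw [h1]
        refine dvd_mul_of_dvd_left (pow_dvd_pow _ ?_) _
        have h2 : ∑ _i : Fin (n+1), m < ∑ i, a i := by
          refine Finset.sum_lt_sum (fun i _ => hi₁ i) ?_
          by_contra! h
          obtain ⟨i, j, hij⟩ := hne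
          exact hij (by
            have := h i (Finset.mem_univ _); have := h j (Finset.mem_univ _)
            have := hi₁ i; have := hi₁ j
            omega)
        simpa using h2
      refine ⟨w, fun _ => false, (2 * (d - k)) * a (Fin.last n) + 2 * k * m + 1 + 2 * b, ?_, ?_⟩
      · rw [hsum, dvd_neg, pow_add]
        refine mul_dvd_mul ?_ ?_
        · rw [add_assoc, pow_add]
          refine mul_dvd_mul ?_ ?_
          · rw [mul_comm, pow_mul]
            refine pow_dvd_pow_of_dvd ?_ _
            rw [hR, hu]; exact dvd_mul_right _ _
          · rw [show 2 * k * m + 1 = (m + m * (2 * k - n - 2)) + ((n + 1) * m + 1) by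
              obtain ⟨t, ht⟩ := Nat.exists_eq_add_of_le hd
              rw [ht, show n + 2 + t - n - 2 = t by omega]; ring, pow_add, pow_add]
            refine mul_dvd_mul (mul_dvd_mul ⟨ℓ', hℓ'⟩ ?_) hprod
            rw [pow_mul]
            exact pow_dvd_pow_of_dvd (hmd _) _
        · rw [hV, mul_pow, mul_comm 2 b, pow_mul]; exact dvd_mul_right _ _
      · rw [hw0, hmon0, hR, hu, hℓ', hV]
        rw [show 1 * ((π ^ a (Fin.last n) * U (Fin.last n)) ^ (d - k) * (π ^ m * ℓ') ^ k * (π ^ b * V)) ^ 2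
          = π ^ (2 * (d - k) * a (Fin.last n) + 2 * k * m + 2 * b) *
            (U (Fin.last n) ^ (d - k) * ℓ' ^ k * V) ^ 2 by ring]
        refine not_pow_dvd_of hπ ?_ (by omega)
        intro h
        rcases hπ.dvd_or_dvd (hπ.dvd_of_dvd_pow h) with h | h
        · rcases hπ.dvd_or_dvd h with h | h
          · exact hU _ (hπ.dvd_of_dvd_pow h)
          · exact hℓ'' (hπ.dvd_of_dvd_pow h)
        · exact hV' h

section Edge

open Polynomial in
lemma natDegree_mon {L : Type*} [Field L] {n : ℕ} (y : Fin n → L[X]) (h : ℕ)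
    (hy : ∀ i, y i ≠ 0) (hd : ∀ i, (y i).natDegree = h) (ε : J n) :
    (mon y ε).natDegree = sz ε * h := by
  rw [mon, Polynomial.natDegree_prod _ _ (fun i _ => by split_ifs; exacts [hy i, one_ne_zero]),
    sz, Finset.sum_mul]
  refine Finset.sum_congr rfl fun i _ => ?_
  split_ifs <;> simp [hd]

open Polynomial in
lemma coeff_mon {L : Type*} [Field L] {n : ℕ} (y : Fin n → L[X]) (h : ℕ)
    (hy : ∀ i, y i ≠ 0) (hd : ∀ i, (y i).natDegree = h) (ε : J n) :
    (mon y ε).coeff (sz ε * h) = mon (fun i => (y i).coeff h) ε := by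
  rw [← natDegree_mon y h hy hd ε, Polynomial.coeff_natDegree, mon, Polynomial.leadingCoeff_prod,
    mon]
  refine Finset.prod_congr rfl fun i _ => ?_
  split_ifs
  · rw [Polynomial.leadingCoeff, hd]
  · simp

open Polynomial in
/-- An isotropic vector over `L[X]` gives one for the leading coefficients when the slots all have
the same even degree. -/
lemma not_aniso_top {L : Type*} [Field L] {n : ℕ} (y : Fin n → L[X]) (h : ℕ)
    (hy : ∀ i, y i ≠ 0) (hd : ∀ i, (y i).natDegree = 2 * h) (w : J n → L[X]) (hw : w ≠ 0)
    (h0 : pf y w = 0) : ¬ Aniso (fun i => (y i).coeff (2 * h)) := by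
  classical
  intro han
  have hne : (Finset.univ.filter fun ε => w ε ≠ 0).Nonempty := by
    obtain ⟨ε, hε⟩ := Function.ne_iff.mp hw
    exact ⟨ε, by simpa using hε⟩
  obtain ⟨ε₀, hε₀, hmax⟩ := Finset.exists_max_image _ (fun ε => sz ε * h + (w ε).natDegree) hne
  set M := sz ε₀ * h + (w ε₀).natDegree with hM
  have hle : ∀ ε, w ε ≠ 0 → sz ε * h + (w ε).natDegree ≤ M := fun ε hε => hmax ε (by simpa using hε)
  have hbd : ∀ ε, w ε ≠ 0 → (w ε).natDegree ≤ M - sz ε * h := fun ε hε => by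
    have := hle ε hε; omega
  have hc := congrArg (fun p => Polynomial.coeff p (2 * M)) h0
  simp only [pf, Polynomial.finset_sum_coeff, Polynomial.coeff_zero] at hc
  let v : J n → L := fun ε => (w ε).coeff (M - sz ε * h)
  have hv : v = 0 := by
    apply han
    rw [← hc, pf]
    refine Finset.sum_congr rfl fun ε _ => ?_
    by_cases hε : w ε = 0
    · simp [v, hε]
    have e1 : 2 * M = sz ε * (2 * h) + 2 * (M - sz ε * h) := by
      have := hle ε hε
      zify [(by omega : sz ε * h ≤ M)]; ring
    rw [e1, Polynomial.coeff_mul_add_eq_of_natDegree_le (natDegree_mon y _ hy hd ε).le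
      (Polynomial.natDegree_pow_le_of_le 2 (hbd ε hε)), coeff_mon y _ hy hd,
      Polynomial.coeff_pow_of_natDegree_le (hbd ε hε)]
  have := congrFun hv ε₀
  simp only [v, Pi.zero_apply] at this
  rw [hM, Nat.add_sub_cancel_left, Polynomial.coeff_natDegree, Polynomial.leadingCoeff_eq_zero] at this
  simp at hε₀
  exact hε₀ this

open Polynomial in
/-- Along a polynomial curve on the special quadric bundle, triviality of the Pfister form
propagates from `0` to `∞`. -/
lemma edge {L : Type*} [Field L] {n d r : ℕ} (hn : 0 < n) (hd : n + 2 ≤ 2 * (d / 2))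
    (e : Fin (r+2) → J n) (he : Function.Injective e) (he0 : e 0 = fun _ => false)
    (u : Fin (n+1) → L[X]) (ζ : Fin (r+2) → L[X]) (hζ : ζ ≠ 0)
    (hsp : sp d e u ζ = 0) (N : ℕ) (hN : ∀ i, (u i).natDegree ≤ N)
    (h0 : ∃ i, (u i).coeff 0 ≠ 0) (ht : Triv fun i => (u i).coeff 0) :
    Triv fun i => (u i).coeff N := by
  classical
  by_contra hcon
  simp only [Triv, not_or, not_exists, not_not] at hcon
  obtain ⟨hnz, han⟩ := hcon
  obtain ⟨n, rfl⟩ : ∃ k, n = k + 1 := ⟨n - 1, by omega⟩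
  have hdeg : ∀ i, (u i).natDegree = N := fun i =>
    le_antisymm (hN i) (Polynomial.le_natDegree_of_ne_zero (hnz i))
  have hu0 : ∀ i, u i ≠ 0 := fun i h => hnz i (by simp [h])
  have hX : Prime (Polynomial.X : L[X]) := Polynomial.prime_X
  choose a0 g hag hg using fun i => exists_pow_mul hX (hu0 i)
  let E : L[X] →+* L[X] := (Polynomial.expand L 2 : L[X] →+* L[X])
  have hE : ∀ p, E p = Polynomial.expand L 2 p := fun p => rfl
  have hEinj : Function.Injective E := Polynomial.expand_injective (by norm_num)
  let u' : Fin (n+1+1) → L[X] := fun i => E (u i)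
  let ζ' : Fin (r+2) → L[X] := fun i => E (ζ i)
  have hu'0 : ∀ i, u' i ≠ 0 := fun i h => hu0 i (hEinj (by rw [map_zero]; exact h))
  have hζ' : ζ' ≠ 0 := by
    obtain ⟨j, hj⟩ := Function.ne_iff.mp hζ
    exact Function.ne_iff.mpr ⟨j, fun h => hj (hEinj (by rw [Pi.zero_apply, map_zero]; exact h))⟩
  have hsp' : sp d e u' ζ' = 0 := by
    rw [← map_sp E, hsp, map_zero]
  have hEX : ∀ p, ¬ Polynomial.X ∣ p → ¬ Polynomial.X ∣ E p := by
    intro p hp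
    rw [Polynomial.X_dvd_iff] at hp ⊢
    rw [hE, Polynomial.coeff_expand (by norm_num)]
    simpa using hp
  have hu'X : ∀ i, u' i = Polynomial.X ^ (2 * a0 i) * E (g i) := by
    intro i
    simp only [u']
    rw [hag i, map_mul, map_pow]
    simp only [hE, Polynomial.expand_X]
    rw [← pow_mul]
  have hslot0 : ∀ i, slot u' i ≠ 0 := fun i => mul_ne_zero (hu'0 _) (hu'0 _)
  have hu'deg : ∀ i, (u' i).natDegree = N * 2 := fun i => by
    simp only [u', hE, Polynomial.natDegree_expand, hdeg]
  have hsdeg : ∀ i, (slot u' i).natDegree = 2 * (2 * N) := fun i => by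
    simp only [slot]
    rw [Polynomial.natDegree_mul (hu'0 _) (hu'0 _), hu'deg, hu'deg]; ring
  obtain ⟨w, hw, hpf⟩ := pf_local_global (slot u') hslot0
    (fun i => by rw [hsdeg]; exact even_two_mul _)
    (fun i => ⟨a0 i.castSucc + a0 (Fin.last _), E (g i.castSucc) * E (g (Fin.last _)), by
        simp only [slot, hu'X]; ring,
        fun h => (hX.dvd_or_dvd h).elim (hEX _ (hg _)) (hEX _ (hg _))⟩)
    (by
      rintro π hπ ⟨i, a, v, hav, hv⟩
      have hπ' := hπ.prime
      choose b U hbU hU using fun i => exists_pow_mul hπ' (hu'0 i)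
      refine isoAt_of_curve hd e he he0 u' ζ' hζ' hsp' hπ' b U hbU hU
        ⟨i.castSucc, Fin.last _, fun hb => ?_⟩
      have h1 : π ^ (b i.castSucc + b (Fin.last _)) * (U i.castSucc * U (Fin.last _))
          = π ^ (2 * a + 1) * v := by
        rw [← hav, slot, hbU i.castSucc, hbU (Fin.last _)]; ring
      have := (pow_mul_eq_pow_mul hπ'
        (fun h => (hπ'.dvd_or_dvd h).elim (hU _) (hU _)) hv h1)
      omega)
    (by
      by_cases hz : ∃ i, (u i).coeff 0 = 0
      · obtain ⟨i, hi⟩ := hz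
        obtain ⟨j, hj⟩ := h0
        refine isoAt_of_curve hd e he he0 u' ζ' hζ' hsp' hX (fun i => 2 * a0 i) (fun i => E (g i))
          hu'X (fun i => hEX _ (hg i)) ⟨i, j, fun h => ?_⟩
        have hj0 : a0 j = 0 := by
          by_contra h
          apply hj
          rw [← Polynomial.X_dvd_iff, hag j]
          exact dvd_mul_of_dvd_left (dvd_pow_self _ h) _
        have hi0 : a0 i ≠ 0 := by
          intro h
          have := hag i
          rw [h, pow_zero, one_mul] at this
          exact hg i (this ▸ Polynomial.X_dvd_iff.mpr hi)

        omega
      · simp only [Triv, hz, false_or] at ht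
        push Not at hz
        simp only [Aniso] at ht
        push Not at ht
        obtain ⟨w0, hw0, hw0n⟩ := ht
        obtain ⟨ε₀, hε₀⟩ := Function.ne_iff.mp hw0n
        have hs : (fun i => Polynomial.constantCoeff (slot u' i))
            = slot fun i => (u i).coeff 0 := by
          funext i
          simp only [slot, map_mul, Polynomial.constantCoeff_apply, u', hE,
            Polynomial.coeff_expand (p := 2) (by norm_num)]
          simp
        refine ⟨fun ε => Polynomial.C (w0 ε), ε₀, 1, ?_, ?_⟩
        · rw [pow_one, Polynomial.X_dvd_iff, ← Polynomial.constantCoeff_apply, map_pf, hs]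
          simpa using hw0
        · rw [pow_one, Polynomial.X_dvd_iff, ← Polynomial.constantCoeff_apply, map_mul, map_mon,
            hs, map_pow]
          refine mul_ne_zero ?_ (pow_ne_zero _ (by simpa using hε₀))
          exact Finset.prod_ne_zero_iff.mpr fun i _ => by
            split_ifs
            · exact mul_ne_zero (hz _) (hz _)
            · exact one_ne_zero)
  refine not_aniso_top (slot u') (2 * N) hslot0 hsdeg w hw hpf ?_
  convert han using 1
  funext i
  simp only [slot]
  rw [show 2 * (2 * N) = N * 2 + N * 2 by ring,
    Polynomial.coeff_mul_add_eq_of_natDegree_le (hu'deg _).le (hu'deg _).le]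
  simp only [u', hE, Polynomial.coeff_expand_mul (p := 2) (by norm_num)]

end Edge

/-! ### Representation of quadratic forms over rational function fields -/

/-- The diagonal bilinear form `Σ m_i v_i w_i`. -/
def dgb {ι A : Type*} [Fintype ι] [CommRing A] (m v w : ι → A) : A := ∑ i, m i * (v i * w i)

/-- Anisotropy of the diagonal quadratic form `Σ m_i w_i²`. -/
def DAniso {ι A : Type*} [Fintype ι] [CommRing A] (m : ι → A) : Prop :=
  ∀ w : ι → A, dgb m w w = 0 → w = 0

section Basic
variable {ι A B : Type*} [Fintype ι] [CommRing A] [CommRing B] (m : ι → A)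

lemma dgb_comm (v w : ι → A) : dgb m v w = dgb m w v := by simp [dgb, mul_comm]

lemma dgb_add_left (u v w : ι → A) : dgb m (u + v) w = dgb m u w + dgb m v w := by
  simp [dgb, add_mul, mul_add, Finset.sum_add_distrib]

lemma dgb_smul_left (a : A) (v w : ι → A) : dgb m (a • v) w = a * dgb m v w := by
  simp only [dgb, Finset.mul_sum, Pi.smul_apply, smul_eq_mul]
  exact Finset.sum_congr rfl fun i _ => by ring

lemma dgb_add_right (u v w : ι → A) : dgb m w (u + v) = dgb m w u + dgb m w v := by
  rw [dgb_comm, dgb_add_left, dgb_comm, dgb_comm m v]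

lemma dgb_smul_right (a : A) (v w : ι → A) : dgb m w (a • v) = a * dgb m w v := by
  rw [dgb_comm, dgb_smul_left, dgb_comm]

lemma dgb_sub_left (u v w : ι → A) : dgb m (u - v) w = dgb m u w - dgb m v w := by
  simp [dgb, sub_mul, mul_sub, Finset.sum_sub_distrib]

lemma dgb_sub_right (u v w : ι → A) : dgb m w (u - v) = dgb m w u - dgb m w v := by
  rw [dgb_comm, dgb_sub_left, dgb_comm, dgb_comm m v]

lemma map_dgb (f : A →+* B) (v w : ι → A) : f (dgb m v w) = dgb (f ∘ m) (f ∘ v) (f ∘ w) := by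
  simp [dgb]

lemma aniso_iff {n : ℕ} (y : Fin n → A) : Aniso y ↔ DAniso (mon y) := by
  have : ∀ w, pf y w = dgb (mon y) w w := fun w => by simp [pf, dgb, sq]
  simp only [Aniso, DAniso, this]

/-- Clearing denominators. -/
lemma exists_common_den {K : Type*} [IsDomain A] [Field K] [Algebra A K] [IsFractionRing A K]
    (w : ι → K) : ∃ (h : A) (W : ι → A), h ≠ 0 ∧ ∀ i, algebraMap A K h * w i = algebraMap A K (W i) := by
  obtain ⟨b, hb⟩ := IsLocalization.exist_integer_multiples_of_finite (nonZeroDivisors A) w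
  choose W hW using hb
  refine ⟨b, W, nonZeroDivisors.ne_zero b.2, fun i => ?_⟩
  rw [hW, Algebra.smul_def]

lemma DAniso.frac {K : Type*} [IsDomain A] [Field K] [Algebra A K] [IsFractionRing A K]
    {m : ι → A} (hm : DAniso m) : DAniso (algebraMap A K ∘ m) := by
  intro w hw
  obtain ⟨h, W, hh, hW⟩ := exists_common_den (A := A) w
  have hh' : algebraMap A K h ≠ 0 := by
    simpa using hh
  have hinj := IsFractionRing.injective A K
  have h2 : (algebraMap A K h) • w = algebraMap A K ∘ W := funext fun i => hW i
  have h1 : W = 0 := hm W <| hinj <| by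
    rw [map_dgb, ← h2, dgb_smul_left, dgb_smul_right, hw]; simp
  funext i
  have := hW i
  rw [h1] at this
  simpa [hh] using this

end Basic

/-- Anisotropy over an infinite field is preserved by adjoining variables. -/
lemma DAniso.mvPoly {ι σ K : Type*} [Fintype ι] [Field K] [Infinite K] {m : ι → K}
    (hm : DAniso m) : DAniso ((C : K →+* MvPolynomial σ K) ∘ m) := by
  intro w hw
  funext i
  refine MvPolynomial.funext fun x => ?_
  have h1 := congrArg (eval x) hw
  rw [map_dgb] at h1
  have h2 : (eval x : MvPolynomial σ K → K) ∘ (C : K →+* MvPolynomial σ K) ∘ m = m := by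
    funext i; simp
  rw [h2, map_zero] at h1
  simpa using congrFun (hm _ h1) i

lemma DAniso.poly {ι K : Type*} [Fintype ι] [Field K] [Infinite K] {m : ι → K}
    (hm : DAniso m) : DAniso ((Polynomial.C : K →+* Polynomial K) ∘ m) := by
  intro w hw
  funext i
  refine Polynomial.funext fun x => ?_
  have h1 := congrArg (Polynomial.evalRingHom x) hw
  rw [map_dgb] at h1
  have h2 : (Polynomial.evalRingHom x : Polynomial K → K) ∘
      (Polynomial.C : K →+* Polynomial K) ∘ m = m := by
    funext i; simp
  rw [h2, map_zero] at h1
  simpa using congrFun (hm _ h1) i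

open Polynomial in
/-- The Cassels–Pfister theorem, for vectors orthogonal to a given set of constant vectors. -/
lemma cassels {ι K : Type*} [Fintype ι] [Field K] [Infinite K] {m : ι → K} (hm : DAniso m)
    (U : Set (ι → K)) (f : K[X]) :
    ∀ (h : K[X]) (w : ι → K[X]), h ≠ 0 →
      (∀ u ∈ U, dgb (Polynomial.C ∘ m) (Polynomial.C ∘ u) w = 0) →
      dgb (Polynomial.C ∘ m) w w = f * h ^ 2 →
      ∃ w' : ι → K[X], (∀ u ∈ U, dgb (Polynomial.C ∘ m) (Polynomial.C ∘ u) w' = 0) ∧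
        dgb (Polynomial.C ∘ m) w' w' = f := by
  intro h
  induction hk : h.natDegree using Nat.strong_induction_on generalizing h with
  | _ k ih =>
  subst hk
  intro w hh hU hw
  set M := (Polynomial.C : K → K[X]) ∘ m with hM
  by_cases hdeg : h.natDegree = 0
  · obtain ⟨c, rfl⟩ := Polynomial.natDegree_eq_zero.mp hdeg
    have hc : c ≠ 0 := fun h0 => hh (by simp [h0])
    refine ⟨Polynomial.C c⁻¹ • w, fun u hu => ?_, ?_⟩
    · rw [dgb_smul_right, hU u hu, mul_zero]
    · rw [dgb_smul_left, dgb_smul_right, hw]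
      have : (Polynomial.C c⁻¹ : K[X]) * Polynomial.C c = 1 := by
        rw [← Polynomial.C_mul, inv_mul_cancel₀ hc, Polynomial.C_1]
      linear_combination f * (Polynomial.C c⁻¹ * Polynomial.C c + 1) * this
  let q : ι → K[X] := fun i => w i / h
  let s : ι → K[X] := fun i => w i % h
  have hqs : w = h • q + s := funext fun i => (EuclideanDomain.div_add_mod (w i) h).symm
  have hsdeg : ∀ i, (s i).natDegree < h.natDegree := fun i =>
    Polynomial.natDegree_mod_lt _ hdeg
  have hlin : ∀ u : ι → K, (dgb M (Polynomial.C ∘ u) s).natDegree < h.natDegree := by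
    intro u
    refine lt_of_le_of_lt (Polynomial.natDegree_sum_le_of_forall_le (n := h.natDegree - 1) _ _ fun i _ => ?_)
      (by omega)
    simp only [hM, Function.comp]
    rw [← mul_assoc, ← Polynomial.C_mul]
    exact (Polynomial.natDegree_C_mul_le _ _).trans (by have := hsdeg i; omega)
  have hqU : ∀ u ∈ U, dgb M (Polynomial.C ∘ u) q = 0 := by
    intro u hu
    have h1 := hU u hu
    rw [hqs, dgb_add_right, dgb_smul_right] at h1
    by_contra hne
    have h2 := hlin u
    rw [show dgb M (Polynomial.C ∘ u) s = -(h * dgb M (Polynomial.C ∘ u) q) by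
      linear_combination h1, Polynomial.natDegree_neg, Polynomial.natDegree_mul hh hne] at h2
    omega
  by_cases hs : s = 0
  · refine ⟨q, hqU, ?_⟩
    rw [hqs, hs, add_zero, dgb_smul_left, dgb_smul_right] at hw
    have : h ^ 2 * dgb M q q = h ^ 2 * f := by linear_combination hw
    exact mul_left_cancel₀ (pow_ne_zero 2 hh) this
  set b := dgb M w q with hb
  set φ := dgb M q q with hφ
  have hss : dgb M s s = h * ((φ - f) * h - 2 * (b - f * h)) := by
    have : s = w - h • q := by rw [hqs]; abel
    rw [this, dgb_sub_left, dgb_sub_right, dgb_sub_right, dgb_smul_left, dgb_smul_right,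
      dgb_smul_left, dgb_smul_right, hw, dgb_comm M q w, ← hb, ← hφ]
    ring
  set h' := (φ - f) * h - 2 * (b - f * h) with hh'
  have hsn : dgb M s s ≠ 0 := fun h0 => hs (hm.poly s h0)
  have hh'0 : h' ≠ 0 := fun h0 => hsn (by rw [hss, h0, mul_zero])
  have hsd : (dgb M s s).natDegree ≤ 2 * (h.natDegree - 1) := by
    refine Polynomial.natDegree_sum_le_of_forall_le _ _ fun i _ => ?_
    simp only [hM, Function.comp]
    refine (Polynomial.natDegree_C_mul_le _ _).trans (Polynomial.natDegree_mul_le.trans ?_)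
    have := hsdeg i; omega
  have hlt : h'.natDegree < h.natDegree := by
    rw [hss, Polynomial.natDegree_mul hh hh'0] at hsd
    omega
  refine ih _ hlt h' rfl ((φ - f) • w - (2 * (b - f * h)) • q) hh'0 (fun u hu => ?_) ?_
  · rw [dgb_sub_right, dgb_smul_right, dgb_smul_right, hU u hu, hqU u hu]; ring
  · rw [dgb_sub_left, dgb_sub_right, dgb_sub_right, dgb_smul_left, dgb_smul_left, dgb_smul_left,
      dgb_smul_left, dgb_smul_right, dgb_smul_right, dgb_smul_right, dgb_smul_right, hw,
      dgb_comm M q w, ← hb, ← hφ, hh']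
    ring

open Polynomial in
lemma coeff_dgb_C {ι K : Type*} [Fintype ι] [Field K] (m u : ι → K) (w : ι → K[X]) (k : ℕ) :
    (dgb (Polynomial.C ∘ m) (Polynomial.C ∘ u) w).coeff k = dgb m u fun i => (w i).coeff k := by
  simp only [dgb, Polynomial.finset_sum_coeff, Function.comp]
  refine Finset.sum_congr rfl fun i _ => ?_
  rw [Polynomial.coeff_C_mul, Polynomial.coeff_C_mul]

open Polynomial in
/-- The top coefficient of the value of an anisotropic form. -/
lemma coeff_dgb_top {ι K : Type*} [Fintype ι] [Field K] (m : ι → K) (w : ι → K[X]) (k : ℕ)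
    (hw : ∀ i, (w i).natDegree ≤ k) :
    (dgb (Polynomial.C ∘ m) w w).coeff (2 * k)
      = dgb m (fun i => (w i).coeff k) fun i => (w i).coeff k := by
  simp only [dgb, Polynomial.finset_sum_coeff, Function.comp]
  refine Finset.sum_congr rfl fun i _ => ?_
  rw [Polynomial.coeff_C_mul, two_mul, Polynomial.coeff_mul_add_eq_of_natDegree_le (hw i) (hw i)]

open Polynomial in
/-- An anisotropic form takes values of even degree. -/
lemma natDegree_dgb {ι K : Type*} [Fintype ι] [Field K] {m : ι → K} (hm : DAniso m)
    (w : ι → K[X]) (hw : w ≠ 0) : ∃ k, (∀ i, (w i).natDegree ≤ k) ∧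
      (dgb (Polynomial.C ∘ m) w w).natDegree = 2 * k ∧ dgb (Polynomial.C ∘ m) w w ≠ 0 := by
  classical
  have hne : (Finset.univ.filter fun i => w i ≠ 0).Nonempty := by
    obtain ⟨ε, hε⟩ := Function.ne_iff.mp hw
    exact ⟨ε, by simpa using hε⟩
  obtain ⟨i₀, hi₀, hmax⟩ := Finset.exists_max_image _ (fun i => (w i).natDegree) hne
  have hle : ∀ i, (w i).natDegree ≤ (w i₀).natDegree := fun i => by
    by_cases h : w i = 0
    · simp [h]
    · exact hmax i (by simpa using h)
  have hc : (dgb (Polynomial.C ∘ m) w w).coeff (2 * (w i₀).natDegree) ≠ 0 := by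
    rw [coeff_dgb_top m w _ hle]
    intro h0
    have := congrFun (hm _ h0) i₀
    simp at this hi₀
    exact hi₀ this
  refine ⟨_, hle, le_antisymm ?_ (Polynomial.le_natDegree_of_ne_zero hc), fun h => hc (by simp [h])⟩
  refine Polynomial.natDegree_sum_le_of_forall_le _ _ fun i _ => ?_
  refine (Polynomial.natDegree_C_mul_le _ _).trans (Polynomial.natDegree_mul_le.trans ?_)
  have := hle i; omega

open Polynomial in
/-- Splitting a representation of `a X² + c` into two orthogonal vectors. -/
lemma represent_split {ι K : Type*} [Fintype ι] [Field K] [Infinite K] (h2 : (2 : K) ≠ 0)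
    {m : ι → K} (hm : DAniso m)
    (U : Set (ι → K)) (a c : K) (h : K[X]) (w : ι → K[X]) (hh : h ≠ 0)
    (hU : ∀ u ∈ U, dgb (Polynomial.C ∘ m) (Polynomial.C ∘ u) w = 0)
    (hw : dgb (Polynomial.C ∘ m) w w
      = (Polynomial.C a * Polynomial.X ^ 2 + Polynomial.C c) * h ^ 2) :
    ∃ v0 v1 : ι → K, (∀ u ∈ U, dgb m u v0 = 0) ∧ (∀ u ∈ U, dgb m u v1 = 0) ∧
      dgb m v0 v0 = c ∧ dgb m v1 v1 = a ∧ dgb m v0 v1 = 0 := by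
  obtain ⟨w, hU, hw⟩ := cassels hm U _ h w hh hU hw
  have hdeg : ∀ i, (w i).natDegree ≤ 1 := by
    by_cases hw0 : w = 0
    · simp [hw0]
    obtain ⟨k, hk, hk2, -⟩ := natDegree_dgb hm w hw0
    rw [hw] at hk2
    have h3 : (Polynomial.C a * Polynomial.X ^ 2 + Polynomial.C c : K[X]).natDegree ≤ 2 := by
      compute_degree
    intro i; have := hk i; omega
  let v0 : ι → K := fun i => (w i).coeff 0
  let v1 : ι → K := fun i => (w i).coeff 1
  have hwv : w = (Polynomial.X : K[X]) • ((Polynomial.C : K →+* K[X]) ∘ v1)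
      + (Polynomial.C : K →+* K[X]) ∘ v0 := by
    funext i
    have := Polynomial.eq_X_add_C_of_natDegree_le_one (hdeg i)
    simp only [Pi.add_apply, Pi.smul_apply, smul_eq_mul, Function.comp, v0, v1]
    rw [mul_comm]; exact this
  have hcf : (Polynomial.C ∘ m : ι → K[X]) = (Polynomial.C : K →+* K[X]) ∘ m := rfl
  have hexp : dgb (Polynomial.C ∘ m) w w = Polynomial.C (dgb m v1 v1) * Polynomial.X ^ 2
      + Polynomial.C (2 * dgb m v0 v1) * Polynomial.X + Polynomial.C (dgb m v0 v0) := by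
    rw [hwv, dgb_add_left, dgb_add_right, dgb_add_right, dgb_smul_left, dgb_smul_left,
      dgb_smul_right, dgb_smul_right, hcf, ← map_dgb, ← map_dgb, ← map_dgb, ← map_dgb,
      dgb_comm m v1 v0, Polynomial.C_mul, show (Polynomial.C (2 : K) : K[X]) = 2 from rfl]
    ring
  rw [hw] at hexp
  refine ⟨v0, v1, fun u hu => ?_, fun u hu => ?_, ?_, ?_, ?_⟩
  · rw [← coeff_dgb_C, hU u hu, Polynomial.coeff_zero]
  · rw [← coeff_dgb_C, hU u hu, Polynomial.coeff_zero]
  · have := congrArg (fun p => Polynomial.coeff p 0) hexp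
    simpa using this.symm
  · have := congrArg (fun p => Polynomial.coeff p 2) hexp
    simpa [Polynomial.coeff_X, Polynomial.coeff_C] using this.symm
  · have := congrArg (fun p => Polynomial.coeff p 1) hexp
    simpa [Polynomial.coeff_X, Polynomial.coeff_C, h2] using this

/-- An anisotropic form over an infinite field which represents `Σ a_j X_j²` over the rational
function field in the `X_j` contains `⟨a_0, …⟩` as an orthogonal subform. -/
lemma represent_diag {ι E : Type*} [Fintype ι] [Field E] [Infinite E] (h2 : (2 : E) ≠ 0)
    {m : ι → E} (hm : DAniso m) : ∀ (q : ℕ) (a : Fin q → E) (U : Set (ι → E))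
      (h : MvPolynomial (Fin q) E) (w : ι → MvPolynomial (Fin q) E), h ≠ 0 →
      (∀ u ∈ U, dgb ((C : E →+* MvPolynomial (Fin q) E) ∘ m) (C ∘ u) w = 0) →
      dgb ((C : E →+* MvPolynomial (Fin q) E) ∘ m) w w = (∑ j, C (a j) * X j ^ 2) * h ^ 2 →
      ∃ W : Fin q → ι → E, (∀ j, ∀ u ∈ U, dgb m u (W j) = 0) ∧
        (∀ i j, i ≠ j → dgb m (W i) (W j) = 0) ∧ ∀ j, dgb m (W j) (W j) = a j := by
  intro q
  induction q with
  | zero => exact fun a U h w _ _ _ => ⟨fun j => j.elim0, fun j => j.elim0, fun j => j.elim0,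
      fun j => j.elim0⟩
  | succ q ih =>
  intro a U h w hh hU hw
  let R := MvPolynomial (Fin q) E
  let K := FractionRing R
  let g : MvPolynomial (Fin (q+1)) E →+* Polynomial K :=
    (Polynomial.mapRingHom (algebraMap R K)).comp (finSuccEquiv E q : _ →+* Polynomial R)
  have hRK : Function.Injective (algebraMap R K) := IsFractionRing.injective R K
  have hg : Function.Injective g :=
    (Polynomial.map_injective _ hRK).comp (finSuccEquiv E q).injective
  let j : E →+* K := (algebraMap R K).comp C
  have hgC : ∀ x : E, g (C x) = Polynomial.C (j x) := by
    intro x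
    simp only [g, j, RingHom.comp_apply]
    rw [show (finSuccEquiv E q : MvPolynomial (Fin (q+1)) E →+* Polynomial R) (C x)
      = Polynomial.C (C x) by
        show finSuccEquiv E q (C x) = _
        simp [finSuccEquiv_apply]]
    simp
  have hgX0 : g (X 0) = Polynomial.X := by
    simp only [g, RingHom.comp_apply]
    rw [show (finSuccEquiv E q : MvPolynomial (Fin (q+1)) E →+* Polynomial R) (X 0)
      = Polynomial.X from finSuccEquiv_X_zero]
    simp
  have hgXs : ∀ i : Fin q, g (X i.succ) = Polynomial.C (algebraMap R K (X i)) := by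
    intro i
    simp only [g, RingHom.comp_apply]
    rw [show (finSuccEquiv E q : MvPolynomial (Fin (q+1)) E →+* Polynomial R) (X i.succ)
      = Polynomial.C (X i) from finSuccEquiv_X_succ]
    simp
  have hgCc : ∀ v : ι → E, g ∘ (C ∘ v) = Polynomial.C ∘ (j ∘ v) := fun v => funext fun i => hgC _
  let m' : ι → K := j ∘ m
  have hm' : DAniso m' := (hm.mvPoly (σ := Fin q)).frac (K := K)
  have hK2 : (2 : K) ≠ 0 := by
    rw [← map_ofNat j 2]; exact (map_ne_zero j).mpr h2
  let N : R := ∑ i : Fin q, C (a i.succ) * X i ^ 2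
  haveI : Infinite K := Infinite.of_injective j j.injective
  obtain ⟨v0, v1, h0U, h1U, h00, h11, h01⟩ := represent_split hK2 hm' ((fun u => j ∘ u) '' U) (j (a 0))
    (algebraMap R K N) (g h) (g ∘ w) (fun h0 => hh (hg (by rw [h0, map_zero])))
    (by
      rintro _ ⟨u, hu, rfl⟩
      have := congrArg g (hU u hu)
      rw [map_dgb, map_zero] at this
      rw [← this]
      congr 1
      · exact (hgCc m).symm
      · exact (hgCc u).symm)
    (by
      have := congrArg g hw
      rw [map_dgb] at this
      rw [show (Polynomial.C ∘ m' : ι → Polynomial K) = g ∘ (C ∘ m) from (hgCc m).symm]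
      refine this.trans ?_
      rw [map_mul, map_pow, Fin.sum_univ_succ, map_add, map_sum]
      simp only [map_mul, map_pow, hgC, hgX0, hgXs, N, map_sum, j, RingHom.comp_apply])
  obtain ⟨h1, V1, hh1, hV1⟩ := exists_common_den (A := R) v1
  obtain ⟨p, hp⟩ : ∃ p, eval p h1 ≠ 0 := by
    by_contra hcon
    push Not at hcon
    exact hh1 (MvPolynomial.funext fun x => by rw [hcon, map_zero])
  have hV1' : (algebraMap R K) ∘ V1 = algebraMap R K h1 • v1 := funext fun i => (hV1 i).symm
  have hev : ∀ x : ι → E, (eval p : R → E) ∘ ((C : E →+* R) ∘ x) = x := fun x => by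
    funext i; simp
  let w0 : ι → E := (eval p h1)⁻¹ • (eval p ∘ V1)
  have hw0U : ∀ u ∈ U, dgb m u w0 = 0 := by
    intro u hu
    have e1 : dgb (C ∘ m) (C ∘ u) V1 = 0 := hRK <| by
      rw [map_dgb, hV1', dgb_smul_right, map_zero]
      exact mul_eq_zero_of_right _ (h1U _ ⟨u, hu, rfl⟩)
    have e2 := congrArg (eval p) e1
    rw [map_dgb, hev, hev, map_zero] at e2
    rw [dgb_smul_right, e2, mul_zero]
  have hw0 : dgb m w0 w0 = a 0 := by
    have e1 : dgb (C ∘ m) V1 V1 = C (a 0) * h1 ^ 2 := hRK <| by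
      rw [map_dgb, hV1', dgb_smul_right, dgb_smul_left, map_mul, map_pow]
      rw [show dgb (algebraMap R K ∘ C ∘ m) v1 v1 = algebraMap R K (C (a 0)) from h11]
      ring
    have e2 := congrArg (eval p) e1
    rw [map_dgb, hev, map_mul, map_pow, eval_C] at e2
    rw [dgb_smul_right, dgb_smul_left, e2]
    field_simp
  have hjw0 : dgb m' (j ∘ w0) (j ∘ w0) = j (a 0) := by rw [← map_dgb, hw0]
  have hjU : ∀ u ∈ U, dgb m' (j ∘ u) (j ∘ w0) = 0 := fun u hu => by
    rw [← map_dgb, hw0U u hu, map_zero]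
  -- move `v1` to the constant vector `w0` by a reflection
  obtain ⟨v, hvU, hvw, hvv⟩ : ∃ v : ι → K, (∀ u ∈ U, dgb m' (j ∘ u) v = 0) ∧
      dgb m' (j ∘ w0) v = 0 ∧ dgb m' v v = algebraMap R K N := by
    by_cases hd : v1 - j ∘ w0 = 0
    · refine ⟨v0, fun u hu => h0U _ ⟨u, hu, rfl⟩, ?_, h00⟩
      rw [← sub_eq_zero.mp hd, dgb_comm, h01]
    · set δ := v1 - j ∘ w0 with hδ
      have hφ : dgb m' δ δ ≠ 0 := fun h0 => hd (hm' _ h0)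
      set t := 2 * dgb m' v0 δ / dgb m' δ δ with ht
      have ht' : t * dgb m' δ δ = 2 * dgb m' v0 δ := by rw [ht, div_mul_cancel₀ _ hφ]
      have hδδ : dgb m' δ δ = 2 * (j (a 0) - dgb m' v1 (j ∘ w0)) := by
        rw [hδ, dgb_sub_left, dgb_sub_right, dgb_sub_right, h11, hjw0, dgb_comm m' (j ∘ w0)]
        ring
      have hδ0 : dgb m' v0 δ = - dgb m' v0 (j ∘ w0) := by
        rw [hδ, dgb_sub_right, h01, zero_sub]
      have hδw : dgb m' δ (j ∘ w0) = dgb m' v1 (j ∘ w0) - j (a 0) := by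
        rw [hδ, dgb_sub_left, hjw0]
      refine ⟨v0 - t • δ, fun u hu => ?_, ?_, ?_⟩
      · rw [dgb_sub_right, dgb_smul_right, hδ, dgb_sub_right, h0U _ ⟨u, hu, rfl⟩,
          h1U _ ⟨u, hu, rfl⟩, hjU u hu]
        ring
      · rw [dgb_comm, dgb_sub_left, dgb_smul_left, hδw]
        rw [hδδ, hδ0] at ht'
        refine mul_left_cancel₀ hK2 ?_
        linear_combination ht'
      · rw [dgb_sub_left, dgb_sub_right, dgb_sub_right, dgb_smul_left, dgb_smul_left,
          dgb_smul_right, dgb_smul_right, dgb_comm m' δ v0, h00]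
        linear_combination t * ht'
  obtain ⟨h', V, hh', hV⟩ := exists_common_den (A := R) v
  have hV' : (algebraMap R K) ∘ V = algebraMap R K h' • v := funext fun i => (hV i).symm
  obtain ⟨W, hWU, hWW, hWa⟩ := ih (fun i => a i.succ) (insert w0 U) h' V hh'
    (by
      intro u hu
      refine hRK ?_
      rw [map_dgb, hV', dgb_smul_right, map_zero]
      refine mul_eq_zero_of_right _ ?_
      rcases hu with rfl | hu
      · exact hvw
      · exact hvU u hu)
    (by
      refine hRK ?_
      rw [map_dgb, hV', dgb_smul_right, dgb_smul_left, map_mul, map_pow]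
      rw [show dgb (algebraMap R K ∘ C ∘ m) v v = algebraMap R K N from hvv]
      ring)
  refine ⟨Fin.cons w0 W, ?_, ?_, ?_⟩
  · intro i u hu
    refine Fin.cases ?_ (fun i => ?_) i
    · exact hw0U u hu
    · exact hWU i u (Set.mem_insert_of_mem _ hu)
  · intro i i'
    refine Fin.cases ?_ (fun i => ?_) i
    · refine Fin.cases (fun h => absurd rfl h) (fun i' _ => ?_) i'
      exact hWU i' w0 (Set.mem_insert _ _)
    · refine Fin.cases (fun _ => ?_) (fun i' h => ?_) i'
      · rw [dgb_comm]; exact hWU i w0 (Set.mem_insert _ _)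
      · exact hWW i i' fun hh => h (by rw [hh])
  · intro i
    refine Fin.cases hw0 (fun i => ?_) i
    exact hWa i

/-! ### Anisotropy over the function field of the special quadric bundle -/

open Polynomial in
lemma exists_pow_smul {ι k : Type*} [Finite ι] [Field k] (b : ι → k[X]) (hb : b ≠ 0) :
    ∃ (μ : ℕ) (b' : ι → k[X]), b = (Polynomial.X ^ μ : k[X]) • b' ∧ ∃ i, (b' i).coeff 0 ≠ 0 := by
  classical
  obtain ⟨i₀, hi₀⟩ := Function.ne_iff.mp hb
  induction hk : (b i₀).natDegree generalizing b with
  | zero =>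
    refine ⟨0, b, by simp, i₀, fun h => hi₀ ?_⟩
    rw [Polynomial.eq_C_of_natDegree_eq_zero hk, h, Polynomial.C_0]; rfl
  | succ k ih =>
    by_cases hd : ∃ i, (b i).coeff 0 ≠ 0
    · exact ⟨0, b, by simp, hd⟩
    push Not at hd
    choose c hc using fun i => Polynomial.X_dvd_iff.mpr (hd i)
    have hc0 : c i₀ ≠ 0 := fun h => hi₀ (by rw [hc, h, mul_zero]; rfl)
    obtain ⟨μ, b', h1, h2⟩ := ih c (fun h => hc0 (by rw [h]; rfl)) hc0 (by
      rw [hc, Polynomial.natDegree_X_mul hc0] at hk; omega)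
    refine ⟨μ + 1, b', ?_, h2⟩
    funext i
    rw [hc, h1, Pi.smul_apply, Pi.smul_apply, smul_eq_mul, smul_eq_mul]
    ring

/-- A totally isotropic subspace of a nondegenerate form has at most half the dimension. -/
lemma finrank_isotropic {ι k : Type*} [Fintype ι] [Field k] (h2 : (2 : k) ≠ 0) (m : ι → k)
    (hm : ∀ i, m i ≠ 0) (V : Submodule k (ι → k)) (hV : ∀ v ∈ V, dgb m v v = 0) :
    2 * Module.finrank k V ≤ Fintype.card ι := by
  classical
  let B : (ι → k) →ₗ[k] Module.Dual k (ι → k) := LinearMap.mk₂ k (dgb m)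
    (dgb_add_left m) (dgb_smul_left m) (fun w u v => dgb_add_right m u v w)
    (fun a w v => dgb_smul_right m a v w)
  have hB : Function.Injective B := by
    rw [← LinearMap.ker_eq_bot, LinearMap.ker_eq_bot']
    intro v hv
    funext i
    have := congrArg (fun f => f (Pi.single i 1)) hv
    simp only [B, LinearMap.mk₂_apply, dgb, LinearMap.zero_apply] at this
    rw [Finset.sum_eq_single i] at this
    · simpa [hm i] using this
    · intro j _ hj; simp [hj]
    · simp
  have hle : V.map B ≤ V.dualAnnihilator := by
    rintro _ ⟨v, hv, rfl⟩
    rw [Submodule.mem_dualAnnihilator]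
    intro w hw
    have h1 := hV _ (V.add_mem hv hw)
    rw [dgb_add_left, dgb_add_right, dgb_add_right, hV v hv, hV w hw, dgb_comm m w v] at h1
    have h3 : 2 * dgb m v w = 0 := by linear_combination h1
    exact (mul_eq_zero.mp h3).resolve_left h2
  have h3 := Submodule.finrank_mono hle
  rw [← (Submodule.equivMapOfInjective B hB V).finrank_eq] at h3
  have h4 := Subspace.finrank_add_finrank_dualAnnihilator_eq V
  rw [Module.finrank_fintype_fun_eq_card] at h4
  omega

lemma dgb_sum_orth {ι T A : Type*} [Fintype ι] [Fintype T] [CommRing A] (m : ι → A)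
    (W : T → ι → A) (b : T → A) (horth : ∀ s s', s ≠ s' → dgb m (W s) (W s') = 0) :
    dgb m (∑ s, b s • W s) (∑ s, b s • W s) = ∑ s, b s ^ 2 * dgb m (W s) (W s) := by
  classical
  have hl : ∀ (f : T → ι → A) (w : ι → A), dgb m (∑ s, f s) w = ∑ s, dgb m (f s) w := by
    intro f w
    simp only [dgb, Finset.sum_apply, Finset.sum_mul, Finset.mul_sum]
    rw [Finset.sum_comm]
  rw [hl]
  refine Finset.sum_congr rfl fun s _ => ?_
  rw [dgb_comm, hl, Finset.sum_eq_single s]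
  · rw [dgb_smul_left, dgb_smul_right]; ring
  · intro s' _ hs
    rw [dgb_smul_left, dgb_smul_right, horth s' s hs]; ring
  · simp

open Polynomial in
/-- Let `⟨M_i⟩` be a form over `k[X]` of rank less than `2p`, nondegenerate at `X = 0`.  It contains
no orthogonal system of `p` vectors whose values form `X·γ·⟨t_s⟩`, with `γ` a unit at `0` and
`⟨t_s⟩` anisotropic over `k`: the reductions at `X = 0` of integral vectors in the span of such a
system would be totally isotropic, hence fill a space of dimension less than `p`. -/
lemma no_orth_system {ι T k : Type*} [Fintype ι] [Fintype T] [Field k]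
    (h2 : (2 : k) ≠ 0) (hcard : Fintype.card ι < 2 * Fintype.card T) (M : ι → k[X])
    (hM : ∀ i, (M i).coeff 0 ≠ 0) (t : T → k) (ht : DAniso t) (γ D : k[X]) (hγ : γ.coeff 0 ≠ 0)
    (hD : D ≠ 0) (W : T → ι → k[X]) (horth : ∀ s s', s ≠ s' → dgb M (W s) (W s') = 0)
    (hW : ∀ s, dgb M (W s) (W s) = D ^ 2 * Polynomial.X * γ * Polynomial.C (t s)) : False := by
  classical
  have hX : Prime (Polynomial.X : k[X]) := Polynomial.prime_X
  have hval : ∀ b : T → k[X], dgb M (∑ s, b s • W s) (∑ s, b s • W s)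
      = D ^ 2 * Polynomial.X * γ * dgb (Polynomial.C ∘ t) b b := by
    intro b
    rw [dgb_sum_orth M W b horth, dgb, Finset.mul_sum]
    exact Finset.sum_congr rfl fun s _ => by rw [hW, Function.comp]; ring
  let V : Submodule k (ι → k) :=
    { carrier := {v | ∃ (u : ι → k[X]) (g : k[X]) (b : T → k[X]), g ≠ 0 ∧ g • u = ∑ s, b s • W s ∧
        v = fun i => (u i).coeff 0}
      zero_mem' := ⟨0, 1, 0, one_ne_zero, by simp, by funext i; simp⟩
      add_mem' := by
        rintro _ _ ⟨u, g, b, hg, h, rfl⟩ ⟨u', g', b', hg', h', rfl⟩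
        refine ⟨u + u', g * g', g' • b + g • b', mul_ne_zero hg hg', ?_, by funext i; simp⟩
        rw [smul_add, mul_comm, mul_smul, h, mul_comm, mul_smul, h']
        simp only [Finset.smul_sum, Pi.add_apply, Pi.smul_apply, add_smul, smul_assoc,
          Finset.sum_add_distrib]
      smul_mem' := by
        rintro a _ ⟨u, g, b, hg, h, rfl⟩
        refine ⟨Polynomial.C a • u, g, Polynomial.C a • b, hg, ?_, by funext i; simp⟩
        rw [smul_comm, h]
        simp only [Finset.smul_sum, Pi.smul_apply, smul_assoc] }
  have hV : ∀ v ∈ V, dgb (fun i => (M i).coeff 0) v v = 0 := by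
    rintro _ ⟨u, g, b, hg, h, rfl⟩
    have h1 := hval b
    rw [← h, dgb_smul_left, dgb_smul_right] at h1
    have h3 : (dgb M u u).coeff 0 = 0 := by
      by_cases hb : b = 0
      · rw [hb, Finset.sum_eq_zero (fun s _ => by simp)] at h
        have : u = 0 := by
          funext i
          have := congrFun h i
          simpa [hg] using this
        rw [this]; simp [dgb]
      obtain ⟨μ, b', rfl, i, hi⟩ := exists_pow_smul b hb
      rw [dgb_smul_left, dgb_smul_right] at h1
      obtain ⟨α, g', rfl, hg'⟩ := exists_pow_mul hX hg
      obtain ⟨δ, D', rfl, hD'⟩ := exists_pow_mul hX hD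
      by_contra hu
      rw [← Polynomial.X_dvd_iff] at hu
      rw [Ne, ← Polynomial.X_dvd_iff] at hγ
      have hb'0 : ¬ Polynomial.X ∣ dgb (Polynomial.C ∘ t) b' b' := by
        rw [Polynomial.X_dvd_iff]
        intro h0
        have e : dgb t (fun s => (b' s).coeff 0) (fun s => (b' s).coeff 0) = 0 := by
          rw [← h0, ← Polynomial.constantCoeff_apply, map_dgb]
          congr 1
          funext s; simp
        exact hi (congrFun (ht _ e) i)
      have e : Polynomial.X ^ (2 * α) * (g' ^ 2 * dgb M u u)
          = Polynomial.X ^ (2 * δ + 2 * μ + 1) * (D' ^ 2 * γ * dgb (Polynomial.C ∘ t) b' b') := by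
        linear_combination h1
      have := (pow_mul_eq_pow_mul hX
        (fun h => (hX.dvd_or_dvd h).elim (fun h => hg' (hX.dvd_of_dvd_pow h)) hu)
        (fun h => (hX.dvd_or_dvd h).elim (fun h => (hX.dvd_or_dvd h).elim
          (fun h => hD' (hX.dvd_of_dvd_pow h)) hγ) hb'0) e).1
      omega
    rw [← h3, ← Polynomial.constantCoeff_apply, map_dgb]
    rfl
  have hf := finrank_isotropic h2 _ hM V hV
  obtain ⟨g, hgV⟩ := LinearMap.exists_leftInverse_of_injective V.subtype V.ker_subtype
  let β := Module.finBasis k V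
  let Θ : Fin (Module.finrank k V) → ι → k := fun a i => β.repr (g (Pi.single i 1)) a
  have hΘ : ∀ a v, ∑ i, v i * Θ a i = β.repr (g v) a := by
    intro a v
    have := LinearMap.pi_apply_eq_sum_univ (((Finsupp.lapply a).comp β.repr.toLinearMap).comp g) v
    refine Eq.trans ?_ this.symm
    refine Finset.sum_congr rfl fun i _ => ?_
    simp only [Θ, smul_eq_mul, LinearMap.comp_apply, Finsupp.lapply_apply,
      LinearEquiv.coe_coe]
    congr 4
    funext j
    simp [Pi.single_apply, eq_comm]
  let E := FractionRing k[X]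
  let Q : (T → E) →ₗ[E] (Fin (Module.finrank k V) → E) :=
    (Matrix.of fun a s => algebraMap k[X] E (∑ i, W s i * Polynomial.C (Θ a i))).mulVecLin
  have hQ : LinearMap.ker Q ≠ ⊥ := LinearMap.ker_ne_bot_of_finrank_lt (by simp; omega)
  obtain ⟨bE, hbE, hbE0⟩ := Submodule.exists_mem_ne_zero_of_ne_bot hQ
  obtain ⟨h, b, hh, hb⟩ := exists_common_den (A := k[X]) bE
  have hinj := IsFractionRing.injective k[X] E
  have hb0 : b ≠ 0 := by
    rintro rfl
    apply hbE0
    funext s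
    have := hb s
    simpa [hh] using this
  have hbΘ : ∀ a, ∑ i, (∑ s, b s • W s) i * Polynomial.C (Θ a i) = 0 := by
    intro a
    refine hinj ?_
    have h1 := congrFun (LinearMap.mem_ker.mp hbE) a
    simp only [Q, Matrix.mulVecLin_apply, Matrix.mulVec, dotProduct, Matrix.of_apply,
      Pi.zero_apply] at h1
    rw [map_zero, ← mul_zero (algebraMap k[X] E h), ← h1, Finset.mul_sum, map_sum]
    simp only [Finset.sum_apply, Pi.smul_apply, smul_eq_mul, Finset.sum_mul, map_sum, map_mul,
      mul_left_comm (algebraMap k[X] E h), hb]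
    rw [Finset.sum_comm]
    refine Finset.sum_congr rfl fun s _ => ?_
    rw [Finset.mul_sum]
    refine Finset.sum_congr rfl fun i _ => ?_
    rw [← hb]; ring
  have hu0 : ∑ s, b s • W s ≠ 0 := by
    intro h0
    have h1 := hval b
    rw [h0, show dgb M (0 : ι → k[X]) 0 = 0 by simp [dgb]] at h1
    obtain ⟨-, -, -, h3⟩ := natDegree_dgb ht b hb0
    have hγ0 : γ ≠ 0 := fun h => hγ (by simp [h])
    exact (mul_ne_zero (mul_ne_zero (mul_ne_zero (pow_ne_zero 2 hD) hX.ne_zero) hγ0) h3) h1.symm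
  obtain ⟨μ, u, hu, i, hi⟩ := exists_pow_smul _ hu0
  have hmem : (fun i => (u i).coeff 0) ∈ V := ⟨u, Polynomial.X ^ μ, b, pow_ne_zero _ hX.ne_zero,
    hu.symm, rfl⟩
  have hz : g (fun i => (u i).coeff 0) = 0 := by
    apply β.repr.injective
    ext a
    rw [← hΘ, map_zero, Finsupp.zero_apply]
    have h1 := hbΘ a
    rw [hu] at h1
    simp only [Pi.smul_apply, smul_eq_mul, mul_assoc, ← Finset.mul_sum] at h1
    have h3 := (mul_eq_zero.mp h1).resolve_left (pow_ne_zero _ hX.ne_zero)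
    have := congrArg (fun p => Polynomial.coeff p 0) h3
    simpa [Polynomial.finset_sum_coeff] using this
  have h5 := congrArg (fun f => f ⟨_, hmem⟩) hgV
  simp only [LinearMap.comp_apply, Submodule.subtype_apply, LinearMap.id_apply] at h5
  rw [hz] at h5
  have := congrFun (congrArg Subtype.val h5) i
  exact hi this.symm

/-- Monomials whose exponents are pairwise distinct modulo two form an anisotropic form. -/
lemma daniso_monomial {ι κ : Type*} [Fintype ι] [Field κ] {n : ℕ} (μ : ι → Fin n →₀ ℕ)
    (hμ : ∀ i j, i ≠ j → ∃ s, μ i s % 2 ≠ μ j s % 2) :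
    DAniso (fun i => monomial (μ i) (1 : κ)) := by
  classical
  intro w hw
  by_contra hw0
  let o : MonomialOrder (Fin n) := MonomialOrder.lex
  have hne : (Finset.univ.filter fun i => w i ≠ 0).Nonempty := by
    obtain ⟨ε, hε⟩ := Function.ne_iff.mp hw0
    exact ⟨ε, by simpa using hε⟩
  have hm0 : ∀ i, monomial (μ i) (1 : κ) ≠ 0 := fun i => by simp
  have hdeg : ∀ i, w i ≠ 0 → o.degree (monomial (μ i) (1 : κ) * (w i * w i))
      = μ i + 2 • o.degree (w i) := by
    intro i hi
    rw [o.degree_mul (hm0 i) (mul_ne_zero hi hi), o.degree_mul hi hi, o.degree_monomial, two_smul]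
    simp
  have hdist : ∀ i j, w i ≠ 0 → w j ≠ 0 → i ≠ j →
      o.degree (monomial (μ i) (1 : κ) * (w i * w i))
        ≠ o.degree (monomial (μ j) (1 : κ) * (w j * w j)) := by
    intro i j hi hj hij h
    rw [hdeg i hi, hdeg j hj] at h
    obtain ⟨s, hs⟩ := hμ i j hij
    have := DFunLike.congr_fun h s
    simp at this
    omega
  obtain ⟨i₀, hi₀, hmax⟩ := Finset.exists_max_image _
    (fun i => o.toSyn (o.degree (monomial (μ i) (1 : κ) * (w i * w i)))) hne
  simp only [Finset.mem_filter, Finset.mem_univ, true_and] at hi₀ hmax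
  have hc := congrArg (coeff (o.degree (monomial (μ i₀) (1 : κ) * (w i₀ * w i₀)))) hw
  rw [dgb, coeff_sum, Finset.sum_eq_single i₀] at hc
  · rw [coeff_zero, o.coeff_degree_eq_zero_iff] at hc
    exact mul_ne_zero (hm0 _) (mul_ne_zero hi₀ hi₀) hc
  · intro j _ hj
    by_cases hwj : w j = 0
    · simp [hwj]
    · exact o.coeff_eq_zero_of_lt (lt_of_le_of_ne (hmax j hwj)
        fun h => hdist j i₀ hwj hi₀ hj (o.toSyn.injective h))
  · simp

section Lam
variable {A B : Type*} [CommRing A] [CommRing B] {n : ℕ}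

/-- The linear change of coordinates `λ_0 = x_0 - Σ_{j>0} x_j`, `λ_j = x_j`, which makes `Σ λ_i`
equal to `x_0`. -/
def lam (u : Fin (n+1) → A) : Fin (n+1) → A :=
  Fin.cons (u 0 - ∑ j : Fin n, u j.succ) fun j => u j.succ

lemma lam_zero (u : Fin (n+1) → A) : lam u 0 = u 0 - ∑ j : Fin n, u j.succ := rfl
lemma lam_succ (u : Fin (n+1) → A) (j : Fin n) : lam u j.succ = u j.succ := rfl

lemma sum_lam (u : Fin (n+1) → A) : ∑ i, lam u i = u 0 := by
  rw [Fin.sum_univ_succ]; simp [lam]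

lemma map_lam (f : A →+* B) (u : Fin (n+1) → A) :
    (fun i => f (lam u i)) = lam fun i => f (u i) := by
  funext i
  refine Fin.cases ?_ (fun j => ?_) i <;> simp [lam]

lemma lam_eq_zero {u : Fin (n+1) → A} (h : lam u = 0) : u = 0 := by
  have hs : ∀ j : Fin n, u j.succ = 0 := fun j => by rw [← lam_succ u j, h]; rfl
  have h0 : lam u 0 = 0 := by rw [h]; rfl
  rw [lam_zero, Finset.sum_eq_zero fun j _ => hs j, sub_zero] at h0
  funext i
  exact Fin.cases h0 hs i

end Lam

section Generic
variable (κ : Type*) [Field κ] (N : ℕ)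

/-- The field `κ(x_1, …, x_n)`, `n = N + 1`. -/
abbrev kk := FractionRing (MvPolynomial (Fin (N+1)) κ)

/-- The variable `x_{j+1}` in `κ(x_1, …, x_n)`. -/
def xx (j : Fin (N+1)) : kk κ N := algebraMap (MvPolynomial (Fin (N+1)) κ) _ (X j)

/-- The generic point in the coordinates `λ`, over `κ(x_1, …, x_n)[x_0]`. -/
def uu : Fin (N+1+1) → Polynomial (kk κ N) :=
  lam (Fin.cons Polynomial.X fun j => Polynomial.C (xx κ N j))

lemma xx_ne (j : Fin (N+1)) : xx κ N j ≠ 0 := by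
  rw [xx, Ne, IsFractionRing.to_map_eq_zero_iff]; exact X_ne_zero j

lemma sum_xx_ne : ∑ j, xx κ N j ≠ 0 := by
  simp only [xx]
  rw [← map_sum, Ne, IsFractionRing.to_map_eq_zero_iff]
  intro h
  have := congrArg (eval (Pi.single 0 1 : Fin (N+1) → κ)) h
  simp [map_sum] at this

lemma uu_zero : uu κ N 0 = Polynomial.X - Polynomial.C (∑ j, xx κ N j) := by
  rw [uu, lam_zero]; simp [map_sum]

lemma uu_succ (j : Fin (N+1)) : uu κ N j.succ = Polynomial.C (xx κ N j) := by
  rw [uu, lam_succ]; simp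

lemma uu_last : uu κ N (Fin.last (N+1)) = Polynomial.C (xx κ N (Fin.last N)) := by
  rw [← Fin.succ_last, uu_succ]

lemma uu_castSucc (i : Fin N) : uu κ N i.succ.castSucc = Polynomial.C (xx κ N i.castSucc) := by
  rw [← Fin.succ_castSucc, uu_succ]

lemma sum_uu : ∑ i, uu κ N i = Polynomial.X := by rw [uu, sum_lam]; simp

lemma uu_coeff (i : Fin (N+1+1)) : (uu κ N i).coeff 0 ≠ 0 := by
  refine Fin.cases ?_ (fun j => ?_) i
  · rw [uu_zero]; simpa using sum_xx_ne κ N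
  · rw [uu_succ]; simpa using xx_ne κ N j

/-- The anisotropic forms in `x_1, …, x_n` used below; `a` is the exponent of the last variable. -/
lemma daniso_xx (a : J N → ℕ) :
    DAniso fun ε => xx κ N (Fin.last N) ^ a ε * mon (fun i => xx κ N i.castSucc) ε := by
  classical
  let μ : J N → Fin (N+1) →₀ ℕ := fun ε =>
    Finsupp.single (Fin.last N) (a ε) + ∑ i, if ε i then Finsupp.single i.castSucc 1 else 0
  have h : DAniso fun ε => monomial (μ ε) (1 : κ) := by
    refine daniso_monomial μ fun ε ε' hε => ?_
    obtain ⟨i, hi⟩ := Function.ne_iff.mp hε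
    refine ⟨i.castSucc, ?_⟩
    have hμ : ∀ ε : J N, μ ε i.castSucc = if ε i then 1 else 0 := by
      intro ε
      simp only [μ, Finsupp.add_apply, Finsupp.finset_sum_apply]
      rw [Finset.sum_eq_single i]
      · rw [Finsupp.single_apply, if_neg (Fin.castSucc_lt_last i).ne']
        split_ifs <;> simp
      · intro j _ hj
        split_ifs
        · rw [Finsupp.single_apply, if_neg]
          exact fun h => hj (Fin.castSucc_injective _ h)
        · rfl
      · simp
    rw [hμ, hμ]
    revert hi
    cases ε i <;> cases ε' i <;> simp
  have e : ∀ ε, monomial (μ ε) (1 : κ)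
      = X (Fin.last N) ^ a ε * mon (fun i => X i.castSucc) ε := by
    intro ε
    simp only [μ, mon]
    rw [X_pow_eq_monomial, ← one_mul (1 : κ), ← monomial_mul, one_mul, monomial_sum_one]
    congr 1
    refine Finset.prod_congr rfl fun i _ => ?_
    split_ifs <;> rfl
  have e2 : (fun ε => xx κ N (Fin.last N) ^ a ε * mon (fun i => xx κ N i.castSucc) ε)
      = algebraMap (MvPolynomial (Fin (N+1)) κ) (kk κ N) ∘ fun ε => monomial (μ ε) (1 : κ) := by
    funext ε
    rw [Function.comp, e, map_mul, map_pow, map_mon]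
    rfl
  rw [e2]
  exact h.frac (K := kk κ N)

end Generic

section Generic
variable (κ : Type*) [Field κ] (N : ℕ)

lemma slot_uu_succ (i : Fin N) : slot (uu κ N) i.succ
    = Polynomial.C (xx κ N (Fin.last N) * xx κ N i.castSucc) := by
  rw [slot, uu_last, uu_castSucc, ← Polynomial.C_mul, mul_comm]

lemma daniso_tail : DAniso (mon fun i : Fin N => xx κ N (Fin.last N) * xx κ N i.castSucc) := by
  have h := daniso_xx κ N (sz (n := N))
  convert h using 1
  funext ε
  have := mon_mul_pow (xx κ N (Fin.last N)) (fun _ => 1) (fun i : Fin N => xx κ N i.castSucc) ε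
  simp only [pow_one] at this
  exact this

/-- The Pfister form of the generic point is anisotropic: its first slot has odd degree in `x_0`. -/
lemma aniso_uu : Aniso (slot (uu κ N)) := by
  intro w hw
  rw [pf_succ] at hw
  have hT : Fin.tail (slot (uu κ N))
      = fun i => Polynomial.C (xx κ N (Fin.last N) * xx κ N i.castSucc) :=
    funext fun i => slot_uu_succ κ N i
  have hpf : ∀ v, pf (Fin.tail (slot (uu κ N))) v = dgb (Polynomial.C ∘
      mon fun i : Fin N => xx κ N (Fin.last N) * xx κ N i.castSucc) v v := by
    intro v
    rw [hT, pf, dgb]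
    refine Finset.sum_congr rfl fun ε _ => ?_
    rw [Function.comp, map_mon, sq]
  rw [hpf, hpf] at hw
  set a := fun ε : J N => w (Fin.cons false ε) with ha
  set b := fun ε : J N => w (Fin.cons true ε) with hb
  have hs0 : (slot (uu κ N) 0).natDegree = 1 := by
    rw [slot, uu_last, show Fin.castSucc (0 : Fin (N+1)) = 0 from rfl, uu_zero,
      Polynomial.natDegree_mul_C (xx_ne κ N _), Polynomial.natDegree_X_sub_C]
  have hs0' : slot (uu κ N) 0 ≠ 0 := fun h => by simp [h] at hs0
  have hb0 : b = 0 := by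
    by_contra hb0
    obtain ⟨k, -, hk, hk0⟩ := natDegree_dgb (daniso_tail κ N) b hb0
    have h1 := Polynomial.natDegree_mul hs0' hk0
    rw [hs0, hk] at h1
    by_cases ha0 : a = 0
    · rw [ha0] at hw
      rw [show dgb _ (0 : J N → Polynomial (kk κ N)) 0 = 0 by simp [dgb], zero_add] at hw
      rw [hw] at h1
      simp at h1
      omega
    · obtain ⟨l, -, hl, -⟩ := natDegree_dgb (daniso_tail κ N) a ha0
      rw [eq_neg_of_add_eq_zero_left hw, Polynomial.natDegree_neg, h1] at hl
      omega
  have ha0 : a = 0 := by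
    by_contra ha0
    obtain ⟨l, -, -, hl⟩ := natDegree_dgb (daniso_tail κ N) a ha0
    rw [hb0, show dgb _ (0 : J N → Polynomial (kk κ N)) 0 = 0 by simp [dgb], mul_zero,
      add_zero] at hw
    exact hl hw
  funext ε
  rw [← Fin.cons_self_tail ε]
  cases ε 0
  · exact congrFun ha0 _
  · exact congrFun hb0 _

lemma cc_uu {d : ℕ} (hd : N + 1 + 2 ≤ 2 * (d / 2)) :
    ∃ c', cc d (uu κ N) = Polynomial.X * c' ∧ c'.coeff 0 ≠ 0 := by
  obtain ⟨m, hm⟩ : ∃ m, 2 * (d / 2) = m + 2 := ⟨2 * (d / 2) - 2, by omega⟩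
  refine ⟨uu κ N (Fin.last (N+1)) ^ (d - 2 * (d / 2)) * (Polynomial.X ^ (m + 1) +
    uu κ N (Fin.last (N+1)) ^ (2 * (d / 2) - (N + 1) - 2) * ∏ i, uu κ N i), ?_, ?_⟩
  · rw [cc, sum_uu, hm]; ring
  · rw [← Polynomial.constantCoeff_apply]
    simp only [map_mul, map_pow, map_add, map_prod, Polynomial.constantCoeff_apply,
      Polynomial.coeff_X_zero]
    rw [zero_pow (by omega), zero_add]
    exact mul_ne_zero (pow_ne_zero _ (uu_coeff κ N _)) (mul_ne_zero (pow_ne_zero _ (uu_coeff κ N _))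
      (Finset.prod_ne_zero_iff.mpr fun i _ => uu_coeff κ N i))

lemma sz_cons_true {N : ℕ} (ε : J N) : sz (Fin.cons true ε : J (N+1)) = sz ε + 1 := by
  simp only [sz, Fin.sum_univ_succ, Fin.cons_zero, Fin.cons_succ, if_true]
  rw [add_comm]

lemma cf_uu (d : ℕ) (ε : J N) : cf d (uu κ N) (Fin.cons true ε) = uu κ N 0 * Polynomial.C
    (xx κ N (Fin.last N) ^ (d - (sz ε + 1)) * mon (fun i => xx κ N i.castSucc) ε) := by
  rw [cf, sz_cons_true, mon_cons, uu_last]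
  have : Fin.tail (fun i : Fin (N+1) => uu κ N i.castSucc)
      = fun i : Fin N => Polynomial.C (xx κ N i.castSucc) :=
    funext fun i => uu_castSucc κ N i
  rw [this, ← map_mon, map_mul, map_pow, show Fin.castSucc (0 : Fin (N+1)) = 0 from rfl]
  simp only [if_true]
  ring

end Generic

section Abstract
variable {k E : Type*} [Field k] [CharZero k] [Field E] [CharZero E] [Algebra (Polynomial k) E]
  [IsFractionRing (Polynomial k) E] {N : ℕ} {u : Fin (N+1+1) → Polynomial k}

lemma slot_map {A B : Type*} [CommRing A] [CommRing B] (f : A →+* B) {n : ℕ} (u : Fin (n+1) → A) :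
    (fun i => f (slot u i)) = slot fun i => f (u i) := by
  funext i; simp [slot]

lemma mon_slot_map {A B : Type*} [CommRing A] [CommRing B] (f : A →+* B) {n : ℕ}
    (u : Fin (n+1) → A) : f ∘ mon (slot u) = mon (slot fun i => f (u i)) := by
  funext ε; rw [Function.comp, map_mon, slot_map]

/-- The pure part of the Pfister form of the generic point does not represent `Σ cf z²` up to the
factor `cc` and squares. -/
lemma no_pure_rep {d r : ℕ} (uE : Fin (N+1+1) → E)
    (huE : ∀ i, uE i = algebraMap (Polynomial k) E (u i))
    (hu : ∀ i, (u i).coeff 0 ≠ 0) (han : Aniso (slot u)) (t : J N → k) (ht : DAniso t)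
    (hcf : ∀ ε, cf d u (Fin.cons true ε) = u 0 * Polynomial.C (t ε))
    (hcc : ∃ c', cc d u = Polynomial.X * c' ∧ c'.coeff 0 ≠ 0) (e : Fin (r+2) → J (N+1))
    (he : ∀ ε : J N, ∃ j : Fin (r+1), e j.succ = Fin.cons true ε)
    (h : MvPolynomial (Fin (r+1)) (E)) (P : J (N+1) → MvPolynomial (Fin (r+1)) (E))
    (hh : h ≠ 0) (hP0 : P (fun _ => false) = 0)
    (hP : C (cc d uE) * pf (fun i => C (slot uE i)) P
      = (∑ j : Fin (r+1), C (cf d uE (e j.succ)) * X j ^ 2) * h ^ 2) : False := by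
  classical
  let ι := {ε : J (N+1) // ε ≠ fun _ => false}
  let m : ι → E := fun ε => mon (slot uE) ε.1
  set c := cc d uE with hc
  obtain rfl : uE = fun i => algebraMap (Polynomial k) E (u i) := funext huE
  set uE : Fin (N+1+1) → E := fun i => algebraMap (Polynomial k) E (u i)
  have hmE : DAniso (mon (slot uE)) := by
    rw [← mon_slot_map]
    exact ((aniso_iff _).mp han).frac (K := E)
  have hm : DAniso m := by
    intro w hw
    let w' : J (N+1) → E := fun ε => if hε : ε ≠ fun _ => false then w ⟨ε, hε⟩ else 0
    have h0 : w' = 0 := by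
      apply hmE
      rw [← hw, dgb, dgb]
      symm
      refine Fintype.sum_of_injective (Subtype.val : ι → J (N+1)) Subtype.val_injective _ _ ?_ ?_
      · intro ε hε
        have : ¬ (ε ≠ fun _ => false) := fun h => hε ⟨⟨ε, h⟩, rfl⟩
        simp only [w', dif_neg this]; ring
      · rintro ⟨ε, hε⟩
        simp only [w', dif_pos hε]; rfl
    funext ⟨ε, hε⟩
    have := congrFun h0 ε
    simp only [w', dif_pos hε] at this
    exact this
  obtain ⟨W, -, horth, hW⟩ := represent_diag (two_ne_zero) hm (r+1)
    (fun j => c * cf d uE (e j.succ)) ∅ h (fun ε => C c * P ε.1) hh (by simp) (by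
      have h1 : dgb ((C : E →+* MvPolynomial (Fin (r+1)) (E)) ∘ m)
          (fun ε => C c * P ε.1) (fun ε => C c * P ε.1)
          = C c * (C c * pf (fun i => C (slot uE i)) P) := by
        rw [pf, dgb, Finset.mul_sum, Finset.mul_sum]
        refine Fintype.sum_of_injective (Subtype.val : ι → J (N+1)) Subtype.val_injective _ _ ?_ ?_
        · intro ε hε
          have : ε = fun _ => false := by
            by_contra h; exact hε ⟨⟨ε, h⟩, rfl⟩
          rw [this, hP0]; ring
        · rintro ⟨ε, hε⟩
          simp only [m, Function.comp, map_mon]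
          ring
      rw [h1, hP, ← mul_assoc, Finset.mul_sum]
      congr 1
      refine Finset.sum_congr rfl fun j _ => ?_
      rw [map_mul, mul_assoc])
  choose s hs using he
  have hsinj : Function.Injective s := by
    intro ε ε' h
    have h1 := hs ε
    rw [h, hs] at h1
    exact ((Fin.cons_injective2 h1).2).symm
  obtain ⟨D, W', hD, hW'⟩ := exists_common_den (A := Polynomial k)
    (fun p : J N × ι => W (s p.1) p.2)
  obtain ⟨c', hc1, hc2⟩ := hcc
  have hinj := IsFractionRing.injective (Polynomial k) (E)
  let M : ι → Polynomial k := fun ε => mon (slot (u)) ε.1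
  have hMm : algebraMap (Polynomial k) (E) ∘ M = m := by
    funext ε
    exact congrFun (mon_slot_map (algebraMap (Polynomial k) E) u) ε.1
  have hWW : ∀ ε, algebraMap (Polynomial k) (E) ∘ (fun i => W' (ε, i))
      = algebraMap (Polynomial k) (E) D • W (s ε) :=
    fun ε => funext fun i => (hW' (ε, i)).symm
  refine no_orth_system (ι := ι) (T := J N) (k := k) two_ne_zero ?_ M ?_ _
    ht (c' * u 0) D ?_ hD (fun ε i => W' (ε, i)) ?_ ?_
  · rw [Fintype.card_subtype_compl]
    simp only [J, Fintype.card_pi, Fintype.card_bool, Finset.prod_const, Finset.card_univ,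
      Fintype.card_fin, Fintype.card_subtype_eq, pow_succ]
    have : 0 < 2 ^ N := by positivity
    omega
  · intro ε
    simp only [M]
    rw [← Polynomial.constantCoeff_apply, map_mon]
    refine Finset.prod_ne_zero_iff.mpr fun i _ => ?_
    split_ifs
    · simp only [slot, map_mul]
      exact mul_ne_zero (hu _) (hu _)
    · exact one_ne_zero
  · rw [Polynomial.mul_coeff_zero]; exact mul_ne_zero hc2 (hu 0)
  · intro ε ε' hε
    refine hinj ?_
    rw [map_dgb, hMm, hWW, hWW, dgb_smul_left, dgb_smul_right, horth _ _ (fun h => hε (hsinj h))]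
    simp
  · intro ε
    refine hinj ?_
    rw [map_dgb, hMm, hWW, dgb_smul_left, dgb_smul_right, hW, hs]
    have h1 : c = algebraMap (Polynomial k) (E) (Polynomial.X * c') := by
      rw [← hc1]; exact (map_cc _ _ _).symm
    have h3 : cf d uE (Fin.cons true ε)
        = algebraMap (Polynomial k) (E) (cf d (u) (Fin.cons true ε)) :=
      (map_cf _ _ _ _).symm
    rw [h3, hcf, h1]
    simp only [map_mul, map_pow]
    ring

end Abstract

section Abstract
variable {k E K : Type*} [Field k] [CharZero k] [Field E] [CharZero E] [Algebra (Polynomial k) E]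
  [IsFractionRing (Polynomial k) E] {N r : ℕ} {u : Fin (N+1+1) → Polynomial k}
  [Field K] [CharZero K] [Algebra (MvPolynomial (Fin (r+1)) E) K]
  [IsFractionRing (MvPolynomial (Fin (r+1)) E) K]

/-- The Pfister form of the generic point stays anisotropic over the function field of the
special quadric bundle, here written in terms of the two coordinates over a quadratic extension. -/
lemma aniso_quadratic {d : ℕ} (uE : Fin (N+1+1) → E)
    (huE : ∀ i, uE i = algebraMap (Polynomial k) E (u i))
    (hu : ∀ i, (u i).coeff 0 ≠ 0) (han : Aniso (slot u)) (t : J N → k) (ht : DAniso t)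
    (hcf : ∀ ε, cf d u (Fin.cons true ε) = u 0 * Polynomial.C (t ε))
    (hcc : ∃ c', cc d u = Polynomial.X * c' ∧ c'.coeff 0 ≠ 0)
    (e : Fin (r+2) → J (N+1))
    (he : ∀ ε : J N, ∃ j : Fin (r+1), e j.succ = Fin.cons true ε)
    (f : E →+* K) (hf : ∀ x, f x = algebraMap (MvPolynomial (Fin (r+1)) E) K (C x))
    (v : Fin (N+1+1) → K) (hv : ∀ i, v i = f (uE i))
    (z : Fin (r+1) → K) (hz : ∀ j, z j = algebraMap (MvPolynomial (Fin (r+1)) E) K (X j))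
    (A B : J (N+1) → K)
    (h1 : cc d v * pf (slot v) A = (∑ j, cf d v (e j.succ) * z j ^ 2) * pf (slot v) B)
    (h2 : pb (slot v) A B = 0) : A = 0 ∧ B = 0 := by
  classical
  obtain rfl : v = fun i => f (uE i) := funext hv
  set v : Fin (N+1+1) → K := fun i => f (uE i) with hvdef
  have hmE : DAniso (mon (slot uE)) := by
    obtain rfl : uE = fun i => algebraMap (Polynomial k) E (u i) := funext huE
    rw [← mon_slot_map]
    exact ((aniso_iff _).mp han).frac (K := E)
  have hanK : Aniso (slot v) := by
    rw [aniso_iff, hvdef, ← mon_slot_map]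
    have := (hmE.mvPoly (σ := Fin (r+1))).frac (K := K)
    convert this using 1
    funext ε
    simp [hf]
  have hcE : cc d uE ≠ 0 := by
    obtain ⟨c', h1, h2⟩ := hcc
    have : cc d uE = algebraMap (Polynomial k) E (cc d u) := by
      rw [map_cc]; congr 1; exact funext huE
    rw [this, h1, Ne, IsFractionRing.to_map_eq_zero_iff]
    exact mul_ne_zero Polynomial.X_ne_zero fun h => h2 (by simp [h])
  have hc : cc d v = f (cc d uE) := (map_cc _ _ _).symm
  have hc0 : cc d v ≠ 0 := by rw [hc]; exact (map_ne_zero f).mpr hcE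
  by_cases hB : B = 0
  · rw [hB] at h1
    refine ⟨hanK A ?_, hB⟩
    rw [show pf (slot v) (0 : J (N+1) → K) = 0 by simp [pf], mul_zero] at h1
    exact (mul_eq_zero.mp h1).resolve_left hc0
  exfalso
  have hpB : pf (slot v) B ≠ 0 := fun h => hB (hanK B h)
  obtain ⟨σ, hσ, hσ0⟩ := pf_round (slot v) hanK B
  have hσinj : Function.Injective σ := by
    rw [← LinearMap.ker_eq_bot, LinearMap.ker_eq_bot']
    intro p hp
    refine hanK p ?_
    have := hσ p
    rw [hp, show pf (slot v) (0 : J (N+1) → K) = 0 by simp [pf]] at this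
    exact (mul_eq_zero.mp this.symm).resolve_left hpB
  obtain ⟨p, rfl⟩ := (LinearMap.injective_iff_surjective.mp hσinj) A
  have hp0 : p (fun _ => false) = 0 := by
    have h3 := pb_sim hσ p e0
    rw [hσ0, h2, mul_zero] at h3
    have h4 := (mul_eq_zero.mp ((mul_eq_zero.mp h3.symm).resolve_left hpB)).resolve_left
      two_ne_zero
    rw [pb, Finset.sum_eq_single (fun _ => false)] at h4
    · simpa [e0, mon] using h4
    · intro ε _ hε; simp [e0, hε]
    · simp
  have h5 : cc d v * pf (slot v) p = ∑ j, cf d v (e j.succ) * z j ^ 2 := by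
    rw [hσ] at h1
    refine mul_left_cancel₀ hpB ?_
    linear_combination h1
  let R := MvPolynomial (Fin (r+1)) E
  obtain ⟨h, P, hh, hP⟩ := exists_common_den (A := R) p
  have hinj := IsFractionRing.injective R K
  refine no_pure_rep uE huE hu han t ht hcf hcc e he h P hh (hinj ?_) (hinj ?_)
  · rw [← hP, hp0]; simp
  · have e1 : (fun i => algebraMap R K (C (slot uE i))) = slot v := by
      rw [hvdef, ← slot_map]; funext i; rw [hf]
    have e2 : (fun ε => algebraMap R K (P ε)) = algebraMap R K h • p :=
      funext fun ε => (hP ε).symm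
    rw [map_mul, map_pf, e1, e2, pf_smul, ← hf, ← hc, map_mul, map_pow, map_sum]
    have e3 : ∑ j : Fin (r+1), algebraMap R K (C (cf d uE (e j.succ)) * X j ^ 2)
        = ∑ j, cf d v (e j.succ) * z j ^ 2 := by
      refine Finset.sum_congr rfl fun j _ => ?_
      rw [map_mul, map_pow, ← hf, hz, map_cf]
    rw [e3, ← h5]
    ring

lemma no_sqrt {d : ℕ} (hr : 0 < r) (uE : Fin (N+1+1) → E)
    (hc : cc d uE ≠ 0) (hu : ∀ i, uE i ≠ 0) (e : Fin (r+2) → J (N+1))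
    (f : E →+* K) (hf : ∀ x, f x = algebraMap (MvPolynomial (Fin (r+1)) E) K (C x))
    (v : Fin (N+1+1) → K) (hv : ∀ i, v i = f (uE i))
    (z : Fin (r+1) → K) (hz : ∀ j, z j = algebraMap (MvPolynomial (Fin (r+1)) E) K (X j))
    (s : K) : cc d v * s ^ 2 + ∑ j, cf d v (e j.succ) * z j ^ 2 ≠ 0 := by
  intro h0
  let R := MvPolynomial (Fin (r+1)) E
  obtain ⟨h, S, hh, hS⟩ := exists_common_den (A := R) (fun _ : Unit => s)
  have hinj := IsFractionRing.injective R K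
  obtain rfl : v = fun i => f (uE i) := funext hv
  have hcfE : ∀ ε, cf d uE ε ≠ 0 := fun ε => by
    refine mul_ne_zero (pow_ne_zero _ (hu _)) (Finset.prod_ne_zero_iff.mpr fun i _ => ?_)
    split_ifs
    · exact hu _
    · exact one_ne_zero
  have hm : DAniso (fun _ : Unit => (1 : E)) := by
    intro w hw
    funext i
    simpa [dgb] using hw
  obtain ⟨W, -, horth, hW⟩ := represent_diag two_ne_zero hm (r+1)
    (fun j => - (cc d uE * cf d uE (e j.succ))) ∅ h (fun i => C (cc d uE) * S i) hh (by simp)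
    (hinj <| by
      have e3 : algebraMap R K (∑ j : Fin (r+1), C (- (cc d uE * cf d uE (e j.succ))) * X j ^ 2)
          = - (cc d (fun i => f (uE i)) * ∑ j, cf d (fun i => f (uE i)) (e j.succ) * z j ^ 2) := by
        rw [map_sum, Finset.mul_sum, ← Finset.sum_neg_distrib]
        refine Finset.sum_congr rfl fun j _ => ?_
        rw [map_mul, map_pow, ← hf, hz, map_neg, map_mul, map_cf, map_cc]
        ring
      rw [map_mul, e3, map_pow]
      simp only [dgb, Finset.univ_unique, Finset.sum_singleton, map_mul, Function.comp, map_one,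
        one_mul, ← hS]
      rw [← hf, map_cc f]
      linear_combination (cc d fun i => f (uE i)) * (algebraMap R K h) ^ 2 * h0)
  have h01 : (0 : Fin (r+1)) ≠ 1 := by
    obtain ⟨r', rfl⟩ : ∃ r', r = r' + 1 := ⟨r - 1, by omega⟩
    exact Fin.zero_ne_one
  have h1 := horth 0 1 h01
  have hW0 := hW 0
  have hW1 := hW 1
  simp only [dgb, Finset.univ_unique, Finset.sum_singleton, one_mul] at h1 hW0 hW1
  rcases mul_eq_zero.mp h1 with h | h
  · rw [h, mul_zero] at hW0
    exact neg_ne_zero.mpr (mul_ne_zero hc (hcfE _)) hW0.symm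
  · rw [h, mul_zero] at hW1
    exact neg_ne_zero.mpr (mul_ne_zero hc (hcfE _)) hW1.symm

end Abstract

section Emb
variable {κ k E K : Type*} [Field κ] [Field k] [Field E] [Field K] {N r : ℕ}
  [Algebra (MvPolynomial (Fin (N+1)) κ) k] [IsFractionRing (MvPolynomial (Fin (N+1)) κ) k]
  [Algebra (Polynomial k) E] [IsFractionRing (Polynomial k) E]
  [Algebra (MvPolynomial (Fin (r+1)) E) K] [IsFractionRing (MvPolynomial (Fin (r+1)) E) K]

/-- The embedding of `κ[z, x]` into `κ(x_1, …, x_n)(x_0)(z)`. -/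
lemma exists_emb : ∃ ψ : MvPolynomial (Fin (r+1) ⊕ Fin (N+1+1)) κ →+* K, Function.Injective ψ ∧
    (∀ j, ψ (X (Sum.inl j)) = algebraMap (MvPolynomial (Fin (r+1)) E) K (X j)) ∧
    ∀ i, ψ (X (Sum.inr i)) = algebraMap (MvPolynomial (Fin (r+1)) E) K (C
      (algebraMap (Polynomial k) E ((Fin.cons Polynomial.X fun j => Polynomial.C
        (algebraMap (MvPolynomial (Fin (N+1)) κ) k (X j)) : Fin (N+1+1) → Polynomial k) i))) := by
  let η : MvPolynomial (Fin (N+1+1)) κ →+* E :=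
    ((algebraMap (Polynomial k) E).comp
      (Polynomial.mapRingHom (algebraMap (MvPolynomial (Fin (N+1)) κ) k))).comp
      (finSuccEquiv κ (N+1)).toRingEquiv.toRingHom
  have hη : Function.Injective η :=
    ((IsFractionRing.injective (Polynomial k) E).comp (Polynomial.map_injective _
      (IsFractionRing.injective (MvPolynomial (Fin (N+1)) κ) k))).comp
      (finSuccEquiv κ (N+1)).injective
  let ψ : MvPolynomial (Fin (r+1) ⊕ Fin (N+1+1)) κ →+* K :=
    ((algebraMap (MvPolynomial (Fin (r+1)) E) K).comp (MvPolynomial.map η)).comp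
      (sumAlgEquiv κ (Fin (r+1)) (Fin (N+1+1))).toRingEquiv.toRingHom
  have hψ : Function.Injective ψ :=
    ((IsFractionRing.injective (MvPolynomial (Fin (r+1)) E) K).comp
      (MvPolynomial.map_injective _ hη)).comp (sumAlgEquiv κ (Fin (r+1)) (Fin (N+1+1))).injective
  refine ⟨ψ, hψ, fun j => ?_, fun i => ?_⟩
  · show algebraMap _ K (MvPolynomial.map η (sumAlgEquiv κ _ _ (X (Sum.inl j)))) = _
    rw [sumAlgEquiv_X_inl, map_X]
  · have h1 : ψ (X (Sum.inr i)) = algebraMap (MvPolynomial (Fin (r+1)) E) K (C (η (X i))) := by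
      show algebraMap _ K (MvPolynomial.map η (sumAlgEquiv κ _ _ (X (Sum.inr i)))) = _
      rw [sumAlgEquiv_X_inr, map_C]
    rw [h1]
    congr 2
    refine Fin.cases ?_ (fun j => ?_) i
    · show algebraMap (Polynomial k) E (Polynomial.map (algebraMap (MvPolynomial (Fin (N+1)) κ) k) (finSuccEquiv κ (N+1) (X 0))) = _
      rw [finSuccEquiv_X_zero, Polynomial.map_X]; rfl
    · show algebraMap (Polynomial k) E (Polynomial.map (algebraMap (MvPolynomial (Fin (N+1)) κ) k) (finSuccEquiv κ (N+1) (X j.succ))) = _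
      rw [finSuccEquiv_X_succ, Polynomial.map_C]; rfl
end Emb

section Generic
variable {κ Q : Type*} [Field κ] [CharZero κ] {N r : ℕ} [Field Q]
  [Algebra (MvPolynomial (Fin (r+1) ⊕ Fin (N+1+1)) κ) Q]
  [IsFractionRing (MvPolynomial (Fin (r+1) ⊕ Fin (N+1+1)) κ) Q]

/-- `generic_facts`, with the function field realised as `K = E(z)` over `E = κ(x_1, …, x_n)(x_0)`. -/
lemma generic_facts_aux {E K : Type*} [Field E] [CharZero E] [Field K] [CharZero K]
    [CharZero (kk κ N)]
    [Algebra (Polynomial (kk κ N)) E] [IsFractionRing (Polynomial (kk κ N)) E]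
    [Algebra (MvPolynomial (Fin (r+1)) E) K] [IsFractionRing (MvPolynomial (Fin (r+1)) E) K] {d : ℕ} (hr : 0 < r) (hd : N + 1 + 2 ≤ 2 * (d / 2))
    (e : Fin (r+2) → J (N+1)) (he : ∀ ε : J N, ∃ j : Fin (r+1), e j.succ = Fin.cons true ε)
    (v : Fin (N+1+1) → Q) (z : Fin (r+1) → Q)
    (hv : v = lam fun i => algebraMap (MvPolynomial (Fin (r+1) ⊕ Fin (N+1+1)) κ) Q (X (Sum.inr i)))
    (hz : z = fun j => algebraMap (MvPolynomial (Fin (r+1) ⊕ Fin (N+1+1)) κ) Q (X (Sum.inl j))) :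
    (∀ i, v i ≠ 0) ∧ cc d v ≠ 0 ∧
    (∀ s, cc d v * s ^ 2 + ∑ j, cf d v (e j.succ) * z j ^ 2 ≠ 0) ∧
    ∀ A B : J (N+1) → Q,
      cc d v * pf (slot v) A = (∑ j, cf d v (e j.succ) * z j ^ 2) * pf (slot v) B →
      pb (slot v) A B = 0 → A = 0 ∧ B = 0 := by
  let k := kk κ N
  obtain ⟨ψ, hψ, hl, hr'⟩ := exists_emb (κ := κ) (k := k) (E := E) (K := K) (N := N) (r := r)
  let φ : Q →+* K := IsFractionRing.lift (A := MvPolynomial (Fin (r+1) ⊕ Fin (N+1+1)) κ) hψ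
  have hφ : ∀ x, φ (algebraMap (MvPolynomial (Fin (r+1) ⊕ Fin (N+1+1)) κ) Q x) = ψ x :=
    fun x => IsFractionRing.lift_algebraMap hψ x
  let f : E →+* K := (algebraMap (MvPolynomial (Fin (r+1)) E) K).comp C
  have hf : ∀ x, f x = algebraMap (MvPolynomial (Fin (r+1)) E) K (C x) := fun x => rfl
  let uE : Fin (N+1+1) → E := fun i => algebraMap (Polynomial k) E (uu κ N i)
  have hφv : ∀ i, φ (v i) = f (uE i) := by
    have : (fun i => φ (v i)) = fun i => f (uE i) := by
      have h1 : (fun i => f (uE i)) = lam fun i => f (algebraMap (Polynomial k) E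
        ((Fin.cons Polynomial.X fun j => Polynomial.C (xx κ N j) : Fin (N+1+1) → Polynomial k) i)) :=
        map_lam (f.comp (algebraMap (Polynomial k) E)) _
      rw [hv, map_lam, h1]
      congr 1
      funext i
      rw [hφ, hr', hf]
      rfl
    exact congrFun this
  have hφz : ∀ j, φ (z j) = algebraMap (MvPolynomial (Fin (r+1)) E) K (X j) := fun j => by
    rw [hz, hφ, hl]
  have huE : ∀ i, uE i ≠ 0 := fun i => by
    rw [Ne, IsFractionRing.to_map_eq_zero_iff]
    exact fun h => uu_coeff κ N i (by rw [h, Polynomial.coeff_zero])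
  have hccE : cc d uE ≠ 0 := by
    obtain ⟨c', h1, h2⟩ := cc_uu κ N hd
    rw [show cc d uE = algebraMap (Polynomial k) E (cc d (uu κ N)) from (map_cc _ _ _).symm, h1,
      Ne, IsFractionRing.to_map_eq_zero_iff]
    exact mul_ne_zero Polynomial.X_ne_zero fun h => h2 (by rw [h, Polynomial.coeff_zero])
  have hN : φ (∑ j, cf d v (e j.succ) * z j ^ 2)
      = ∑ j, cf d (fun i => φ (v i)) (e j.succ) * φ (z j) ^ 2 := by
    rw [map_sum]
    refine Finset.sum_congr rfl fun j _ => ?_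
    rw [map_mul, map_pow, map_cf]
  have hslot : ∀ w, φ (pf (slot v) w) = pf (slot fun i => φ (v i)) fun i => φ (w i) := fun w => by
    rw [map_pf, slot_map]
  refine ⟨fun i hi => ?_, fun h => ?_, fun s h => ?_, fun A B h1 h2 => ?_⟩
  · have := hφv i
    rw [hi, map_zero] at this
    exact huE i ((map_eq_zero f).mp this.symm)
  · have := map_cc φ d v
    rw [h, map_zero, funext hφv, ← map_cc] at this
    exact hccE ((map_eq_zero f).mp this.symm)
  · refine no_sqrt hr uE hccE huE e f hf (fun i => φ (v i)) hφv (fun j => φ (z j)) hφz (φ s) ?_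
    rw [← hN, ← map_cc, ← map_pow, ← map_mul, ← map_add, h, map_zero]
  · have := aniso_quadratic uE (fun _ => rfl) (uu_coeff κ N) (aniso_uu κ N) _
      (daniso_xx κ N fun ε => d - (sz ε + 1)) (cf_uu κ N d) (cc_uu κ N hd) e he f hf
      (fun i => φ (v i)) hφv (fun j => φ (z j)) hφz (fun i => φ (A i)) (fun i => φ (B i))
      (by rw [← hN, ← map_cc, ← hslot, ← hslot, ← map_mul, h1, map_mul])
      (by
        have := congrArg φ h2
        rw [map_zero, pb, map_sum] at this
        rw [pb, ← slot_map, ← this]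
        refine Finset.sum_congr rfl fun ε _ => ?_
        rw [map_mul, map_mul, map_mon])
    exact ⟨funext fun i => (map_eq_zero φ).mp (congrFun this.1 i),
      funext fun i => (map_eq_zero φ).mp (congrFun this.2 i)⟩

/-- Over the function field of `𝔸ⁿ⁺¹ × 𝔸ʳ⁺¹`: the special quadric bundle has no rational section
coming from a square root, and the Pfister form of the generic point of the base stays anisotropic
over its function field. -/
lemma generic_facts {d : ℕ} (hr : 0 < r) (hd : N + 1 + 2 ≤ 2 * (d / 2))
    (e : Fin (r+2) → J (N+1)) (he : ∀ ε : J N, ∃ j : Fin (r+1), e j.succ = Fin.cons true ε)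
    (v : Fin (N+1+1) → Q) (z : Fin (r+1) → Q)
    (hv : v = lam fun i => algebraMap (MvPolynomial (Fin (r+1) ⊕ Fin (N+1+1)) κ) Q (X (Sum.inr i)))
    (hz : z = fun j => algebraMap (MvPolynomial (Fin (r+1) ⊕ Fin (N+1+1)) κ) Q (X (Sum.inl j))) :
    (∀ i, v i ≠ 0) ∧ cc d v ≠ 0 ∧
    (∀ s, cc d v * s ^ 2 + ∑ j, cf d v (e j.succ) * z j ^ 2 ≠ 0) ∧
    ∀ A B : J (N+1) → Q,
      cc d v * pf (slot v) A = (∑ j, cf d v (e j.succ) * z j ^ 2) * pf (slot v) B →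
      pb (slot v) A B = 0 → A = 0 ∧ B = 0 := by
  let E := FractionRing (Polynomial (kk κ N))
  let K := FractionRing (MvPolynomial (Fin (r+1)) E)
  haveI : CharZero (kk κ N) :=
    charZero_of_injective_algebraMap (FaithfulSMul.algebraMap_injective κ (kk κ N))
  haveI : CharZero E :=
    charZero_of_injective_algebraMap (FaithfulSMul.algebraMap_injective (kk κ N) E)
  haveI : CharZero K := charZero_of_injective_algebraMap (FaithfulSMul.algebraMap_injective E K)
  exact generic_facts_aux (E := E) (K := K) hr hd e he v z hv hz

end Generic

/-! ### Places extending a valuation ring of the ground field -/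

section Place
variable {F G L : Type*} [Field F] [Field G] [Field L]

/-- A place `G ⇀ L` extending the residue map of a valuation ring `O` of a subfield `F`, encoded by
its graph `S`, and unramified: every element of `G` is a scalar of `F` times a unit. -/
structure Place (O : ValuationSubring F) (ι : F →+* G) (j : IsLocalRing.ResidueField O →+* L) where
  /-- the graph -/
  S : Subring (G × L)
  inj : ∀ l, ((0 : G), l) ∈ S → l = 0
  inv : ∀ g l, (g, l) ∈ S → l ≠ 0 → (g⁻¹, l⁻¹) ∈ S
  scale : ∀ g, g ≠ 0 → ∃ c : F, c ≠ 0 ∧ ∃ l, l ≠ 0 ∧ (ι c * g, l) ∈ S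
  const : ∀ c : O, (ι c, j (IsLocalRing.residue O c)) ∈ S

namespace Place
variable {O : ValuationSubring F} {ι : F →+* G} {j : IsLocalRing.ResidueField O →+* L}
  (P : Place O ι j)

lemma uniq {g : G} {l l' : L} (h : (g, l) ∈ P.S) (h' : (g, l') ∈ P.S) : l = l' := by
  have := P.S.sub_mem h h'
  rw [Prod.mk_sub_mk, sub_self] at this
  exact sub_eq_zero.mp (P.inj _ this)

lemma ne_zero {g : G} {l : L} (h : (g, l) ∈ P.S) (hl : l ≠ 0) : g ≠ 0 := by
  rintro rfl; exact hl (P.inj _ h)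

lemma zero_mem' : ((0 : G), (0 : L)) ∈ P.S := P.S.zero_mem

lemma one_mem' : ((1 : G), (1 : L)) ∈ P.S := P.S.one_mem

lemma mul_mem' {g g' : G} {l l' : L} (h : (g, l) ∈ P.S) (h' : (g', l') ∈ P.S) :
    (g * g', l * l') ∈ P.S := P.S.mul_mem h h'

lemma add_mem' {g g' : G} {l l' : L} (h : (g, l) ∈ P.S) (h' : (g', l') ∈ P.S) :
    (g + g', l + l') ∈ P.S := P.S.add_mem h h'

lemma neg_mem' {g : G} {l : L} (h : (g, l) ∈ P.S) : (-g, -l) ∈ P.S := P.S.neg_mem h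

lemma const_lt {c : F} (h : O.valuation c < 1) : (ι c, (0 : L)) ∈ P.S := by
  have hc : c ∈ O := O.mem_of_valuation_le_one c h.le
  have h1 := P.const ⟨c, hc⟩
  have h2 : IsLocalRing.residue O ⟨c, hc⟩ = 0 := by
    rw [IsLocalRing.residue_eq_zero_iff]
    exact (O.valuation_lt_one_iff ⟨c, hc⟩).mpr h
  rwa [h2, map_zero] at h1

lemma const_eq {c : F} (h : O.valuation c = 1) : ∃ l : L, l ≠ 0 ∧ (ι c, l) ∈ P.S := by
  have hc : c ∈ O := O.mem_of_valuation_le_one c h.le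
  refine ⟨_, ?_, P.const ⟨c, hc⟩⟩
  rw [map_ne_zero, Ne, IsLocalRing.residue_eq_zero_iff, O.valuation_lt_one_iff]
  exact h.not_lt

lemma const_le {c : F} (h : O.valuation c ≤ 1) : ∃ l : L, (ι c, l) ∈ P.S :=
  ⟨_, P.const ⟨c, O.mem_of_valuation_le_one c h⟩⟩

/-- A finite family, not all zero, can be scaled by `F` so that it reduces to a nonzero family. -/
lemma normalize {I : Type*} [Finite I] (w : I → G) (hw : w ≠ 0) :
    ∃ c : F, c ≠ 0 ∧ ∃ l : I → L, l ≠ 0 ∧ ∀ i, (ι c * w i, l i) ∈ P.S := by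
  classical
  cases nonempty_fintype I
  have h : ∀ i, ∃ c : F, c ≠ 0 ∧ (w i ≠ 0 → ∃ l : L, l ≠ 0 ∧ (ι c * w i, l) ∈ P.S) := fun i => by
    by_cases hi : w i = 0
    · exact ⟨1, one_ne_zero, fun h => absurd hi h⟩
    · obtain ⟨c, hc, h⟩ := P.scale _ hi
      exact ⟨c, hc, fun _ => h⟩
  choose c hc hl using h
  obtain ⟨i₀, hi₀⟩ := Function.ne_iff.mp hw
  obtain ⟨m, hm, hmin⟩ := Finset.exists_min_image (Finset.univ.filter fun i => w i ≠ 0)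
    (fun i => O.valuation (c i)) ⟨i₀, by simpa using hi₀⟩
  simp only [Finset.mem_filter, Finset.mem_univ, true_and] at hm hmin
  have key : ∀ i, ∃ l : L, (ι (c m) * w i, l) ∈ P.S := fun i => by
    by_cases hi : w i = 0
    · exact ⟨0, by rw [hi, mul_zero]; exact P.zero_mem'⟩
    · obtain ⟨l, -, hl⟩ := hl i hi
      obtain ⟨a, ha⟩ := P.const_le (c := c m * (c i)⁻¹) (by
        rw [map_mul, map_inv₀]
        exact mul_inv_le_one_of_le₀ (hmin i hi) zero_le)
      refine ⟨_, by simpa [mul_assoc, hc i] using P.mul_mem' ha hl⟩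
  choose l hlS using key
  refine ⟨c m, hc m, l, fun h => ?_, hlS⟩
  obtain ⟨l', hl', h'⟩ := hl m hm
  exact hl' ((P.uniq h' (hlS m)).trans (congrFun h m))

variable {I : Type*} {w : I → G} {c c' : F} {l : I → L}

lemma scale_lt (hc : c ≠ 0) (h : ∀ i, (ι c * w i, l i) ∈ P.S)
    (hv : O.valuation c' < O.valuation c) (i) : (ι c' * w i, (0 : L)) ∈ P.S := by
  have h1 : O.valuation (c' * c⁻¹) < 1 := by
    rw [map_mul, map_inv₀, ← div_eq_mul_inv]
    exact (div_lt_one₀ (zero_lt_iff.mpr (by simpa using hc))).mpr hv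
  simpa [mul_assoc, hc] using P.mul_mem' (P.const_lt h1) (h i)

lemma scale_eq (hc : c ≠ 0) (h : ∀ i, (ι c * w i, l i) ∈ P.S) (hl : l ≠ 0)
    (hv : O.valuation c' = O.valuation c) :
    ∃ l' : I → L, l' ≠ 0 ∧ ∀ i, (ι c' * w i, l' i) ∈ P.S := by
  have h1 : O.valuation (c' * c⁻¹) = 1 := by
    rw [map_mul, map_inv₀, hv, mul_inv_cancel₀ (by simpa using hc)]
  obtain ⟨a, ha, h2⟩ := P.const_eq h1
  refine ⟨a • l, smul_ne_zero ha hl, fun i => ?_⟩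
  simpa [mul_assoc, hc] using P.mul_mem' h2 (h i)

end Place
end Place

section Quad
variable {F G L : Type*} [Field F] [Field G] [Field L]
  {O : ValuationSubring F} {ι : F →+* G} {j : IsLocalRing.ResidueField O →+* L}
  (P : Place O ι j)

namespace Place

/-- A valuation ring is integrally closed, so a quadratic equation without roots in `L` has none
in `G`. -/
lemma no_root {a b : G} {a' b' : L} (ha : (a, a') ∈ P.S) (hb : (b, b') ∈ P.S)
    (h : ∀ s : L, s ^ 2 ≠ a' + b' * s) (t : G) : t ^ 2 ≠ a + b * t := by
  intro ht
  have key : ∀ s, (t, s) ∈ P.S → False := fun s hs => by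
    refine h s (P.uniq (g := t ^ 2) ?_ ?_)
    · simpa [sq] using P.mul_mem' hs hs
    · rw [ht]; exact P.add_mem' ha (P.mul_mem' hb hs)
  by_cases h0 : t = 0
  · exact key 0 (h0 ▸ P.zero_mem')
  obtain ⟨c, hc, l, hl, hS⟩ := P.scale t h0
  rcases lt_or_ge (O.valuation c) 1 with hv | hv
  · have h1 := P.const_lt hv
    have h2 : ((ι c * t) * (ι c * t), (0 : L)) ∈ P.S := by
      have e : (ι c * t) * (ι c * t) = ι c * ι c * a + ι c * b * (ι c * t) := by
        linear_combination (ι c) ^ 2 * ht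
      rw [e]
      simpa using P.add_mem' (P.mul_mem' (P.mul_mem' h1 h1) ha)
        (P.mul_mem' (P.mul_mem' h1 hb) hS)
    exact mul_ne_zero hl hl (P.uniq (P.mul_mem' hS hS) h2)
  · obtain ⟨m, hm⟩ := P.const_le (c := c⁻¹) (by
      rw [map_inv₀]; exact inv_le_one_of_one_le₀ hv)
    exact key _ (by simpa [hc] using P.mul_mem' hm hS)

/-- Extension of a place to a quadratic extension that stays inert. -/
def quad {a b : G} {a' b' : L} (ha : (a, a') ∈ P.S) (hb : (b, b') ∈ P.S)
    [Fact (∀ s : G, s ^ 2 ≠ a + b * s)] [Fact (∀ s : L, s ^ 2 ≠ a' + b' * s)] :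
    Place O ((algebraMap G (QuadraticAlgebra G a b)).comp ι)
      ((algebraMap L (QuadraticAlgebra L a' b')).comp j) where
  S :=
    { carrier := {p | (p.1.re, p.2.re) ∈ P.S ∧ (p.1.im, p.2.im) ∈ P.S}
      mul_mem' := fun {p q} hp hq => by
        simp only [Set.mem_setOf_eq, Prod.fst_mul, Prod.snd_mul, QuadraticAlgebra.re_mul,
          QuadraticAlgebra.im_mul] at *
        exact ⟨P.add_mem' (P.mul_mem' hp.1 hq.1) (P.mul_mem' (P.mul_mem' ha hp.2) hq.2),
          P.add_mem' (P.add_mem' (P.mul_mem' hp.1 hq.2) (P.mul_mem' hp.2 hq.1))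
            (P.mul_mem' (P.mul_mem' hb hp.2) hq.2)⟩
      one_mem' := ⟨P.one_mem', P.zero_mem'⟩
      add_mem' := fun {p q} hp hq => ⟨P.add_mem' hp.1 hq.1, P.add_mem' hp.2 hq.2⟩
      zero_mem' := ⟨P.zero_mem', P.zero_mem'⟩
      neg_mem' := fun {p} hp => ⟨P.neg_mem' hp.1, P.neg_mem' hp.2⟩ }
  inj := fun l h => QuadraticAlgebra.ext (P.inj _ h.1) (P.inj _ h.2)
  inv := fun g l h hl => by
    have hn : (g.norm, l.norm) ∈ P.S := by
      rw [QuadraticAlgebra.norm_def, QuadraticAlgebra.norm_def, sub_eq_add_neg, sub_eq_add_neg]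
      exact P.add_mem' (P.add_mem' (P.mul_mem' h.1 h.1) (P.mul_mem' (P.mul_mem' hb h.1) h.2))
        (P.neg_mem' (P.mul_mem' (P.mul_mem' ha h.2) h.2))
    have hi := P.inv _ _ hn (by rwa [Ne, QuadraticAlgebra.norm_eq_zero_iff_eq_zero])
    constructor
    · exact P.mul_mem' hi (P.add_mem' h.1 (P.mul_mem' hb h.2))
    · exact P.mul_mem' hi (P.neg_mem' h.2)
  scale := fun g hg => by
    obtain ⟨c, hc, l, hl, h⟩ := P.normalize (fun i : Bool => if i then g.re else g.im) (by
      intro h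
      exact hg (QuadraticAlgebra.ext (by simpa using congrFun h true)
        (by simpa using congrFun h false)))
    refine ⟨c, hc, ⟨l true, l false⟩, fun h0 => hl ?_, ?_⟩
    · funext i
      cases i
      · exact congrArg QuadraticAlgebra.im h0
      · exact congrArg QuadraticAlgebra.re h0
    · have h1 := h true
      have h2 := h false
      simp only [if_true, Bool.false_eq_true, if_false] at h1 h2
      constructor
      · simpa using h1
      · simpa using h2
  const := fun c => ⟨P.const c, P.zero_mem'⟩

lemma quad_algebraMap {a b : G} {a' b' : L} (ha : (a, a') ∈ P.S) (hb : (b, b') ∈ P.S)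
    [Fact (∀ s : G, s ^ 2 ≠ a + b * s)] [Fact (∀ s : L, s ^ 2 ≠ a' + b' * s)] {g : G} {l : L}
    (h : (g, l) ∈ P.S) : (algebraMap G (QuadraticAlgebra G a b) g,
      algebraMap L (QuadraticAlgebra L a' b') l) ∈ (P.quad ha hb).S := ⟨h, P.zero_mem'⟩

section Gauss
variable {σ G' L' : Type*} [Field G'] [Field L'] [Algebra (MvPolynomial σ G) G']
  [IsFractionRing (MvPolynomial σ G) G'] [Algebra (MvPolynomial σ L) L']
  [IsFractionRing (MvPolynomial σ L) L']

variable (G') in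
variable (σ) in
/-- Polynomials with coefficients in the valuation ring, as elements of `G(σ)`. -/
def toG : MvPolynomial σ P.S →+* G' :=
  (algebraMap (MvPolynomial σ G) G').comp (MvPolynomial.map ((RingHom.fst G L).comp P.S.subtype))

variable (L') in
variable (σ) in
/-- Polynomials with coefficients in the valuation ring, reduced to `L(σ)`. -/
def toL : MvPolynomial σ P.S →+* L' :=
  (algebraMap (MvPolynomial σ L) L').comp (MvPolynomial.map ((RingHom.snd G L).comp P.S.subtype))

lemma fst_injective : Function.Injective ((RingHom.fst G L).comp P.S.subtype) := by
  rw [injective_iff_map_eq_zero]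
  rintro ⟨⟨g, l⟩, h⟩ h0
  obtain rfl : g = 0 := h0
  obtain rfl := P.inj _ h
  rfl

lemma toG_injective : Function.Injective (P.toG σ G') :=
  (IsFractionRing.injective (MvPolynomial σ G) G').comp
    (MvPolynomial.map_injective _ P.fst_injective)

lemma toG_ne {p : MvPolynomial σ P.S} (h : P.toL σ L' p ≠ 0) : P.toG σ G' p ≠ 0 := by
  intro h0
  rw [map_eq_zero_iff _ P.toG_injective] at h0
  exact h (by rw [h0, map_zero])

/-- Every polynomial over `G` can be scaled so as to have a nonzero reduction. -/
lemma exists_lift (p : MvPolynomial σ G) (hp : p ≠ 0) : ∃ c : F, c ≠ 0 ∧ ∃ q : MvPolynomial σ P.S,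
    P.toL σ L' q ≠ 0 ∧ P.toG σ G' q = algebraMap (MvPolynomial σ G) G' (C (ι c) * p) := by
  classical
  obtain ⟨m₀, hm₀⟩ := (MvPolynomial.ne_zero_iff).mp hp
  obtain ⟨c, hc, l, hl, h⟩ := P.normalize (fun m : p.support => coeff m p) (fun h =>
    hm₀ (by simpa using congrFun h ⟨m₀, mem_support_iff.mpr hm₀⟩))
  let q : MvPolynomial σ P.S := ∑ m : p.support, monomial m.1 (⟨(_, l m), h m⟩ : P.S)
  have hq : ∀ m : p.support, coeff m.1 q = (⟨(_, l m), h m⟩ : P.S) := fun m => by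
    simp only [q, coeff_sum, coeff_monomial]
    rw [Finset.sum_eq_single m]
    · simp
    · intro m' _ hm'; rw [if_neg fun h => hm' (Subtype.ext h)]
    · simp
  refine ⟨c, hc, q, ?_, ?_⟩
  · obtain ⟨m, hm⟩ := Function.ne_iff.mp hl
    rw [toL, RingHom.comp_apply, Ne, IsFractionRing.to_map_eq_zero_iff]
    intro h0
    have := congrArg (coeff m.1) h0
    rw [coeff_map, hq] at this
    exact hm (by simpa using this)
  · rw [toG, RingHom.comp_apply]
    congr 1
    rw [show p = ∑ m : p.support, monomial m.1 (coeff m.1 p) by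
      conv_lhs => rw [p.as_sum]
      exact (Finset.sum_coe_sort p.support fun m => monomial m (coeff m p)).symm, Finset.mul_sum]
    simp only [q, map_sum, map_monomial, C_mul_monomial]
    rfl

/-- The Gauss extension of a place to rational function fields. -/
def gauss : Place O (((algebraMap (MvPolynomial σ G) G').comp C).comp ι)
    (((algebraMap (MvPolynomial σ L) L').comp C).comp j) where
  S :=
    { carrier := {g | ∃ p q : MvPolynomial σ P.S, P.toL σ L' q ≠ 0 ∧
        g.1 * P.toG σ G' q = P.toG σ G' p ∧ g.2 * P.toL σ L' q = P.toL σ L' p}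
      mul_mem' := by
        rintro ⟨g, l⟩ ⟨g', l'⟩ ⟨p, q, h0, h1, h2⟩ ⟨p', q', h0', h1', h2'⟩
        refine ⟨p * p', q * q', by rw [map_mul]; exact mul_ne_zero h0 h0', ?_, ?_⟩
        · simp only [map_mul, Prod.mk_mul_mk, ← h1, ← h1']; ring
        · simp only [map_mul, Prod.mk_mul_mk, ← h2, ← h2']; ring
      one_mem' := ⟨1, 1, by simp, by simp, by simp⟩
      add_mem' := by
        rintro ⟨g, l⟩ ⟨g', l'⟩ ⟨p, q, h0, h1, h2⟩ ⟨p', q', h0', h1', h2'⟩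
        refine ⟨p * q' + p' * q, q * q', by rw [map_mul]; exact mul_ne_zero h0 h0', ?_, ?_⟩
        · simp only [map_mul, map_add, Prod.mk_add_mk, ← h1, ← h1']; ring
        · simp only [map_mul, map_add, Prod.mk_add_mk, ← h2, ← h2']; ring
      zero_mem' := ⟨0, 1, by simp, by simp, by simp⟩
      neg_mem' := by
        rintro ⟨g, l⟩ ⟨p, q, h0, h1, h2⟩
        refine ⟨-p, q, h0, ?_, ?_⟩
        · simp only [map_neg, Prod.neg_mk, ← h1]; ring
        · simp only [map_neg, Prod.neg_mk, ← h2]; ring }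
  inj := by
    rintro l ⟨p, q, h0, h1, h2⟩
    simp only [zero_mul] at h1
    rw [eq_comm, map_eq_zero_iff _ P.toG_injective] at h1
    rw [h1, map_zero] at h2
    exact (mul_eq_zero.mp h2).resolve_right h0
  inv := by
    rintro g l ⟨p, q, h0, h1, h2⟩ hl
    have hp : P.toL σ L' p ≠ 0 := by rw [← h2]; exact mul_ne_zero hl h0
    have hg : g ≠ 0 := by
      rintro rfl
      simp only [zero_mul] at h1
      exact P.toG_ne hp h1.symm
    refine ⟨q, p, hp, ?_, ?_⟩
    · simp only [← h1]; field_simp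
    · simp only [← h2]; field_simp
  scale := by
    intro g hg
    obtain ⟨p, q, hq, rfl⟩ := IsFractionRing.div_surjective (A := MvPolynomial σ G) g
    have hq0 : q ≠ 0 := nonZeroDivisors.ne_zero hq
    have hp0 : p ≠ 0 := by rintro rfl; simp at hg
    obtain ⟨c, hc, p', hp', hp''⟩ := P.exists_lift (G' := G') (L' := L') p hp0
    obtain ⟨c', hc', q', hq', hq''⟩ := P.exists_lift (G' := G') (L' := L') q hq0
    refine ⟨c / c', div_ne_zero hc hc', P.toL σ L' p' / P.toL σ L' q', div_ne_zero hp' hq',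
      p', q', hq', ?_, div_mul_cancel₀ _ hq'⟩
    have hqq : algebraMap (MvPolynomial σ G) G' q ≠ 0 := by
      rwa [Ne, IsFractionRing.to_map_eq_zero_iff]
    have hcc : (((algebraMap (MvPolynomial σ G) G').comp C).comp ι) c' ≠ 0 :=
      (map_ne_zero _).mpr hc'
    simp only [hp'', hq'', map_mul, map_div₀]
    simp only [RingHom.comp_apply] at hcc ⊢
    field_simp
  const := fun c => ⟨C ⟨_, P.const c⟩, 1, by simp, by simp [toG], by simp [toL]⟩

lemma gauss_C {g : G} {l : L} (h : (g, l) ∈ P.S) :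
    (algebraMap (MvPolynomial σ G) G' (C g), algebraMap (MvPolynomial σ L) L' (C l)) ∈
      (P.gauss (σ := σ) (G' := G') (L' := L')).S :=
  ⟨C ⟨_, h⟩, 1, by simp, by simp [toG], by simp [toL]⟩

lemma gauss_X (i : σ) :
    (algebraMap (MvPolynomial σ G) G' (X i), algebraMap (MvPolynomial σ L) L' (X i)) ∈
      (P.gauss (σ := σ) (G' := G') (L' := L')).S :=
  ⟨X i, 1, by simp, by simp [toG], by simp [toL]⟩

end Gauss
end Place
end Quad

/-! ### Walking along the Newton polygon -/

section Newton
variable {Γ : Type*} [LinearOrderedCommGroupWithZero Γ]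

/-- A property that passes along each edge of a Newton polygon (with slopes in the divisible
group `Γ`) passes from the initial to the final vertex. -/
lemma newton_chain (hroot : ∀ g : Γ, ∀ n : ℕ, n ≠ 0 → ∃ h, h ^ n = g) (m : ℕ → Γ) (e : ℕ)
    (h0 : m 0 ≠ 0) (he : m e ≠ 0) (htop : ∀ i, e < i → m i = 0) (P : ℕ → Prop) (hP : P 0)
    (step : ∀ i i' ρ, i < i' → ρ ≠ 0 → m i ≠ 0 → m i' ≠ 0 → m i' * ρ ^ i' = m i * ρ ^ i →
      (∀ l, m l * ρ ^ l ≤ m i * ρ ^ i) →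
      (∀ l, l < i ∨ i' < l → m l * ρ ^ l < m i * ρ ^ i) → P i → P i') : P e := by
  classical
  have claim : ∀ k i ρ, e - i = k → i ≤ e → m i ≠ 0 → (∀ l, l < i → m l ≤ m i * ρ ^ (i - l)) →
      (∀ l, i < l → m l * ρ ^ (l - i) < m i) → P i → P e := by
    intro k
    induction k using Nat.strong_induction_on with
    | _ k ih =>
    intro i ρ hk hie hmi hlo hhi hPi
    rcases hie.eq_or_lt with rfl | hlt
    · exact hPi
    have hr : ∀ l, ∃ h : Γ, i < l → h ^ (l - i) = m i / m l := fun l => by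
      by_cases hl : i < l
      · obtain ⟨h, hh⟩ := hroot (m i / m l) (l - i) (by omega)
        exact ⟨h, fun _ => hh⟩
      · exact ⟨0, fun h => absurd h hl⟩
    choose s hs using hr
    obtain ⟨l₀, hl₀, hmin⟩ := Finset.exists_min_image
      ((Finset.Ioc i e).filter fun l => m l ≠ 0) s ⟨e, by simp [hlt, he]⟩
    simp only [Finset.mem_filter, Finset.mem_Ioc] at hl₀ hmin
    obtain ⟨⟨hil₀, hl₀e⟩, hml₀⟩ := hl₀
    set ρ' := s l₀ with hρ'
    have htie : m l₀ * ρ' ^ (l₀ - i) = m i := by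
      rw [hs l₀ hil₀, mul_div_cancel₀ _ hml₀]
    have hρ0 : ρ' ≠ 0 := by
      intro h
      rw [h, zero_pow (by omega), mul_zero] at htie
      exact hmi htie.symm
    have hρρ : ρ < ρ' := by
      refine lt_of_pow_lt_pow_left₀ (l₀ - i) zero_le ?_
      have := hhi l₀ hil₀
      rw [← htie] at this
      exact lt_of_mul_lt_mul_left this zero_le
    have hle : ∀ l, i < l → m l * ρ' ^ (l - i) ≤ m i := by
      intro l hl
      by_cases hml : m l = 0
      · rw [hml, zero_mul]; exact zero_le
      have hle : l ≤ e := by by_contra h; exact hml (htop l (by omega))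
      calc m l * ρ' ^ (l - i) ≤ m l * s l ^ (l - i) := by
            gcongr
            exact hmin l ⟨⟨hl, hle⟩, hml⟩
        _ = m i := by rw [hs l hl, mul_div_cancel₀ _ hml]
    let T := (Finset.Ioc i e).filter fun l => m l * ρ' ^ (l - i) = m i
    have hT : T.Nonempty := ⟨l₀, by simp [T, hil₀, hl₀e, htie]⟩
    set i' := T.max' hT with hi'
    have hi'T : i' ∈ T := T.max'_mem hT
    simp only [T, Finset.mem_filter, Finset.mem_Ioc] at hi'T
    obtain ⟨⟨hii', hi'e⟩, htie'⟩ := hi'T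
    have hmi' : m i' ≠ 0 := by
      intro h; rw [h, zero_mul] at htie'; exact hmi htie'.symm
    have hstrict : ∀ l, i' < l → m l * ρ' ^ (l - i) < m i := by
      intro l hl
      refine (hle l (by omega)).lt_of_ne fun h => ?_
      have hle : l ≤ e := by
        by_contra h'
        rw [htop l (by omega), zero_mul] at h
        exact hmi h.symm
      have := T.le_max' l (by simp [T, h, hle]; omega)
      omega
    have hlostrict : ∀ l, l < i → m l < m i * ρ' ^ (i - l) := fun l hl =>
      (hlo l hl).trans_lt (mul_lt_mul_of_pos_left
        (pow_lt_pow_left₀ hρρ zero_le (by omega)) (zero_lt_iff.mpr hmi))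
    have hpos : ∀ k : ℕ, 0 < ρ' ^ k := fun k => zero_lt_iff.mpr (pow_ne_zero _ hρ0)
    have up : ∀ l, i < l → m l * ρ' ^ l = m l * ρ' ^ (l - i) * ρ' ^ i := fun l hl => by
      rw [mul_assoc, ← pow_add]; congr 2; omega
    have dn : ∀ l, l < i → m i * ρ' ^ i = m i * ρ' ^ (i - l) * ρ' ^ l := fun l hl => by
      rw [mul_assoc, ← pow_add]; congr 2; omega
    have hPi' : P i' := by
      refine step i i' ρ' hii' hρ0 hmi hmi' (by rw [up _ hii', htie']) (fun l => ?_)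
        (fun l hl => ?_) hPi
      · rcases lt_trichotomy l i with h | rfl | h
        · rw [dn l h]; exact mul_le_mul_of_nonneg_right (hlostrict l h).le zero_le
        · exact le_rfl
        · rw [up l h]; exact mul_le_mul_of_nonneg_right (hle l h) zero_le
      · rcases hl with h | h
        · rw [dn l h]; exact mul_lt_mul_of_pos_right (hlostrict l h) (hpos l)
        · rw [up l (by omega)]; exact mul_lt_mul_of_pos_right (hstrict l h) (hpos i)
    refine ih (e - i') (by omega) i' ρ' rfl hi'e hmi' (fun l hl => ?_) (fun l hl => ?_) hPi'
    · rcases lt_trichotomy l i with h | rfl | h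
      · refine (hlostrict l h).le.trans ?_
        rw [← htie', mul_assoc, ← pow_add]
        exact le_of_eq (by congr 2; omega)
      · rw [htie']
      · refine le_of_mul_le_mul_right ?_ (hpos (l - i))
        rw [mul_assoc, ← pow_add, show i' - l + (l - i) = i' - i by omega, htie']
        exact hle l h
    · refine lt_of_mul_lt_mul_right ?_ (zero_le (a := ρ' ^ (i' - i)))
      rw [mul_assoc, ← pow_add, show l - i' + (i' - i) = l - i by omega, htie']
      exact hstrict l hl
  refine claim e 0 0 (by omega) (by omega) h0 (fun l hl => absurd hl (by omega)) (fun l hl => ?_) hP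
  rw [zero_pow (by omega), mul_zero]
  exact zero_lt_iff.mpr h0
end Newton

/-! ### Specialisation of polynomial curves -/

section Bihom
variable {R A : Type*} [CommRing R] [CommRing A] {n r : ℕ}

/-- Bihomogeneity of bidegree `(d, 2)`. -/
def Bihom (d : ℕ) (f : MvPolynomial (Fin (n+1) ⊕ Fin (r+2)) R) : Prop :=
  ∀ m, coeff m f ≠ 0 → (∑ i, m (Sum.inl i)) = d ∧ (∑ j, m (Sum.inr j)) = 2

lemma Bihom.eval₂_smul {d : ℕ} {f : MvPolynomial (Fin (n+1) ⊕ Fin (r+2)) R} (hf : Bihom d f)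
    (φ : R →+* A) (a b : A) (x : Fin (n+1) → A) (z : Fin (r+2) → A) :
    eval₂ φ (Sum.elim (fun i => a * x i) fun k => b * z k) f
      = a ^ d * b ^ 2 * eval₂ φ (Sum.elim x z) f := by
  rw [eval₂_eq', eval₂_eq', Finset.mul_sum]
  refine Finset.sum_congr rfl fun m hm => ?_
  obtain ⟨h1, h2⟩ := hf m (mem_support_iff.mp hm)
  simp only [Fintype.prod_sum_type, Sum.elim_inl, Sum.elim_inr, mul_pow, Finset.prod_mul_distrib,
    Finset.prod_pow_eq_pow_sum, h1, h2]
  ring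

/-- The special form as a polynomial. -/
def spPoly (d : ℕ) (e : Fin (r+2) → J n) (R : Type*) [CommRing R] :
    MvPolynomial (Fin (n+1) ⊕ Fin (r+2)) R :=
  sp d e (lam fun i => X (Sum.inl i)) fun k => X (Sum.inr k)

lemma eval₂_spPoly (d : ℕ) (e : Fin (r+2) → J n) (φ : R →+* A) (x : Fin (n+1) → A)
    (z : Fin (r+2) → A) :
    eval₂ φ (Sum.elim x z) (spPoly d e R) = sp d e (lam x) z := by
  rw [← coe_eval₂Hom, spPoly, map_sp, map_lam]
  simp

lemma lam_coeff (w : Fin (n+1) → Polynomial R) (l : ℕ) (k) :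
    (lam w k).coeff l = lam (fun k => (w k).coeff l) k := by
  refine Fin.cases ?_ (fun k => ?_) k
  · rw [lam_zero, lam_zero, Polynomial.coeff_sub, Polynomial.finset_sum_coeff]
  · rfl
end Bihom

section Chain
variable {F G L : Type*} [Field F] [Field G] [Field L]
  {O : ValuationSubring F} {ι : F →+* G} {j : IsLocalRing.ResidueField O →+* L}
  (P : Place O ι j)

namespace Place

lemma lift_poly (p : Polynomial G) (l : ℕ → L) (h : ∀ i, (p.coeff i, l i) ∈ P.S) (N : ℕ)
    (hp : p.natDegree ≤ N) :
    ∃ q : Polynomial P.S, q.map ((RingHom.fst G L).comp P.S.subtype) = p ∧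
      ∀ i, (q.map ((RingHom.snd G L).comp P.S.subtype)).coeff i = l i := by
  classical
  let q : Polynomial P.S := ∑ i ∈ Finset.range (N+1), Polynomial.monomial i ⟨_, h i⟩
  have hl : ∀ i, N < i → l i = 0 := fun i hi => P.inj _ (by
    have := h i
    rwa [Polynomial.coeff_eq_zero_of_natDegree_lt (by omega)] at this)
  have hq : ∀ i, ((q.coeff i : P.S) : G × L) = (p.coeff i, l i) := by
    intro i
    simp only [q, Polynomial.finset_sum_coeff, Polynomial.coeff_monomial]
    by_cases hi : i ≤ N
    · rw [Finset.sum_eq_single i]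
      · simp
      · intro b _ hb; simp [hb]
      · intro h; exact absurd (Finset.mem_range.mpr (by omega)) h
    · rw [Finset.sum_eq_zero]
      · rw [hl i (by omega), Polynomial.coeff_eq_zero_of_natDegree_lt (by omega)]; rfl
      · intro b hb
        rw [Finset.mem_range] at hb
        rw [if_neg (by omega)]
  refine ⟨q, ?_, fun i => ?_⟩
  · ext i; simp [Polynomial.coeff_map, hq]
  · simp [Polynomial.coeff_map, hq]

/-- The structure map of the valuation ring of a place over the base valuation ring. -/
def theta : O →+* P.S :=
  ((ι.comp O.subtype).prod (j.comp (IsLocalRing.residue O))).codRestrict P.S P.const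

variable {n r d : ℕ} (e : Fin (r+2) → J n)
  (FO : MvPolynomial (Fin (n+1) ⊕ Fin (r+2)) O)

lemma map_eval₂_theta {B : Type*} [CommRing B] (φ : P.S →+* B)
    (x : Fin (n+1) → Polynomial P.S) (z : Fin (r+2) → Polynomial P.S) :
    Polynomial.mapRingHom φ (eval₂ (Polynomial.C.comp P.theta) (Sum.elim x z) FO)
      = eval₂ (Polynomial.C.comp (φ.comp P.theta))
        (Sum.elim (fun i => (x i).map φ) fun k => (z k).map φ) FO := by
  rw [eval₂_comp_left]
  congr 1
  · ext c : 1; simp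
  · funext s; cases s <;> rfl

/-- A relation between polynomials over `G` specialises to `L`. -/
lemma reduce_rel (x : Fin (n+1) → Polynomial P.S) (z : Fin (r+2) → Polynomial P.S)
    (h : eval₂ (Polynomial.C.comp (ι.comp O.subtype))
      (Sum.elim (fun i => (x i).map ((RingHom.fst G L).comp P.S.subtype))
        fun k => (z k).map ((RingHom.fst G L).comp P.S.subtype)) FO = 0) :
    eval₂ (Polynomial.C.comp (j.comp (IsLocalRing.residue O)))
      (Sum.elim (fun i => (x i).map ((RingHom.snd G L).comp P.S.subtype))
        fun k => (z k).map ((RingHom.snd G L).comp P.S.subtype)) FO = 0 := by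
  have h1 : eval₂ (Polynomial.C.comp P.theta) (Sum.elim x z) FO = 0 := by
    refine Polynomial.map_injective _ P.fst_injective ?_
    rw [Polynomial.map_zero, ← h]
    exact P.map_eval₂_theta FO _ x z
  have h2 := P.map_eval₂_theta FO ((RingHom.snd G L).comp P.S.subtype) x z
  rw [h1, map_zero] at h2
  exact h2.symm

/-- `w` is, up to a scalar of `F`, reduced to a nonzero vector where the Pfister form is trivial. -/
def RedTriv (w : Fin (n+1) → G) : Prop :=
  ∃ c : F, c ≠ 0 ∧ ∃ l : Fin (n+1) → L, l ≠ 0 ∧ (∀ i, (ι c * w i, l i) ∈ P.S) ∧ Triv (lam l)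

lemma val_unique {I : Type*} {w : I → G} {c c' : F} {l l' : I → L} (hc : c ≠ 0) (hc' : c' ≠ 0)
    (hl : l ≠ 0) (hl' : l' ≠ 0) (h : ∀ i, (ι c * w i, l i) ∈ P.S)
    (h' : ∀ i, (ι c' * w i, l' i) ∈ P.S) : O.valuation c = O.valuation c' := by
  rcases lt_trichotomy (O.valuation c) (O.valuation c') with hv | hv | hv
  · exact absurd (funext fun i => P.uniq (h i) (P.scale_lt hc' h' hv i)) hl
  · exact hv
  · exact absurd (funext fun i => P.uniq (h' i) (P.scale_lt hc h hv i)) hl'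

/-- One edge of the Newton polygon. -/
lemma edge_step (hn : 0 < n) (hd : n + 2 ≤ 2 * (d / 2)) (he : Function.Injective e)
    (he0 : e 0 = fun _ => false) (hFO : Bihom d FO)
    (hred : MvPolynomial.map (IsLocalRing.residue O) FO = spPoly d e _)
    (x : Fin (n+1) → Polynomial G) (z : Fin (r+2) → Polynomial G) (hz : z ≠ 0)
    (hrel : eval₂ (Polynomial.C.comp (ι.comp O.subtype)) (Sum.elim x z) FO = 0)
    (i i' : ℕ) (hii : i < i') (γ δ : F) (hγ : γ ≠ 0) (hδ : δ ≠ 0) (l : ℕ → Fin (n+1) → L)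
    (hl : ∀ m k, (ι (δ * γ ^ m) * (x k).coeff m, l m k) ∈ P.S) (hli : l i ≠ 0)
    (hl0 : ∀ m, m < i ∨ i' < m → l m = 0) (ht : Triv (lam (l i))) : Triv (lam (l i')) := by
  classical
  let T : Polynomial G →+* Polynomial G :=
    Polynomial.compRingHom (Polynomial.C (ι γ) * Polynomial.X)
  have hT : ∀ (p : Polynomial G) m, (T p).coeff m = p.coeff m * ι γ ^ m := fun p m =>
    Polynomial.comp_C_mul_X_coeff
  have hTd : ∀ p : Polynomial G, (T p).natDegree ≤ p.natDegree := fun p => by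
    rw [Polynomial.natDegree_le_iff_coeff_eq_zero]
    intro m hm
    rw [hT, Polynomial.coeff_eq_zero_of_natDegree_lt hm, zero_mul]
  have hx : ∀ k, ∃ q : Polynomial P.S, q.map ((RingHom.fst G L).comp P.S.subtype)
      = Polynomial.C (ι δ) * T (x k) ∧
      ∀ m, (q.map ((RingHom.snd G L).comp P.S.subtype)).coeff m = l m k := fun k => by
    refine P.lift_poly _ (fun m => l m k) (fun m => ?_) _ le_rfl
    rw [Polynomial.coeff_C_mul, hT]
    convert hl m k using 2
    rw [map_mul, map_pow]; ring
  choose X' hX1 hX2 using hx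
  -- the second block of coordinates is scaled as a whole
  obtain ⟨M, hM⟩ : ∃ M, ∀ k, (z k).natDegree ≤ M :=
    ⟨∑ k, (z k).natDegree, fun k => Finset.single_le_sum (f := fun k => (z k).natDegree)
      (fun _ _ => Nat.zero_le _) (Finset.mem_univ k)⟩
  obtain ⟨k₀, hk₀⟩ := Function.ne_iff.mp hz
  obtain ⟨δ', hδ', lz, hlz, hlzS⟩ := P.normalize
    (fun s : Fin (r+2) × Fin (M+1) => (T (z s.1)).coeff s.2) (fun h => by
      have h1 := congrFun h (k₀, ⟨(z k₀).natDegree, by have := hM k₀; omega⟩)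
      simp only [hT, Pi.zero_apply, Polynomial.coeff_natDegree] at h1
      exact mul_ne_zero (Polynomial.leadingCoeff_ne_zero.mpr hk₀)
        (pow_ne_zero _ ((map_ne_zero ι).mpr hγ)) h1)
  have hzz : ∀ k, ∃ q : Polynomial P.S, q.map ((RingHom.fst G L).comp P.S.subtype)
      = Polynomial.C (ι δ') * T (z k) ∧
      ∀ m, (q.map ((RingHom.snd G L).comp P.S.subtype)).coeff m
        = if hm : m < M + 1 then lz (k, ⟨m, hm⟩) else 0 := fun k => by
    refine P.lift_poly _ _ (fun m => ?_) _ le_rfl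
    rw [Polynomial.coeff_C_mul]
    split_ifs with hm
    · exact hlzS (k, ⟨m, hm⟩)
    · rw [Polynomial.coeff_eq_zero_of_natDegree_lt (by have := hTd (z k); have := hM k; omega),
        mul_zero]
      exact P.zero_mem'
  choose Z' hZ1 hZ2 using hzz
  have hG : eval₂ (Polynomial.C.comp (ι.comp O.subtype))
      (Sum.elim (fun i => (X' i).map ((RingHom.fst G L).comp P.S.subtype))
        fun k => (Z' k).map ((RingHom.fst G L).comp P.S.subtype)) FO = 0 := by
    simp only [hX1, hZ1]
    rw [hFO.eval₂_smul]
    have h1 := congrArg T hrel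
    rw [map_zero, eval₂_comp_left] at h1
    have e1 : T.comp (Polynomial.C.comp (ι.comp O.subtype))
        = Polynomial.C.comp (ι.comp O.subtype) := by
      ext c : 1
      exact Polynomial.C_comp
    have e2 : T ∘ Sum.elim x z = Sum.elim (fun i => T (x i)) fun k => T (z k) := by
      funext s; cases s <;> rfl
    rw [e1, e2] at h1
    rw [h1, mul_zero]
  have hL := P.reduce_rel FO X' Z' hG
  set ζ : Fin (r+2) → Polynomial L := fun k => (Z' k).map ((RingHom.snd G L).comp P.S.subtype)
    with hζdef
  have hζ : ζ ≠ 0 := by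
    obtain ⟨s, hs⟩ := Function.ne_iff.mp hlz
    intro h0
    have h1 := hZ2 s.1 s.2
    rw [dif_pos s.2.2] at h1
    have h2 : (ζ s.1).coeff s.2 = 0 := by rw [h0]; rfl
    exact hs (h1.symm.trans h2)
  let w : Fin (n+1) → Polynomial L := fun k =>
    ∑ m ∈ Finset.range (i' - i + 1), Polynomial.monomial m (l (i + m) k)
  have hw : ∀ k m, (w k).coeff m = l (i + m) k := fun k m => by
    simp only [w, Polynomial.finset_sum_coeff, Polynomial.coeff_monomial]
    rw [Finset.sum_ite_eq']
    split_ifs with hm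
    · rfl
    · rw [hl0 (i + m) (Or.inr (by rw [Finset.mem_range] at hm; omega))]; rfl
  have hXw : (fun k => (X' k).map ((RingHom.snd G L).comp P.S.subtype))
      = fun k => Polynomial.X ^ i * w k := by
    funext k
    ext m
    rw [hX2, Polynomial.coeff_X_pow_mul']
    split_ifs with hm
    · rw [hw]; congr 1; congr 1; omega
    · rw [hl0 m (Or.inl (by omega))]; rfl
  rw [hXw] at hL
  have hL2 : eval₂ (Polynomial.C.comp (j.comp (IsLocalRing.residue O))) (Sum.elim w ζ) FO = 0 := by
    have h1 := hFO.eval₂_smul (Polynomial.C.comp (j.comp (IsLocalRing.residue O)))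
      (Polynomial.X ^ i) 1 w ζ
    simp only [one_mul, one_pow, mul_one] at h1
    rw [hL] at h1
    exact (mul_eq_zero.mp h1.symm).resolve_left (pow_ne_zero _ (pow_ne_zero _ Polynomial.X_ne_zero))
  rw [← RingHom.comp_assoc, ← eval₂_map, hred, eval₂_spPoly] at hL2
  have hc : ∀ m, (fun k => (lam w k).coeff m) = lam (l (i + m)) := fun m => by
    funext k
    rw [lam_coeff]
    congr 1
    funext k
    exact hw k m
  have := edge hn hd e he he0 (lam w) ζ hζ hL2 (i' - i) (fun k => by
      rw [Polynomial.natDegree_le_iff_coeff_eq_zero]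
      intro m hm
      have h1 := congrFun (hc m) k
      rw [hl0 (i + m) (Or.inr (by omega))] at h1
      rw [h1]
      exact Fin.cases (by simp [lam]) (fun _ => rfl) k)
    (by
      by_contra hcon
      push Not at hcon
      exact hli (lam_eq_zero ((hc 0).symm.trans (funext hcon))))
    (by rw [hc]; exact ht)
  rwa [hc, show i + (i' - i) = i' by omega] at this

/-- Along a polynomial curve on the quadric bundle, triviality of the reduced Pfister form
propagates from the lowest to the highest coefficient vector. -/
lemma curve [IsAlgClosed F] (hn : 0 < n) (hd : n + 2 ≤ 2 * (d / 2)) (he : Function.Injective e)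
    (he0 : e 0 = fun _ => false) (hFO : Bihom d FO)
    (hred : MvPolynomial.map (IsLocalRing.residue O) FO = spPoly d e _)
    (x : Fin (n+1) → Polynomial G) (z : Fin (r+2) → Polynomial G) (hz : z ≠ 0)
    (hrel : eval₂ (Polynomial.C.comp (ι.comp O.subtype)) (Sum.elim x z) FO = 0)
    (N : ℕ) (hN : ∀ k, (x k).natDegree ≤ N) (hxN : (fun k => (x k).coeff N) ≠ 0)
    (h0 : P.RedTriv fun k => (x k).coeff 0) : P.RedTriv fun k => (x k).coeff N := by
  classical
  let c : ℕ → Fin (n+1) → G := fun m k => (x k).coeff m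
  have hnorm : ∀ m, ∃ δ : F, δ ≠ 0 ∧ (c m ≠ 0 → ∃ l : Fin (n+1) → L, l ≠ 0 ∧
      ∀ k, (ι δ * c m k, l k) ∈ P.S) := fun m => by
    by_cases hm : c m = 0
    · exact ⟨1, one_ne_zero, fun h => absurd hm h⟩
    · obtain ⟨δ, hδ, h⟩ := P.normalize (c m) hm
      exact ⟨δ, hδ, fun _ => h⟩
  choose δ hδ hδl using hnorm
  let μ : ℕ → O.ValueGroup := fun m => if c m = 0 then 0 else (O.valuation (δ m))⁻¹
  have hv : ∀ {a : F}, a ≠ 0 → O.valuation a ≠ 0 := fun h => by simpa using h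
  have hμ0 : ∀ m, μ m = 0 ↔ c m = 0 := fun m => by
    by_cases hm : c m = 0
    · simp [μ, hm]
    · simp [μ, hm, hδ m]
  have hμ : ∀ m, c m ≠ 0 → μ m = (O.valuation (δ m))⁻¹ := fun m hm => by simp [μ, hm]
  have hc0 : c 0 ≠ 0 := by
    obtain ⟨a, ha, l, hl, hS, -⟩ := h0
    intro h
    refine hl (funext fun k => P.inj _ ?_)
    have h1 : (ι a * c 0 k, l k) ∈ P.S := hS k
    rwa [h, Pi.zero_apply, mul_zero] at h1
  refine newton_chain (fun g m hm => ?_) μ N (by rwa [Ne, hμ0]) (by rwa [Ne, hμ0])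
    (fun m hm => (hμ0 m).mpr (funext fun k =>
      Polynomial.coeff_eq_zero_of_natDegree_lt ((hN k).trans_lt hm)))
    (fun m => P.RedTriv (c m)) h0 ?_
  · obtain ⟨a, rfl⟩ := O.valuation_surjective g
    obtain ⟨b, rfl⟩ := IsAlgClosed.exists_pow_nat_eq a (Nat.pos_of_ne_zero hm)
    exact ⟨O.valuation b, (map_pow _ _ _).symm⟩
  intro i i' ρ hii hρ hi hi' htie hle hlt hPi
  obtain ⟨γ, rfl⟩ := O.valuation_surjective ρ
  have hγ : γ ≠ 0 := by rintro rfl; simp at hρ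
  rw [Ne, hμ0] at hi hi'
  obtain ⟨a, ha, li, hli, hliS, ht⟩ := hPi
  obtain ⟨l₁, hl₁, hl₁S⟩ := hδl i hi
  have hai : μ i = (O.valuation a)⁻¹ := by
    rw [hμ i hi, P.val_unique ha (hδ i) hli hl₁ hliS hl₁S]
  let δ' : F := a * (γ ^ i)⁻¹
  have hδ' : δ' ≠ 0 := mul_ne_zero ha (inv_ne_zero (pow_ne_zero _ hγ))
  have hval : ∀ m, O.valuation (δ' * γ ^ m) * (μ i * O.valuation γ ^ i)
      = O.valuation γ ^ m := fun m => by
    rw [hai]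
    simp only [δ', map_mul, map_inv₀, map_pow]
    have := hv ha
    field_simp
  have hpos : (0 : O.ValueGroup) < μ i * O.valuation γ ^ i := by
    rw [zero_lt_iff, hai]
    exact mul_ne_zero (inv_ne_zero (hv ha)) (pow_ne_zero _ hρ)
  -- comparison of the scaled coefficients with the normalised ones
  have hcmp : ∀ m, c m ≠ 0 → O.valuation (δ m) * (μ m * O.valuation γ ^ m) = O.valuation γ ^ m :=
    fun m hm => by
      rw [hμ m hm, ← mul_assoc, mul_inv_cancel₀ (hv (hδ m)), one_mul]
  have hlex : ∀ m, ∃ l : Fin (n+1) → L, (∀ k, (ι (δ' * γ ^ m) * (x k).coeff m, l k) ∈ P.S) ∧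
      (μ m * O.valuation γ ^ m < μ i * O.valuation γ ^ i → l = 0) ∧
      (c m ≠ 0 → μ m * O.valuation γ ^ m = μ i * O.valuation γ ^ i → l ≠ 0) := by
    intro m
    by_cases hm : c m = 0
    · refine ⟨0, fun k => ?_, fun _ => rfl, fun h => absurd hm h⟩
      rw [show (x k).coeff m = 0 from congrFun hm k, mul_zero]
      exact P.zero_mem'
    obtain ⟨l, hl, hlS⟩ := hδl m hm
    rcases (hle m).lt_or_eq with h | h
    · refine ⟨0, fun k => P.scale_lt (hδ m) hlS ?_ k, fun _ => rfl, fun _ h' => absurd h' h.ne⟩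
      refine lt_of_mul_lt_mul_right ?_ hpos.le
      rw [hval, ← hcmp m hm]
      exact mul_lt_mul_of_pos_left h (zero_lt_iff.mpr (hv (hδ m)))
    · obtain ⟨l', hl', hS'⟩ := P.scale_eq (c' := δ' * γ ^ m) (hδ m) hlS hl
        (mul_right_cancel₀ hpos.ne' (by rw [hval, ← h, hcmp m hm]))
      exact ⟨l', hS', fun h' => absurd h h'.ne, fun _ _ => hl'⟩
  choose l hlS hl0 hl1 using hlex
  have hlieq : l i = li := funext fun k => P.uniq (hlS i k) (by
    have : δ' * γ ^ i = a := by simp [δ', pow_ne_zero i hγ]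
    rw [this]; exact hliS k)
  refine ⟨δ' * γ ^ i', mul_ne_zero hδ' (pow_ne_zero _ hγ), l i', hl1 i' hi' htie, hlS i', ?_⟩
  exact P.edge_step e FO hn hd he he0 hFO hred x z hz hrel i i' hii γ δ' hγ hδ' l hlS
    (by rwa [hlieq]) (fun m hm => hl0 m (hlt m hm)) (by rwa [hlieq])

end Place
end Chain

/-! ### Lines in a parametrising affine space -/

section Top
variable {R : Type*} [CommRing R]

/-- `p` has degree at most `a`, and its coefficient in degree `a` is `c`. -/
def HasTop (p : Polynomial R) (a : ℕ) (c : R) : Prop := p.natDegree ≤ a ∧ p.coeff a = c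

lemma HasTop.mul {p q : Polynomial R} {a b : ℕ} {c c' : R} (hp : HasTop p a c)
    (hq : HasTop q b c') : HasTop (p * q) (a + b) (c * c') :=
  ⟨Polynomial.natDegree_mul_le_of_le hp.1 hq.1, by
    rw [Polynomial.coeff_mul_add_eq_of_natDegree_le hp.1 hq.1, hp.2, hq.2]⟩

lemma hasTop_one : HasTop (1 : Polynomial R) 0 1 := ⟨by simp, by simp⟩

lemma HasTop.pow {p : Polynomial R} {a : ℕ} {c : R} (hp : HasTop p a c) (k : ℕ) :
    HasTop (p ^ k) (k * a) (c ^ k) := by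
  induction k with
  | zero => simpa using hasTop_one
  | succ k ih => rw [pow_succ, pow_succ, add_mul, one_mul]; exact ih.mul hp

lemma HasTop.prod {I : Type*} (s : Finset I) {p : I → Polynomial R} {a : I → ℕ} {c : I → R}
    (hp : ∀ i, HasTop (p i) (a i) (c i)) :
    HasTop (∏ i ∈ s, p i) (∑ i ∈ s, a i) (∏ i ∈ s, c i) := by
  classical
  induction s using Finset.induction_on with
  | empty => simpa using hasTop_one
  | insert i s hi ih =>
    rw [Finset.prod_insert hi, Finset.prod_insert hi, Finset.sum_insert hi]
    exact (hp i).mul ih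

lemma HasTop.sum {I : Type*} (s : Finset I) {p : I → Polynomial R} {a : ℕ} {c : I → R}
    (hp : ∀ i ∈ s, HasTop (p i) a (c i)) :
    HasTop (∑ i ∈ s, p i) a (∑ i ∈ s, c i) :=
  ⟨Polynomial.natDegree_sum_le_of_forall_le _ _ fun i hi => (hp i hi).1, by
    rw [Polynomial.finset_sum_coeff]; exact Finset.sum_congr rfl fun i hi => (hp i hi).2⟩

lemma hasTop_linear (a b : R) : HasTop (Polynomial.C a + Polynomial.C b * Polynomial.X) 1 b :=
  ⟨by compute_degree, by simp [Polynomial.coeff_C]⟩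
end Top

section HC
variable {F G : Type*} [Field F] [Field G] (ι : F →+* G) {D : ℕ} (τ₀ : Fin D → F) (τ : Fin D → G)
  (E : ℕ)

/-- The polynomial `p`, homogenised in degree `E`, along the line `(1 + s : τ₀ + s τ)`. -/
def hcurve (p : MvPolynomial (Fin D) F) : Polynomial G :=
  ∑ m ∈ p.support, Polynomial.C (ι (coeff m p)) * ((1 + Polynomial.X) ^ (E - ∑ l, m l) *
    ∏ l, (Polynomial.C (ι (τ₀ l)) + Polynomial.C (τ l) * Polynomial.X) ^ m l)

lemma hcurve_coeff_zero (p : MvPolynomial (Fin D) F) :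
    (hcurve ι τ₀ τ E p).coeff 0 = ι (eval τ₀ p) := by
  rw [Polynomial.coeff_zero_eq_eval_zero, hcurve, Polynomial.eval_finsetSum, eval_eq', map_sum]
  refine Finset.sum_congr rfl fun m _ => ?_
  simp [Polynomial.eval_prod]

lemma sum_le_totalDegree {p : MvPolynomial (Fin D) F} {m} (hm : m ∈ p.support) :
    ∑ l, m l ≤ p.totalDegree := by
  have := le_totalDegree hm
  rwa [Finsupp.sum_fintype _ _ fun _ => rfl] at this

lemma hcurve_top {p : MvPolynomial (Fin D) F} (hp : p.totalDegree ≤ E) :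
    HasTop (hcurve ι τ₀ τ E p) E (eval₂ ι τ p) := by
  rw [eval₂_eq', hcurve]
  refine HasTop.sum _ fun m hm => ?_
  have h1 := HasTop.prod Finset.univ fun l => (hasTop_linear (ι (τ₀ l)) (τ l)).pow (m l)
  have h2 := (hasTop_linear (1 : G) 1).pow (E - ∑ l, m l)
  have h3 : HasTop (Polynomial.C (ι (coeff m p))) 0 (ι (coeff m p)) := ⟨by simp, by simp⟩
  have h4 := h3.mul (h2.mul h1)
  have hE : 0 + ((E - ∑ l, m l) * 1 + ∑ l, m l * 1) = E := by
    have := (sum_le_totalDegree hm).trans hp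
    simp only [mul_one]; omega
  rw [hE] at h4
  simpa using h4

lemma hcurve_map {H : Type*} [Field H] (f : Polynomial G →+* H)
    (hf : f (1 + Polynomial.X) ≠ 0) {p : MvPolynomial (Fin D) F} (hp : p.totalDegree ≤ E) :
    f (hcurve ι τ₀ τ E p) = f (1 + Polynomial.X) ^ E * eval₂ ((f.comp Polynomial.C).comp ι)
      (fun l => f (Polynomial.C (ι (τ₀ l)) + Polynomial.C (τ l) * Polynomial.X)
        / f (1 + Polynomial.X)) p := by
  rw [eval₂_eq', hcurve, map_sum, Finset.mul_sum]
  refine Finset.sum_congr rfl fun m hm => ?_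
  have hE := (sum_le_totalDegree hm).trans hp
  obtain ⟨k, hk⟩ := Nat.exists_eq_add_of_le hE
  have hk' : E - ∑ l, m l = k := by omega
  simp only [div_pow, Finset.prod_div_distrib, Finset.prod_pow_eq_pow_sum, map_mul, map_pow,
    map_prod]
  rw [hk', hk, pow_add]
  simp only [RingHom.comp_apply]
  field_simp

/-- A bihomogeneous relation between polynomials persists along the line. -/
lemma hcurve_rel {R : Type*} [CommRing R] {n r d : ℕ}
    {f : MvPolynomial (Fin (n+1) ⊕ Fin (r+2)) R} (hf : Bihom d f) (φ : R →+* F)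
    (p : Fin (n+1) → MvPolynomial (Fin D) F) (p' : Fin (r+2) → MvPolynomial (Fin D) F)
    (hp : ∀ i, (p i).totalDegree ≤ E) (hp' : ∀ i, (p' i).totalDegree ≤ E)
    (h : eval₂ (C.comp φ) (Sum.elim p p') f = 0) :
    eval₂ (Polynomial.C.comp (ι.comp φ))
      (Sum.elim (fun i => hcurve ι τ₀ τ E (p i)) fun k => hcurve ι τ₀ τ E (p' k)) f = 0 := by
  let H := FractionRing (Polynomial G)
  let g : Polynomial G →+* H := algebraMap _ _
  have hg : Function.Injective g := IsFractionRing.injective _ _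
  have hX : g (1 + Polynomial.X) ≠ 0 := by
    rw [Ne, map_eq_zero_iff g hg]
    intro h0
    have := congrArg (Polynomial.coeff · 1) h0
    simp [Polynomial.coeff_one] at this
  apply hg
  rw [map_zero, eval₂_comp_left]
  let ev : MvPolynomial (Fin D) F →+* H := eval₂Hom ((g.comp Polynomial.C).comp ι)
      (fun l => g (Polynomial.C (ι (τ₀ l)) + Polynomial.C (τ l) * Polynomial.X)
        / g (1 + Polynomial.X))
  have h1 : g ∘ (Sum.elim (fun i => hcurve ι τ₀ τ E (p i)) fun k => hcurve ι τ₀ τ E (p' k))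
      = Sum.elim (fun i => g (1 + Polynomial.X) ^ E * ev (p i))
        fun k => g (1 + Polynomial.X) ^ E * ev (p' k) := by
    funext s
    rcases s with i | k
    · exact hcurve_map ι τ₀ τ E g hX (hp i)
    · exact hcurve_map ι τ₀ τ E g hX (hp' k)
  rw [h1, hf.eval₂_smul]
  have h2 := congrArg ev h
  rw [map_zero, eval₂_comp_left] at h2
  have h3 : ev.comp (C.comp φ) = g.comp (Polynomial.C.comp (ι.comp φ)) := by
    ext c; simp [ev]
  have h4 : ev ∘ Sum.elim p p' = Sum.elim (fun i => ev (p i)) fun k => ev (p' k) := by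
    funext s; cases s <;> rfl
  rw [h3, h4] at h2
  rw [h2, mul_zero]
end HC

/-! ### No dominant rational parametrisation -/

lemma triv_of_sqrt {L : Type*} [Field L] {n : ℕ} (hn : 0 < n) {v : Fin (n+1) → L} {t : L}
    (h : t ^ 2 = - slot v ⟨0, hn⟩) : Triv v := by
  obtain ⟨k, rfl⟩ : ∃ k, n = k + 1 := ⟨n - 1, by omega⟩
  refine Or.inr fun ha => ?_
  let w : J (k+1) → L := (splitJ L k).symm (t • e0, e0)
  have hw : splitJ L k w = (t • e0, e0) := LinearEquiv.apply_symm_apply _ _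
  have h1 : (fun ε => w (Fin.cons false ε)) = t • e0 := congrArg Prod.fst hw
  have h2 : (fun ε => w (Fin.cons true ε)) = e0 := congrArg Prod.snd hw
  have h3 : pf (slot v) w = 0 := by
    rw [pf_succ, h1, h2, pf_smul, h]
    show - slot v 0 * _ + _ = _
    ring
  have h4 := ha w h3
  have h5 : (e0 : J k → L) = 0 := by rw [← h2, h4]; rfl
  simpa [e0] using congrFun h5 fun _ => false

lemma Triv.of_smul {L : Type*} [Field L] {n : ℕ} {x : Fin (n+1) → L} {μ : L} (hμ : μ ≠ 0)
    (h : Triv (lam fun i => μ * x i)) : Triv (lam x) := by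
  have hl : lam (fun i => μ * x i) = fun i => μ * lam x i := by
    funext i
    refine Fin.cases ?_ (fun j => ?_) i
    · simp only [lam_zero, mul_sub, Finset.mul_sum]
    · simp only [lam_succ]
  rw [hl] at h
  rcases h with ⟨i, hi⟩ | h
  · exact Or.inl ⟨i, (mul_eq_zero.mp hi).resolve_left hμ⟩
  · refine Or.inr fun ha => h fun w hw => ?_
    have hs : slot (fun i => μ * lam x i) = fun i => μ ^ 2 * slot (lam x) i := by
      funext i; simp only [slot]; ring
    have hm : ∀ ε, mon (slot fun i => μ * lam x i) ε
        = μ ^ wt (fun _ => 2) ε * mon (slot (lam x)) ε := fun ε => by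
      rw [hs]; exact mon_mul_pow μ (fun _ => 2) _ ε
    have he : ∀ ε : J n, wt (fun _ => 2) ε = 2 * wt (fun _ => 1) ε := fun ε => by
      simp only [wt, Finset.mul_sum]
      exact Finset.sum_congr rfl fun i _ => by split_ifs <;> rfl
    have h0 := ha (fun ε => μ ^ wt (fun _ => 1) ε * w ε) (by
      rw [← hw, pf, pf]
      refine Finset.sum_congr rfl fun ε _ => ?_
      rw [hm, he, mul_comm 2, pow_mul]; ring)
    funext ε
    exact (mul_eq_zero.mp (congrFun h0 ε)).resolve_left (pow_ne_zero _ hμ)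

section
variable {F G L : Type*} [Field F] [Field G] [Field L]
  {O : ValuationSubring F} {ι : F →+* G} {j : IsLocalRing.ResidueField O →+* L}
  (P : Place O ι j)

namespace Place

lemma of_const {c : F} {l : L} (h : (ι c, l) ∈ P.S) :
    ∃ hc : c ∈ O, l = j (IsLocalRing.residue O ⟨c, hc⟩) := by
  have hc : O.valuation c ≤ 1 := by
    by_contra hlt
    push Not at hlt
    have h1 := P.const_lt (c := c⁻¹) (by rw [map_inv₀]; exact inv_lt_one_of_one_lt₀ hlt)
    have h0 : c ≠ 0 := by rintro rfl; simp at hlt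
    have h2 := P.mul_mem' h h1
    rw [← map_mul, mul_inv_cancel₀ h0, map_one, mul_zero] at h2
    exact one_ne_zero (P.uniq P.one_mem' h2)
  have hO := O.mem_of_valuation_le_one c hc
  exact ⟨hO, P.uniq h (P.const ⟨c, hO⟩)⟩

/-- At points over the ground field all reduced Pfister forms are trivial, because the residue
field has no quadratic extensions. -/
lemma redTriv_const [IsAlgClosed F] {n : ℕ} (hn : 0 < n) (a : Fin (n+1) → F) (ha : a ≠ 0) :
    P.RedTriv fun i => ι (a i) := by
  obtain ⟨c, hc, l, hl, hS⟩ := P.normalize (fun i => ι (a i)) fun h => ha (funext fun i => by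
    simpa using congrFun h i)
  refine ⟨c, hc, l, hl, hS, ?_⟩
  have h1 : ∀ i, ∃ b : O, l i = j (IsLocalRing.residue O b) := fun i => by
    have := hS i
    rw [← map_mul] at this
    obtain ⟨h, h'⟩ := P.of_const this
    exact ⟨_, h'⟩
  choose b hb using h1
  let f : O →+* L := j.comp (IsLocalRing.residue O)
  have h2 : lam l = fun i => f (lam b i) := by
    rw [map_lam]; congr 1; funext i; exact hb i
  let s : O := - slot (lam b) ⟨0, hn⟩
  obtain ⟨t, ht⟩ := IsAlgClosed.exists_pow_nat_eq (s : F) (n := 2) (by norm_num)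
  have htO : t ∈ O := by
    refine O.mem_of_valuation_le_one t ?_
    have h3 : O.valuation t ^ 2 ≤ 1 := by
      rw [← map_pow, ht]; exact O.valuation_le_one s
    exact (pow_le_one_iff (n := 2) (by norm_num)).mp h3
  refine triv_of_sqrt hn (t := f ⟨t, htO⟩) ?_
  rw [← map_pow, show (⟨t, htO⟩ : O) ^ 2 = s from Subtype.ext ht, h2]
  simp only [s, slot, map_neg, map_mul]

variable {n r d : ℕ} (e : Fin (r+2) → J n) (FO : MvPolynomial (Fin (n+1) ⊕ Fin (r+2)) O)

/-- If polynomials `p, p'` over `F` parametrise the hypersurface, and the point with parameters `τ`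
has a reduction `x̄` under the place, then the Pfister form at `x̄` is trivial. -/
lemma no_param [IsAlgClosed F] (hn : 0 < n) (hd : n + 2 ≤ 2 * (d / 2))
    (he : Function.Injective e) (he0 : e 0 = fun _ => false) (hFO : Bihom d FO)
    (hred : MvPolynomial.map (IsLocalRing.residue O) FO = spPoly d e _)
    {D : ℕ} (p : Fin (n+1) → MvPolynomial (Fin D) F) (p' : Fin (r+2) → MvPolynomial (Fin D) F)
    (hp' : p' ≠ 0) (hrel : eval₂ (C.comp O.subtype) (Sum.elim p p') FO = 0)
    (τ : Fin D → G) (q : G) (hq : q ≠ 0) (x : Fin (n+1) → G) (x' : Fin (n+1) → L)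
    (hτ : ∀ i, eval₂ ι τ (p i) = q * x i) (hx : ∀ i, (x i, x' i) ∈ P.S) (hx' : ∀ i, x' i ≠ 0) :
    Triv (lam x') := by
  classical
  have : Infinite F := IsAlgClosed.instInfinite
  have hp0 : p 0 ≠ 0 := by
    intro h
    have := hτ 0
    rw [h, eval₂_zero] at this
    exact mul_ne_zero hq (P.ne_zero (hx 0) (hx' 0)) this.symm
  obtain ⟨k, hk⟩ := Function.ne_iff.mp hp'
  obtain ⟨τ₀, h0⟩ : ∃ τ₀, eval τ₀ (p 0 * p' k) ≠ 0 := by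
    by_contra hcon
    push Not at hcon
    exact mul_ne_zero hp0 hk (MvPolynomial.funext fun t => by rw [hcon, map_zero])
  rw [map_mul] at h0
  let E := (∑ i, (p i).totalDegree) + ∑ i, (p' i).totalDegree
  have hE : ∀ i, (p i).totalDegree ≤ E := fun i =>
    le_add_right (Finset.single_le_sum (f := fun i => (p i).totalDegree)
      (fun _ _ => Nat.zero_le _) (Finset.mem_univ i))
  have hE' : ∀ i, (p' i).totalDegree ≤ E := fun i =>
    le_add_left (Finset.single_le_sum (f := fun i => (p' i).totalDegree)
      (fun _ _ => Nat.zero_le _) (Finset.mem_univ i))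
  have htop : ∀ i, (hcurve ι τ₀ τ E (p i)).coeff E = q * x i := fun i =>
    (hcurve_top ι τ₀ τ E (hE i)).2.trans (hτ i)
  have hmain := P.curve e FO hn hd he he0 hFO hred (fun i => hcurve ι τ₀ τ E (p i))
    (fun i => hcurve ι τ₀ τ E (p' i))
    (fun h => right_ne_zero_of_mul h0 (by
      have := hcurve_coeff_zero ι τ₀ τ E (p' k)
      rw [show hcurve ι τ₀ τ E (p' k) = 0 from congrFun h k, Polynomial.coeff_zero] at this
      exact (map_eq_zero ι).mp this.symm))
    (hcurve_rel ι τ₀ τ E hFO O.subtype p p' hE hE' hrel)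
    E (fun i => (hcurve_top ι τ₀ τ E (hE i)).1)
    (fun h => by
      have := congrFun h 0
      simp only [htop, Pi.zero_apply] at this
      exact mul_ne_zero hq (P.ne_zero (hx 0) (hx' 0)) this)
    (by
      simp only [hcurve_coeff_zero]
      exact P.redTriv_const hn (fun i => eval τ₀ (p i)) fun h =>
        left_ne_zero_of_mul h0 (congrFun h 0))
  simp only [htop] at hmain
  obtain ⟨c, hc, l, hl, hS, ht⟩ := hmain
  have h1 : ∀ i, (ι c * q, l i * (x' i)⁻¹) ∈ P.S := fun i => by
    have h2 := P.mul_mem' (hS i) (P.inv _ _ (hx i) (hx' i))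
    have h3 := P.ne_zero (hx i) (hx' i)
    rwa [mul_assoc, mul_assoc, mul_inv_cancel₀ h3, mul_one] at h2
  have h2 : l = fun i => l 0 * (x' 0)⁻¹ * x' i := by
    funext i
    rw [← P.uniq (h1 i) (h1 0), mul_assoc, inv_mul_cancel₀ (hx' i), mul_one]
  rw [h2] at ht
  refine Triv.of_smul (fun h => hl ?_) ht
  rw [h2]; funext i; rw [h, zero_mul]; rfl
end Place
end

/-! ### The function field of the hypersurface and its place -/

lemma aniso_quad {Q : Type*} [Field Q] [CharZero Q] {n : ℕ} {y : Fin n → Q} {c s : Q} (hc : c ≠ 0)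
    (h : ∀ A B : J n → Q, c * pf y A = s * pf y B → pb y A B = 0 → A = 0 ∧ B = 0) :
    Aniso fun i => algebraMap Q (QuadraticAlgebra Q (-(s * c⁻¹)) 0) (y i) := by
  intro W hW
  have h1 : ∀ ε, mon (fun i => algebraMap Q (QuadraticAlgebra Q (-(s * c⁻¹)) 0) (y i)) ε
      = algebraMap Q _ (mon y ε) := fun ε => (map_mon _ y ε).symm
  have hre : pf y (fun ε => (W ε).re) + (-(s * c⁻¹)) * pf y (fun ε => (W ε).im) = 0 := by
    have := congrArg (QuadraticAlgebra.reₗ _ _) hW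
    simp only [pf, map_sum, h1, sq] at this
    rw [pf, pf, Finset.mul_sum, ← Finset.sum_add_distrib]
    rw [map_zero] at this
    refine Eq.trans ?_ this
    refine Finset.sum_congr rfl fun ε _ => ?_
    simp [QuadraticAlgebra.re_mul]
    ring
  have him : 2 * pb y (fun ε => (W ε).re) (fun ε => (W ε).im) = 0 := by
    have := congrArg (QuadraticAlgebra.imₗ _ _) hW
    simp only [pf, map_sum, h1, sq] at this
    rw [pb, Finset.mul_sum]
    rw [map_zero] at this
    refine Eq.trans ?_ this
    refine Finset.sum_congr rfl fun ε _ => ?_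
    simp [QuadraticAlgebra.im_mul]
    ring
  obtain ⟨hA, hB⟩ := h _ _ (by
    have h2 : c * c⁻¹ = 1 := mul_inv_cancel₀ hc
    linear_combination c * hre + s * pf y (fun ε => (W ε).im) * h2)
    ((mul_eq_zero.mp him).resolve_left two_ne_zero)
  funext ε
  exact QuadraticAlgebra.ext (congrFun hA ε) (congrFun hB ε)

/-- The residue map of a valuation ring, as a place. -/
def Place.base {F : Type*} [Field F] (O : ValuationSubring F) :
    Place O (RingHom.id F) (RingHom.id (IsLocalRing.ResidueField O)) where
  S := (O.subtype.prod (IsLocalRing.residue O)).range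
  inj := by
    rintro l ⟨c, hc⟩
    have h1 : (c : F) = 0 := congrArg Prod.fst hc
    have h2 : IsLocalRing.residue O c = l := congrArg Prod.snd hc
    rw [← h2, show c = 0 from Subtype.ext h1, map_zero]
  inv := by
    rintro g l ⟨c, hc⟩ hl
    have h1 : (c : F) = g := congrArg Prod.fst hc
    have h2 : IsLocalRing.residue O c = l := congrArg Prod.snd hc
    rw [← h2, IsLocalRing.residue_ne_zero_iff_isUnit] at hl
    obtain ⟨u, rfl⟩ := hl
    refine ⟨(u⁻¹ : Oˣ), Prod.ext ?_ ?_⟩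
    · have h3 : ((u : O) : F) * ((u⁻¹ : Oˣ) : O) = 1 := by exact_mod_cast congrArg Subtype.val u.mul_inv
      rw [← h1]; exact eq_inv_of_mul_eq_one_right h3
    · rw [← h2]
      refine eq_inv_of_mul_eq_one_right ?_
      rw [RingHom.prod_apply, ← map_mul, u.mul_inv, map_one]
  scale := fun g hg => ⟨g⁻¹, inv_ne_zero hg, 1, one_ne_zero, 1, by
    rw [map_one, RingHom.id_apply, inv_mul_cancel₀ hg]; rfl⟩
  const := fun c => ⟨c, rfl⟩

section ToPoly
variable {n r : ℕ}

/-- A polynomial viewed as a polynomial in the variable `z₀`. -/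
def toPoly (R : Type*) [CommRing R] : MvPolynomial (Fin (n+1) ⊕ Fin (r+2)) R →+*
    Polynomial (MvPolynomial (Fin (r+1) ⊕ Fin (n+1)) R) :=
  eval₂Hom (Polynomial.C.comp C) (Sum.elim (fun i => Polynomial.C (X (Sum.inr i)))
    (Fin.cons (α := fun _ => Polynomial (MvPolynomial (Fin (r+1) ⊕ Fin (n+1)) R)) Polynomial.X fun j => Polynomial.C (X (Sum.inl j))))

/-- The inverse of `toPoly`. -/
def ofPoly (R : Type*) [CommRing R] : Polynomial (MvPolynomial (Fin (r+1) ⊕ Fin (n+1)) R) →+*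
    MvPolynomial (Fin (n+1) ⊕ Fin (r+2)) R :=
  Polynomial.eval₂RingHom (eval₂Hom C (Sum.elim (fun j => X (Sum.inr j.succ))
    fun i => X (Sum.inl i))) (X (Sum.inr 0))

lemma ofPoly_toPoly {R : Type*} [CommRing R] (g : MvPolynomial (Fin (n+1) ⊕ Fin (r+2)) R) :
    ofPoly R (toPoly R g) = g := by
  have : (ofPoly R).comp (toPoly R) = RingHom.id (MvPolynomial (Fin (n+1) ⊕ Fin (r+2)) R) := by
    refine MvPolynomial.ringHom_ext (fun c => by simp [ofPoly, toPoly]) fun s => ?_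
    rcases s with i | k
    · simp [ofPoly, toPoly]
    · refine Fin.cases ?_ (fun k => ?_) k <;> simp [ofPoly, toPoly]
  exact congrArg (· g) this

lemma natDegree_term_le {B I I' : Type*} [CommRing B] [Fintype I] [Fintype I'] (c : B) (q : I → B)
    (k : I → ℕ) (m : ℕ) (q' : I' → B) (k' : I' → ℕ) :
    (Polynomial.C c * ((∏ i, Polynomial.C (q i) ^ k i) *
      (Polynomial.X ^ m * ∏ i, Polynomial.C (q' i) ^ k' i))).natDegree ≤ m := by
  simp only [← Polynomial.C_pow, ← map_prod]
  exact (Polynomial.natDegree_C_mul_le _ _).trans ((Polynomial.natDegree_C_mul_le _ _).trans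
    ((Polynomial.natDegree_mul_C_le _ _).trans (Polynomial.natDegree_X_pow_le _)))

lemma natDegree_eval₂_le {R B : Type*} [CommRing R] [CommRing B] {d : ℕ}
    {f : MvPolynomial (Fin (n+1) ⊕ Fin (r+2)) R} (hf : Bihom d f) (φ : R →+* B)
    (q : Fin (n+1) → B) (q' : Fin (r+1) → B) :
    (eval₂ (Polynomial.C.comp φ) (Sum.elim (fun i => Polynomial.C (q i))
      (Fin.cons (α := fun _ => Polynomial B) Polynomial.X fun j => Polynomial.C (q' j))) f).natDegree ≤ 2 := by
  rw [eval₂_eq']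
  refine Polynomial.natDegree_sum_le_of_forall_le _ _ fun m hm => ?_
  obtain ⟨-, h2⟩ := hf m (mem_support_iff.mp hm)
  rw [Fin.sum_univ_succ] at h2
  rw [Fintype.prod_sum_type, Fin.prod_univ_succ (n := r+1)]
  simp only [Sum.elim_inl, Sum.elim_inr, Fin.cons_zero, Fin.cons_succ, RingHom.comp_apply]
  have h3 : m (Sum.inr 0) ≤ 2 := by omega
  refine le_trans ?_ h3
  exact natDegree_term_le (φ (coeff m f)) q (fun i => m (Sum.inl i)) (m (Sum.inr 0)) q' (fun j => m (Sum.inr j.succ))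

lemma toPoly_natDegree_le {R : Type*} [CommRing R] {d : ℕ}
    {f : MvPolynomial (Fin (n+1) ⊕ Fin (r+2)) R} (hf : Bihom d f) :
    (toPoly R f).natDegree ≤ 2 :=
  natDegree_eval₂_le hf C (fun i => X (Sum.inr i)) fun j => X (Sum.inl j)

/-- Gauss: divisibility over the fraction field by a polynomial without prime factors in the
factorial domain `D` gives divisibility over `D`. -/
lemma dvd_of_frac {D : Type*} [CommRing D] [IsDomain D] [UniqueFactorizationMonoid D]
    {f : Polynomial D} (hf : ∀ p, Prime p → ¬ Polynomial.C p ∣ f) (s : D) (hs : s ≠ 0) :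
    ∀ g h, Polynomial.C s * g = f * h → f ∣ g := by
  induction s using UniqueFactorizationMonoid.induction_on_prime with
  | h₁ => exact absurd rfl hs
  | h₂ s hu =>
    intro g h hgh
    have : IsUnit (Polynomial.C s) := Polynomial.isUnit_C.mpr hu
    rw [← this.dvd_mul_left, hgh]
    exact dvd_mul_right _ _
  | h₃ s p hs0 hp ih =>
    intro g h hgh
    have hpC : Prime (Polynomial.C p) := Polynomial.prime_C_iff.mpr hp
    have h1 : Polynomial.C p ∣ f * h := ⟨Polynomial.C s * g, by rw [← hgh, map_mul]; ring⟩
    obtain ⟨h', rfl⟩ := (hpC.dvd_or_dvd h1).resolve_left (hf p hp)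
    refine ih hs0 g h' (mul_left_cancel₀ hpC.ne_zero ?_)
    rw [← mul_assoc, ← map_mul, hgh]; ring

end ToPoly

section
variable {n r : ℕ}

/-- Reduction of the equation, as a polynomial in `z₀`, coefficient by coefficient. -/
lemma Place.coeff_mem {F G L : Type*} [Field F] [Field G] [Field L]
    {O : ValuationSubring F} {ι : F →+* G} {j : IsLocalRing.ResidueField O →+* L}
    (P : Place O ι j) (FO : MvPolynomial (Fin (n+1) ⊕ Fin (r+2)) O)
    (x : Fin (n+1) → G) (x' : Fin (n+1) → L) (hx : ∀ i, (x i, x' i) ∈ P.S)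
    (z : Fin (r+1) → G) (z' : Fin (r+1) → L) (hz : ∀ i, (z i, z' i) ∈ P.S) (k : ℕ) :
    ((eval₂ (Polynomial.C.comp (ι.comp O.subtype)) (Sum.elim (fun i => Polynomial.C (x i))
        (Fin.cons (α := fun _ => Polynomial G) Polynomial.X fun i => Polynomial.C (z i))) FO).coeff k,
      (eval₂ (Polynomial.C.comp (j.comp (IsLocalRing.residue O)))
        (Sum.elim (fun i => Polynomial.C (x' i))
        (Fin.cons (α := fun _ => Polynomial L) Polynomial.X fun i => Polynomial.C (z' i))) FO).coeff k)
      ∈ P.S := by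
  let xS : Fin (n+1) → Polynomial P.S := fun i => Polynomial.C ⟨_, hx i⟩
  let zS : Fin (r+2) → Polynomial P.S := Fin.cons (α := fun _ => Polynomial P.S) Polynomial.X
    fun i => Polynomial.C ⟨_, hz i⟩
  have h1 := P.map_eval₂_theta FO ((RingHom.fst G L).comp P.S.subtype) xS zS
  have h2 := P.map_eval₂_theta FO ((RingHom.snd G L).comp P.S.subtype) xS zS
  have e1 : (fun k => (zS k).map ((RingHom.fst G L).comp P.S.subtype)) =
      Fin.cons (α := fun _ => Polynomial G) Polynomial.X fun i => Polynomial.C (z i) := by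
    funext k
    refine Fin.cases ?_ (fun k => ?_) k <;> simp [zS]
  have e2 : (fun k => (zS k).map ((RingHom.snd G L).comp P.S.subtype)) =
      Fin.cons (α := fun _ => Polynomial L) Polynomial.X fun i => Polynomial.C (z' i) := by
    funext k
    refine Fin.cases ?_ (fun k => ?_) k <;> simp [zS]
  have e3 : (fun k => (xS k).map ((RingHom.fst G L).comp P.S.subtype)) =
      fun i => Polynomial.C (x i) := by
    funext k; simp [xS]
  have e4 : (fun k => (xS k).map ((RingHom.snd G L).comp P.S.subtype)) =
      fun i => Polynomial.C (x' i) := by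
    funext k; simp [xS]
  rw [e1, e3] at h1
  rw [e2, e4] at h2
  have e5 : ((RingHom.fst G L).comp P.S.subtype).comp P.theta = ι.comp O.subtype := rfl
  have e6 : ((RingHom.snd G L).comp P.S.subtype).comp P.theta = j.comp (IsLocalRing.residue O) := rfl
  rw [e5] at h1
  rw [e6] at h2
  rw [← h1, ← h2, Polynomial.coe_mapRingHom, Polynomial.coe_mapRingHom, Polynomial.coeff_map,
    Polynomial.coeff_map]
  exact ((eval₂ (Polynomial.C.comp P.theta) (Sum.elim xS zS) FO).coeff k).2

/-- The special equation as a polynomial in `z₀`. -/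
lemma special_poly {κ Q : Type*} [CommRing κ] [CommRing Q] (φ : κ →+* Q) (d : ℕ)
    (e : Fin (r+2) → J n) (x : Fin (n+1) → Q) (z : Fin (r+1) → Q) :
    eval₂ (Polynomial.C.comp φ) (Sum.elim (fun i => Polynomial.C (x i))
        (Fin.cons (α := fun _ => Polynomial Q) Polynomial.X fun i => Polynomial.C (z i)))
        (spPoly d e κ) = Polynomial.C (cc d (lam x)) * Polynomial.X ^ 2 +
          Polynomial.C (∑ j, cf d (lam x) (e j.succ) * z j ^ 2) := by
  rw [eval₂_spPoly, sp, ← map_lam]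
  simp only [Fin.cons_zero, Fin.cons_succ, ← map_cf, ← map_cc, map_sum, map_mul, map_pow]

/-- Evaluation at a root `ω` of the equation in `z₀` has kernel generated by the equation. -/
lemma ker_quad {D K : Type*} [CommRing D] [IsDomain D] [UniqueFactorizationMonoid D] [Field K]
    [Algebra D K] [IsFractionRing D K]
    (f : Polynomial D) (hd : f.natDegree ≤ 2)
    (hf : ∀ p, Prime p → ¬ Polynomial.C p ∣ f)
    (a b : K) (ha : algebraMap _ K (f.coeff 2) ≠ 0)
    (h0 : algebraMap _ K (f.coeff 0) = - (algebraMap _ K (f.coeff 2) * a))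
    (h1 : algebraMap _ K (f.coeff 1) = - (algebraMap _ K (f.coeff 2) * b))
    (g : Polynomial D) :
    Polynomial.eval₂ ((algebraMap K (QuadraticAlgebra K a b)).comp (algebraMap _ K))
      (QuadraticAlgebra.omega : QuadraticAlgebra K a b) g = 0 ↔ f ∣ g := by
  set α := algebraMap D K with hα
  set c := α (f.coeff 2) with hc
  -- the monic equation of `ω`
  let m : Polynomial K := Polynomial.X ^ 2 - (Polynomial.C b * Polynomial.X + Polynomial.C a)
  have hm : m.Monic := Polynomial.monic_X_pow_sub (by compute_degree; norm_num)
  have hmd : m.natDegree = 2 := by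
    simp only [m]; compute_degree!
  have hfm : f.map α = Polynomial.C c * m := by
    ext k
    rw [Polynomial.coeff_map, Polynomial.coeff_C_mul]
    rcases lt_or_ge 2 k with hk | hk
    · rw [Polynomial.coeff_eq_zero_of_natDegree_lt (hd.trans_lt hk),
        Polynomial.coeff_eq_zero_of_natDegree_lt (hmd.trans_lt hk), map_zero, mul_zero]
    · interval_cases k
      · rw [h0]; simp [m]
      · rw [h1]; simp [m, Polynomial.coeff_X_pow, Polynomial.coeff_C]
      · simp [m, Polynomial.coeff_X, Polynomial.coeff_C, hc]
  have hω : ∀ p : Polynomial K, Polynomial.eval₂ (algebraMap K (QuadraticAlgebra K a b))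
      QuadraticAlgebra.omega p = 0 ↔ m ∣ p := by
    have hmω : Polynomial.eval₂ (algebraMap K (QuadraticAlgebra K a b))
        QuadraticAlgebra.omega m = 0 := by
      simp only [m, Polynomial.eval₂_sub, Polynomial.eval₂_add, Polynomial.eval₂_mul,
        Polynomial.eval₂_pow, Polynomial.eval₂_X, Polynomial.eval₂_C, sq,
        QuadraticAlgebra.omega_mul_omega_eq_mk]
      ext <;> simp
    intro p
    constructor
    · intro hp
      rw [← Polynomial.modByMonic_eq_zero_iff_dvd hm]
      have h2 : (p %ₘ m).natDegree < 2 := by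
        rw [← hmd]
        exact Polynomial.natDegree_modByMonic_lt p hm (by intro h; rw [h] at hmd; simp at hmd)
      have h3 : Polynomial.eval₂ (algebraMap K (QuadraticAlgebra K a b))
          QuadraticAlgebra.omega (p %ₘ m) = 0 := by
        have := Polynomial.modByMonic_add_div p m
        rw [← this, Polynomial.eval₂_add, Polynomial.eval₂_mul, hmω, zero_mul, add_zero] at hp
        exact hp
      rw [Polynomial.eq_X_add_C_of_natDegree_le_one (Nat.lt_succ_iff.mp h2)] at h3 ⊢
      simp only [Polynomial.eval₂_add, Polynomial.eval₂_mul, Polynomial.eval₂_X,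
        Polynomial.eval₂_C] at h3
      have hre := congrArg QuadraticAlgebra.re h3
      have him := congrArg QuadraticAlgebra.im h3
      simp at hre him
      rw [hre, him]; simp
    · rintro ⟨q, rfl⟩
      rw [Polynomial.eval₂_mul, hmω, zero_mul]
  rw [← Polynomial.eval₂_map, hω]
  constructor
  · rintro ⟨q, hq⟩
    obtain ⟨s, hs⟩ := IsLocalization.integerNormalization_map_to_map
      (nonZeroDivisors D) (Polynomial.C c⁻¹ * q)
    rw [Algebra.smul_def, ← hα] at hs
    refine dvd_of_frac hf s (nonZeroDivisors.ne_zero s.2) g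
      (IsLocalization.integerNormalization (nonZeroDivisors D) (Polynomial.C c⁻¹ * q)) ?_
    apply Polynomial.map_injective α (IsFractionRing.injective D K)
    rw [Polynomial.map_mul, Polynomial.map_mul, hs, hq, hfm, Polynomial.map_C]
    have hcc : Polynomial.C c * Polynomial.C c⁻¹ = 1 := by
      rw [← Polynomial.C_mul, mul_inv_cancel₀ ha, Polynomial.C_1]
    show Polynomial.C (α s) * (m * q) = Polynomial.C c * m * (Polynomial.C (α s) * (Polynomial.C c⁻¹ * q))
    linear_combination (-Polynomial.C (α s) * m * q) * hcc
  · rintro ⟨h, rfl⟩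
    rw [Polynomial.map_mul, hfm]
    exact ⟨Polynomial.C c * h.map α, by ring⟩
end

universe u

lemma map_toPoly {n r : ℕ} {F K A : Type*} [Field F] [CommRing A] (φ : A →+* F) [Field K]
    (α : MvPolynomial (Fin (r+1) ⊕ Fin (n+1)) F →+* K)
    (FO : MvPolynomial (Fin (n+1) ⊕ Fin (r+2)) A) :
    eval₂ (Polynomial.C.comp (((α.comp C).comp (RingHom.id F)).comp φ))
      (Sum.elim (fun i => Polynomial.C (α (X (Sum.inr i))))
        (Fin.cons (α := fun _ => Polynomial K) Polynomial.X
          fun i => Polynomial.C (α (X (Sum.inl i))))) FO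
      = (toPoly F (MvPolynomial.map φ FO)).map α := by
  have : eval₂Hom (Polynomial.C.comp (((α.comp C).comp (RingHom.id F)).comp φ))
      (Sum.elim (fun i => Polynomial.C (α (X (Sum.inr i))))
        (Fin.cons (α := fun _ => Polynomial K) Polynomial.X
          fun i => Polynomial.C (α (X (Sum.inl i)))))
      = ((Polynomial.mapRingHom α).comp (toPoly F)).comp (MvPolynomial.map φ) := by
    refine MvPolynomial.ringHom_ext (fun c => by simp [toPoly]) fun s => ?_
    rcases s with i | k
    · simp [toPoly]
    · refine Fin.cases ?_ (fun k => ?_) k <;> simp [toPoly]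
  exact congrArg (· FO) this

lemma toPoly_dvd_iff {n r : ℕ} {R : Type*} [CommRing R]
    (f g : MvPolynomial (Fin (n+1) ⊕ Fin (r+2)) R) : toPoly R f ∣ toPoly R g ↔ f ∣ g :=
  ⟨fun h => by simpa only [ofPoly_toPoly] using map_dvd (ofPoly R) h, fun h => map_dvd _ h⟩

lemma Bihom.map {n r d : ℕ} {A B : Type*} [CommRing A] [CommRing B] (φ : A →+* B)
    {f : MvPolynomial (Fin (n+1) ⊕ Fin (r+2)) A} (hf : Bihom d f) :
    Bihom d (MvPolynomial.map φ f) := fun m hm => hf m fun h => hm (by rw [coeff_map, h, map_zero])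

/-- The function field `G` of the affine cone over the hypersurface carries a place to a field `L`
in which the Pfister form at the reduction of the generic point is anisotropic. -/
lemma exists_place_aux {F K Q : Type u} [Field F] (O : ValuationSubring F)
    [CharZero (IsLocalRing.ResidueField O)] {N r d : ℕ} (hr : 0 < r)
    (hd : N + 1 + 2 ≤ 2 * (d / 2)) (e : Fin (r+2) → J (N+1))
    (he : ∀ ε : J N, ∃ j : Fin (r+1), e j.succ = Fin.cons true ε)
    (FO : MvPolynomial (Fin (N+1+1) ⊕ Fin (r+2)) O) (hFO : Bihom d FO)
    (hred : MvPolynomial.map (IsLocalRing.residue O) FO = spPoly d e _)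
    (hprim : ∀ p, Prime p → ¬ Polynomial.C p ∣ toPoly F (MvPolynomial.map O.subtype FO))
    [Field K] [Algebra (MvPolynomial (Fin (r+1) ⊕ Fin (N+1+1)) F) K]
    [IsFractionRing (MvPolynomial (Fin (r+1) ⊕ Fin (N+1+1)) F) K]
    [Field Q] [Algebra (MvPolynomial (Fin (r+1) ⊕ Fin (N+1+1)) (IsLocalRing.ResidueField O)) Q]
    [IsFractionRing (MvPolynomial (Fin (r+1) ⊕ Fin (N+1+1)) (IsLocalRing.ResidueField O)) Q] :
    ∃ (G : Type u) (_ : Field G) (L : Type u) (_ : Field L) (ι : F →+* G)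
      (j : IsLocalRing.ResidueField O →+* L) (P : Place O ι j)
      (ψ : MvPolynomial (Fin (N+1+1) ⊕ Fin (r+2)) F →+* G) (x' : Fin (N+1+1) → L),
      (∀ c, ψ (C c) = ι c) ∧ (∀ g, ψ g = 0 ↔ MvPolynomial.map O.subtype FO ∣ g) ∧
      (∀ i, (ψ (X (Sum.inl i)), x' i) ∈ P.S) ∧ (∀ i, x' i ≠ 0) ∧ ¬ Triv (lam x') ∧
      ψ (X (Sum.inr 1)) ≠ 0 ∧ Infinite L := by
  let κ := IsLocalRing.ResidueField O
  let σ := Fin (r+1) ⊕ Fin (N+1+1)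
  let P₁ := (Place.base O).gauss (σ := σ) (G' := K) (L' := Q)
  let αK := algebraMap (MvPolynomial σ F) K
  let αQ := algebraMap (MvPolynomial σ κ) Q
  have hαK : Function.Injective αK := IsFractionRing.injective _ _
  have hαQ : Function.Injective αQ := IsFractionRing.injective _ _
  have : CharZero Q := charZero_of_injective_ringHom ((αQ.comp C).injective)
  obtain ⟨g1, g2, g3, g4⟩ := generic_facts (κ := κ) (Q := Q) hr hd e he _ _ rfl rfl
  set v : Fin (N+1+1) → Q := lam fun i => αQ (X (Sum.inr i)) with hv
  set c : Q := cc d v with hc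
  set s : Q := ∑ j, cf d v (e j.succ) * αQ (X (Sum.inl j)) ^ 2 with hs
  let f := toPoly F (MvPolynomial.map O.subtype FO)
  have hmem := P₁.coeff_mem FO (fun i => αK (X (Sum.inr i))) (fun i => αQ (X (Sum.inr i)))
    (fun i => Place.gauss_X _ _) (fun i => αK (X (Sum.inl i))) (fun i => αQ (X (Sum.inl i)))
    (fun i => Place.gauss_X _ _)
  have hsp := special_poly (αQ.comp C) d e (fun i => αQ (X (Sum.inr i)))
    fun i => αQ (X (Sum.inl i))
  rw [← hred, eval₂_map] at hsp
  have hf : eval₂ (Polynomial.C.comp (((αK.comp C).comp (RingHom.id F)).comp O.subtype))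
      (Sum.elim (fun i => Polynomial.C (αK (X (Sum.inr i))))
        (Fin.cons (α := fun _ => Polynomial K) Polynomial.X
          fun i => Polynomial.C (αK (X (Sum.inl i))))) FO = f.map αK :=
    map_toPoly O.subtype αK FO
  have hk : ∀ k, (αK (f.coeff k), (Polynomial.C c * Polynomial.X ^ 2 + Polynomial.C s).coeff k)
      ∈ P₁.S := by
    intro k
    have h := hmem k
    rw [← Polynomial.coeff_map, ← hf, ← hsp]
    exact h
  have m2 : (αK (f.coeff 2), c) ∈ P₁.S := by simpa [Polynomial.coeff_C] using hk 2
  have m1 : (αK (f.coeff 1), 0) ∈ P₁.S := by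
    simpa [Polynomial.coeff_C, Polynomial.coeff_X_pow] using hk 1
  have m0 : (αK (f.coeff 0), s) ∈ P₁.S := by simpa using hk 0
  have ha : αK (f.coeff 2) ≠ 0 := P₁.ne_zero m2 g2
  have i2 := P₁.inv _ _ m2 g2
  have hA := P₁.neg_mem' (P₁.mul_mem' m0 i2)
  have hB : (-(αK (f.coeff 1) * (αK (f.coeff 2))⁻¹), (0 : Q)) ∈ P₁.S := by
    simpa using P₁.neg_mem' (P₁.mul_mem' m1 i2)
  have fL : ∀ t : Q, t ^ 2 ≠ -(s * c⁻¹) + 0 * t := by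
    intro t ht
    apply g3 t
    rw [ht]; field_simp; ring
  have : Fact (∀ t : Q, t ^ 2 ≠ -(s * c⁻¹) + 0 * t) := ⟨fL⟩
  have : Fact (∀ t : K, t ^ 2 ≠ -(αK (f.coeff 0) * (αK (f.coeff 2))⁻¹)
    + -(αK (f.coeff 1) * (αK (f.coeff 2))⁻¹) * t) := ⟨P₁.no_root hA hB fL⟩
  let ωψ := Polynomial.eval₂RingHom ((algebraMap K (QuadraticAlgebra K
    (-(αK (f.coeff 0) * (αK (f.coeff 2))⁻¹)) (-(αK (f.coeff 1) * (αK (f.coeff 2))⁻¹)))).comp αK)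
    QuadraticAlgebra.omega
  have hx : ∀ i, (ωψ.comp (toPoly F)) (X (Sum.inl i)) = algebraMap K _ (αK (X (Sum.inr i))) :=
    fun i => by simp [ωψ, toPoly]
  refine ⟨_, inferInstance, _, inferInstance, _, _, P₁.quad hA hB,
    ωψ.comp (toPoly F), fun i => algebraMap Q _ (αQ (X (Sum.inr i))), ?_, ?_, ?_, ?_, ?_, ?_, ?_⟩
  · intro c
    simp [ωψ, toPoly, αK]
  · intro g
    rw [← toPoly_dvd_iff]
    refine ker_quad f (toPoly_natDegree_le (hFO.map _)) hprim _ _ ha ?_ ?_ _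
    · change αK _ = -(αK _ * _)
      field_simp
    · change αK _ = -(αK _ * _)
      field_simp
  · intro i
    rw [hx]
    exact P₁.quad_algebraMap hA hB (Place.gauss_X _ _)
  · intro i
    rw [Ne, map_eq_zero, map_eq_zero_iff _ hαQ]
    exact X_ne_zero _
  · have hl : lam (fun i => algebraMap Q (QuadraticAlgebra Q (-(s * c⁻¹)) 0) (αQ (X (Sum.inr i))))
        = fun i => algebraMap Q _ (v i) := (map_lam _ _).symm
    rw [hl]
    rintro (⟨i, hi⟩ | h)
    · exact g1 i ((map_eq_zero _).mp hi)
    · apply h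
      rw [← slot_map]
      exact aniso_quad g2 g4
  · have : (ωψ.comp (toPoly F)) (X (Sum.inr 1)) = algebraMap K _ (αK (X (Sum.inl 0))) := by
      have e1 : (1 : Fin (r+2)) = Fin.succ 0 := rfl
      rw [e1]
      simp [ωψ, toPoly]
    rw [this, Ne, map_eq_zero, map_eq_zero_iff _ hαK]
    exact X_ne_zero _
  · exact Infinite.of_injective (algebraMap Q _) (algebraMap Q _).injective

/-- The function field `G` of the affine cone over the hypersurface carries a place to a field `L`
in which the Pfister form at the reduction of the generic point is anisotropic. -/
lemma exists_place {F : Type u} [Field F] (O : ValuationSubring F)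
    [CharZero (IsLocalRing.ResidueField O)] {N r d : ℕ} (hr : 0 < r)
    (hd : N + 1 + 2 ≤ 2 * (d / 2)) (e : Fin (r+2) → J (N+1))
    (he : ∀ ε : J N, ∃ j : Fin (r+1), e j.succ = Fin.cons true ε)
    (FO : MvPolynomial (Fin (N+1+1) ⊕ Fin (r+2)) O) (hFO : Bihom d FO)
    (hred : MvPolynomial.map (IsLocalRing.residue O) FO = spPoly d e _)
    (hprim : ∀ p, Prime p → ¬ Polynomial.C p ∣ toPoly F (MvPolynomial.map O.subtype FO)) :
    ∃ (G : Type u) (_ : Field G) (L : Type u) (_ : Field L) (ι : F →+* G)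
      (j : IsLocalRing.ResidueField O →+* L) (P : Place O ι j)
      (ψ : MvPolynomial (Fin (N+1+1) ⊕ Fin (r+2)) F →+* G) (x' : Fin (N+1+1) → L),
      (∀ c, ψ (C c) = ι c) ∧ (∀ g, ψ g = 0 ↔ MvPolynomial.map O.subtype FO ∣ g) ∧
      (∀ i, (ψ (X (Sum.inl i)), x' i) ∈ P.S) ∧ (∀ i, x' i ≠ 0) ∧ ¬ Triv (lam x') ∧
      ψ (X (Sum.inr 1)) ≠ 0 ∧ Infinite L :=
  exists_place_aux O hr hd e he FO hFO hred hprim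
    (K := FractionRing (MvPolynomial (Fin (r+1) ⊕ Fin (N+1+1)) F))
    (Q := FractionRing (MvPolynomial (Fin (r+1) ⊕ Fin (N+1+1)) (IsLocalRing.ResidueField O)))

lemma not_triv_frac {L L' : Type*} [Field L] [Infinite L] [Field L'] {m n : ℕ}
    [Algebra (MvPolynomial (Fin m) L) L'] [IsFractionRing (MvPolynomial (Fin m) L) L']
    (x' : Fin (n+1) → L) (h : ¬ Triv (lam x')) :
    ¬ Triv (lam fun i => algebraMap (MvPolynomial (Fin m) L) L' (C (x' i))) := by
  have hl : (lam fun i => algebraMap (MvPolynomial (Fin m) L) L' (C (x' i)))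
      = fun i => ((algebraMap (MvPolynomial (Fin m) L) L').comp C) (lam x' i) :=
    (map_lam ((algebraMap (MvPolynomial (Fin m) L) L').comp C) x').symm
  rw [hl]
  rintro (⟨i, hi⟩ | hA)
  · exact h (Or.inl ⟨i, (map_eq_zero _).mp hi⟩)
  · apply h
    refine Or.inr fun hA' => hA ?_
    rw [aniso_iff, ← mon_slot_map]
    have hfrac := (((aniso_iff _).mp hA').mvPoly (σ := Fin m)).frac (K := L')
    exact hfrac

/-- The function field of the cone does not become purely transcendental after adjoining
variables. -/
lemma not_stably_rational_aux {F G L G' L' R E T : Type*} [Field F] [IsAlgClosed F] [Field G]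
    [Field L] [Infinite L] {O : ValuationSubring F} {ι : F →+* G}
    {j : IsLocalRing.ResidueField O →+* L} (P : Place O ι j) [CharZero L] {n r d m D : ℕ} (hn : 0 < n)
    (hd : n + 2 ≤ 2 * (d / 2)) (e : Fin (r+2) → J n) (he : Function.Injective e)
    (he0 : e 0 = fun _ => false)
    (FO : MvPolynomial (Fin (n+1) ⊕ Fin (r+2)) O) (hFO : Bihom d FO)
    (hred : MvPolynomial.map (IsLocalRing.residue O) FO = spPoly d e _)
    (ψ : MvPolynomial (Fin (n+1) ⊕ Fin (r+2)) F →+* G) (x' : Fin (n+1) → L)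
    (hψC : ∀ c, ψ (C c) = ι c) (hx : ∀ i, (ψ (X (Sum.inl i)), x' i) ∈ P.S)
    (hx' : ∀ i, x' i ≠ 0) (hT : ¬ Triv (lam x')) (hz : ψ (X (Sum.inr 1)) ≠ 0)
    [CommRing R] [IsDomain R] (π : MvPolynomial (Fin (n+1) ⊕ Fin (r+2)) F →+* R) (χ : R →+* G)
    (hχ : Function.Injective χ) (hχπ : ∀ g, χ (π g) = ψ g)
    (hπ : π (MvPolynomial.map O.subtype FO) = 0)
    [Field E] [Algebra (MvPolynomial (Fin m) R) E] [IsFractionRing (MvPolynomial (Fin m) R) E]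
    [Field T] [Algebra (MvPolynomial (Fin D) F) T] [IsFractionRing (MvPolynomial (Fin D) F) T]
    [Field G'] [Algebra (MvPolynomial (Fin m) G) G'] [IsFractionRing (MvPolynomial (Fin m) G) G']
    [Field L'] [Algebra (MvPolynomial (Fin m) L) L'] [IsFractionRing (MvPolynomial (Fin m) L) L']
    (ev : E ≃+* T) (hev : ∀ c : F, ev (algebraMap (MvPolynomial (Fin m) R) E (C (π (C c))))
      = algebraMap (MvPolynomial (Fin D) F) T (C c)) : False := by
  let αE := algebraMap (MvPolynomial (Fin m) R) E
  let αT := algebraMap (MvPolynomial (Fin D) F) T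
  let αG := algebraMap (MvPolynomial (Fin m) G) G'
  let αL := algebraMap (MvPolynomial (Fin m) L) L'
  have iE : Function.Injective αE := IsFractionRing.injective _ _
  have iT : Function.Injective αT := IsFractionRing.injective _ _
  have iG : Function.Injective αG := IsFractionRing.injective _ _
  have iL : Function.Injective αL := IsFractionRing.injective _ _
  have ig : Function.Injective (αG.comp (MvPolynomial.map χ)) :=
    iG.comp (MvPolynomial.map_injective _ hχ)
  let η : E →+* G' := IsFractionRing.lift (A := MvPolynomial (Fin m) R) ig
  have hη : ∀ a, η (αE a) = αG (MvPolynomial.map χ a) := fun a =>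
    IsFractionRing.lift_algebraMap ig a
  let πT : MvPolynomial (Fin (n+1) ⊕ Fin (r+2)) F →+* T := (ev.toRingHom.comp (αE.comp C)).comp π
  obtain ⟨h, W, hh, hW⟩ := exists_common_den (A := MvPolynomial (Fin D) F) (K := T)
    fun i => πT (X i)
  have hh' : αT h ≠ 0 := fun h0 => hh (iT (h0.trans (map_zero _).symm))
  have hηT : ∀ g, η (ev.symm (πT g)) = αG (C (ψ g)) := by
    intro g
    change η (ev.symm (ev (αE (C (π g))))) = _
    rw [ev.symm_apply_apply, hη, map_C, hχπ]
  have hτ : ∀ b, eval₂ ((αG.comp C).comp ι) (fun l => η (ev.symm (αT (X l)))) b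
      = η (ev.symm (αT b)) := by
    intro b
    have : eval₂Hom ((αG.comp C).comp ι) (fun l => η (ev.symm (αT (X l))))
        = (η.comp ev.symm.toRingHom).comp αT := by
      refine MvPolynomial.ringHom_ext (fun c => ?_) fun s => ?_
      · rw [coe_eval₂Hom, eval₂_C]
        change αG (C (ι c)) = η (ev.symm (αT (C c)))
        rw [← hψC, ← hηT]
        exact congrArg (fun t => η (ev.symm t)) (hev c)
      · rw [coe_eval₂Hom, eval₂_X]; rfl
    exact congrArg (· b) this
  refine not_triv_frac (m := m) (L' := L') x' hT ((P.gauss (σ := Fin m) (G' := G')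
    (L' := L')).no_param e FO hn hd he he0 hFO hred (fun i => W (Sum.inl i))
    (fun k => W (Sum.inr k)) ?_ ?_ (fun l => η (ev.symm (αT (X l)))) (η (ev.symm (αT h))) ?_
    (fun i => αG (C (ψ (X (Sum.inl i))))) _ ?_ ?_ ?_)
  · intro h0
    have h1 := hW (Sum.inr 1)
    rw [show W (Sum.inr 1) = 0 from congrFun h0 1, map_zero] at h1
    have h2 : πT (X (Sum.inr 1)) = 0 := (mul_eq_zero.mp h1).resolve_left hh'
    have h3 := hηT (X (Sum.inr 1))
    rw [h2, map_zero, map_zero] at h3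
    exact hz (C_injective _ _ (iG (h3.symm.trans (by simp))))
  · apply iT
    rw [map_zero, eval₂_comp_left]
    have e1 : αT ∘ Sum.elim (fun i => W (Sum.inl i)) (fun k => W (Sum.inr k))
        = Sum.elim (fun i => αT h * πT (X (Sum.inl i))) fun k => αT h * πT (X (Sum.inr k)) := by
      funext s
      rcases s with i | k
      · exact (hW _).symm
      · exact (hW _).symm
    have e2 : αT.comp (C.comp O.subtype) = (πT.comp C).comp O.subtype := by
      ext c
      exact (hev c).symm
    have e3 : Sum.elim (fun i => πT (X (Sum.inl i))) (fun k => πT (X (Sum.inr k)))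
        = πT ∘ X := by
      funext s; rcases s with i | k <;> rfl
    rw [e1, e2, hFO.eval₂_smul, e3, ← eval₂_map, ← eval₂_comp_left, eval₂_eta]
    have : πT (MvPolynomial.map O.subtype FO) = 0 := by
      change ev (αE (C (π _))) = 0
      rw [hπ]; simp
    rw [this, mul_zero]
  · rw [Ne, map_eq_zero, map_eq_zero]; exact hh'
  · intro i
    rw [hτ, ← hηT, ← map_mul, ← map_mul]
    exact congrArg (fun t => η (ev.symm t)) (hW _).symm
  · intro i
    exact Place.gauss_C _ (hx i)
  · intro i h0
    exact hx' i (C_injective _ _ (iL (h0.trans (by simp))))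

/-! ### The generic equation is primitive as a polynomial in `z₀` -/

section Primitive
variable {N s d : ℕ}

/-- The part of the monomial `m` that does not involve `z₀`. -/
def cofac {n r : ℕ} (R : Type*) [CommRing R] (m : (Fin (n+1) ⊕ Fin (r+2)) →₀ ℕ) :
    MvPolynomial (Fin (r+1) ⊕ Fin (n+1)) R :=
  (∏ i, X (Sum.inr i) ^ m (Sum.inl i)) * ∏ j : Fin (r+1), X (Sum.inl j) ^ m (Sum.inr j.succ)

lemma toPoly_coeff {n r : ℕ} {R : Type*} [CommRing R] (F : MvPolynomial (Fin (n+1) ⊕ Fin (r+2)) R)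
    (b : ℕ) : (toPoly R F).coeff b =
      ∑ m ∈ F.support, if m (Sum.inr 0) = b then C (coeff m F) * cofac R m else 0 := by
  have : toPoly R F = ∑ m ∈ F.support,
      Polynomial.C (C (coeff m F) * cofac R m) * Polynomial.X ^ m (Sum.inr 0) := by
    rw [toPoly, coe_eval₂Hom, eval₂_eq']
    refine Finset.sum_congr rfl fun m _ => ?_
    rw [Fintype.prod_sum_type, Fin.prod_univ_succ (n := r+1)]
    simp only [Sum.elim_inl, Sum.elim_inr, Fin.cons_zero, Fin.cons_succ, cofac, map_mul, map_prod,
      map_pow, RingHom.comp_apply]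
    ring
  rw [this, Polynomial.finset_sum_coeff]
  refine Finset.sum_congr rfl fun m _ => ?_
  rw [Polynomial.coeff_C_mul, Polynomial.coeff_X_pow]
  by_cases h : m (Sum.inr 0) = b
  · simp [h]
  · simp [h, Ne.symm h]

lemma totalDegree_cofac {n r : ℕ} {R : Type*} [CommRing R] [Nontrivial R]
    (m : (Fin (n+1) ⊕ Fin (r+2)) →₀ ℕ) : (cofac R m).totalDegree ≤
      (∑ i, m (Sum.inl i)) + ∑ j : Fin (r+1), m (Sum.inr j.succ) := by
  refine (totalDegree_mul _ _).trans (add_le_add ?_ ?_)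
  · refine (totalDegree_finset_prod _ _).trans (Finset.sum_le_sum fun i _ => ?_)
    rw [totalDegree_X_pow]
  · refine (totalDegree_finset_prod _ _).trans (Finset.sum_le_sum fun i _ => ?_)
    rw [totalDegree_X_pow]

lemma totalDegree_coeff_two {n r : ℕ} {R : Type*} [CommRing R] [Nontrivial R]
    {F : MvPolynomial (Fin (n+1) ⊕ Fin (r+2)) R} (hF : Bihom d F) :
    ((toPoly R F).coeff 2).totalDegree ≤ d := by
  rw [toPoly_coeff]
  refine totalDegree_finsetSum_le fun m hm => ?_
  split_ifs with h
  · obtain ⟨h1, h2⟩ := hF m (mem_support_iff.mp hm)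
    rw [Fin.sum_univ_succ, h] at h2
    refine (totalDegree_mul _ _).trans ?_
    have := totalDegree_cofac (R := R) m
    rw [totalDegree_C]
    omega
  · simp

/-- Restriction to `x = (t, 1, 0, …, 0)`, `z = (z₀, 1, 0, …, 0)`. -/
def line (R : Type*) [CommRing R] :
    MvPolynomial (Fin (s+1+1) ⊕ Fin (N+1+1)) R →+* Polynomial R :=
  eval₂Hom Polynomial.C (Sum.elim
    (Fin.cons (α := fun _ => Polynomial R) 1 fun _ => 0)
    (Fin.cons (α := fun _ => Polynomial R) Polynomial.X
      (Fin.cons (α := fun _ => Polynomial R) 1 fun _ => 0)))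

/-- The exponent of `x₀^a x₁^{d-a} z₀^b z₁^{2-b}`. -/
def mab (N s d a b : ℕ) : (Fin (N+1+1) ⊕ Fin (s+1+2)) →₀ ℕ :=
  Finsupp.single (Sum.inl 0) a + Finsupp.single (Sum.inl 1) (d - a) +
    Finsupp.single (Sum.inr 0) b + Finsupp.single (Sum.inr 1) (2 - b)

lemma mab_inl_zero (a b : ℕ) : mab N s d a b (Sum.inl 0) = a := by
  simp [mab, Finsupp.single_apply]

lemma mab_inr_zero (a b : ℕ) : mab N s d a b (Sum.inr 0) = b := by
  simp [mab, Finsupp.single_apply]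

lemma mab_inl_one (a b : ℕ) : mab N s d a b (Sum.inl 1) = d - a := by
  simp [mab, Finsupp.single_apply]

lemma mab_inr_one (a b : ℕ) : mab N s d a b (Sum.inr 1) = 2 - b := by
  simp [mab, Finsupp.single_apply]

lemma mab_inl_succ (a b : ℕ) (i : Fin N) : mab N s d a b (Sum.inl i.succ.succ) = 0 := by
  have h1 : (1 : Fin (N+1+1)) ≠ i.succ.succ := by
    rw [← Fin.succ_zero_eq_one]
    exact fun h => Fin.succ_ne_zero i (Fin.succ_injective _ h).symm
  simp [mab, Finsupp.single_apply, h1, (Fin.succ_ne_zero _).symm]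

lemma mab_inr_succ (a b : ℕ) (i : Fin (s+1)) : mab N s d a b (Sum.inr i.succ.succ) = 0 := by
  have h1 : (1 : Fin (s+1+2)) ≠ i.succ.succ := by
    rw [← Fin.succ_zero_eq_one]
    exact fun h => Fin.succ_ne_zero i (Fin.succ_injective _ h).symm
  simp [mab, Finsupp.single_apply, h1, (Fin.succ_ne_zero _).symm]

lemma sum_inl_mab {a b : ℕ} (ha : a ≤ d) : ∑ i, mab N s d a b (Sum.inl i) = d := by
  rw [Fin.sum_univ_succ, Fin.sum_univ_succ, Finset.sum_eq_zero fun i _ => mab_inl_succ a b i,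
    Fin.succ_zero_eq_one, mab_inl_zero, mab_inl_one]
  omega

lemma sum_inr_mab {a b : ℕ} (hb : b ≤ 2) : ∑ i, mab N s d a b (Sum.inr i) = 2 := by
  rw [Fin.sum_univ_succ, Fin.sum_univ_succ, Finset.sum_eq_zero fun i _ => mab_inr_succ a b i,
    Fin.succ_zero_eq_one, mab_inr_zero, mab_inr_one]
  omega

lemma line_cofac_eq {R : Type*} [CommRing R] (m : (Fin (N+1+1) ⊕ Fin (s+1+2)) →₀ ℕ) :
    line R (cofac R m) = Polynomial.X ^ m (Sum.inl 0) *
      (∏ i : Fin N, 0 ^ m (Sum.inl i.succ.succ)) * ∏ i : Fin (s+1), 0 ^ m (Sum.inr i.succ.succ) := by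
  rw [cofac, Fin.prod_univ_succ, Fin.prod_univ_succ (n := N),
    Fin.prod_univ_succ (n := s+1)]
  simp [line]

lemma line_cofac_mab {R : Type*} [CommRing R] (a b : ℕ) :
    line R (cofac R (mab N s d a b)) = Polynomial.X ^ a := by
  rw [line_cofac_eq]
  simp only [mab_inl_succ, mab_inr_succ, mab_inl_zero, pow_zero, Finset.prod_const_one, mul_one]

lemma line_cofac {R : Type*} [CommRing R] {m : (Fin (N+1+1) ⊕ Fin (s+1+2)) →₀ ℕ}
    (h1 : (∑ i, m (Sum.inl i)) = d) (h2 : (∑ j, m (Sum.inr j)) = 2)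
    (hm : m ≠ mab N s d (m (Sum.inl 0)) (m (Sum.inr 0))) :
    line R (cofac R m) = 0 := by
  rw [line_cofac_eq]
  by_cases ha : ∀ i : Fin N, m (Sum.inl i.succ.succ) = 0
  swap
  · push Not at ha
    obtain ⟨i, hi⟩ := ha
    rw [Finset.prod_eq_zero (Finset.mem_univ i) (zero_pow hi)]; simp
  by_cases hb : ∀ i : Fin (s+1), m (Sum.inr i.succ.succ) = 0
  swap
  · push Not at hb
    obtain ⟨i, hi⟩ := hb
    rw [Finset.prod_eq_zero (Finset.mem_univ i) (zero_pow hi), mul_zero]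
  refine absurd (Finsupp.ext fun k => ?_) hm
  rw [Fin.sum_univ_succ, Fin.sum_univ_succ, Finset.sum_eq_zero fun i _ => ha i,
    Fin.succ_zero_eq_one] at h1
  rw [Fin.sum_univ_succ, Fin.sum_univ_succ, Finset.sum_eq_zero fun i _ => hb i,
    Fin.succ_zero_eq_one] at h2
  rcases k with k | k
  · refine Fin.cases ?_ (fun k => Fin.cases ?_ (fun k => ?_) k) k
    · rw [mab_inl_zero]
    · rw [Fin.succ_zero_eq_one, mab_inl_one]; omega
    · rw [mab_inl_succ, ha]
  · refine Fin.cases ?_ (fun k => Fin.cases ?_ (fun k => ?_) k) k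
    · rw [mab_inr_zero]
    · rw [Fin.succ_zero_eq_one, mab_inr_one]; omega
    · rw [mab_inr_succ, hb]

lemma line_coeff {R : Type*} [CommRing R]
    {F : MvPolynomial (Fin (N+1+1) ⊕ Fin (s+1+2)) R} (hF : Bihom d F) (a b : ℕ) :
    (line R ((toPoly R F).coeff b)).coeff a = if a ≤ d then coeff (mab N s d a b) F else 0 := by
  rw [toPoly_coeff, map_sum, Polynomial.finset_sum_coeff]
  have key : ∀ m ∈ F.support, (line R (if m (Sum.inr 0) = b then C (coeff m F) * cofac R m else 0)).coeff a
      = if m = mab N s d a b then coeff m F else 0 := by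
    intro m hm
    obtain ⟨h1, h2⟩ := hF m (mem_support_iff.mp hm)
    have hC : ∀ c, line R (C c : MvPolynomial (Fin (s+1+1) ⊕ Fin (N+1+1)) R) = Polynomial.C c :=
      fun c => by simp [line]
    by_cases h : m = mab N s d (m (Sum.inl 0)) (m (Sum.inr 0))
    · by_cases hb : m (Sum.inr 0) = b
      · rw [if_pos hb, map_mul, hC, Polynomial.coeff_C_mul]
        nth_rw 2 [h]
        rw [line_cofac_mab, Polynomial.coeff_X_pow]
        by_cases ha : m (Sum.inl 0) = a
        · rw [ha, hb] at h
          simp [ha, ← h]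
        · rw [if_neg (Ne.symm ha), if_neg, mul_zero]
          rintro rfl
          exact ha (mab_inl_zero _ _)
      · rw [if_neg hb, if_neg]
        · simp
        · rintro rfl
          exact hb (mab_inr_zero _ _)
    · rw [if_neg (c := m = _)]
      · split_ifs
        · rw [map_mul, line_cofac h1 h2 h]; simp
        · simp
      · intro h'
        rw [h', mab_inl_zero, mab_inr_zero] at h
        exact h rfl
  rw [Finset.sum_congr rfl key, Finset.sum_ite_eq']
  by_cases hc : coeff (mab N s d a b) F = 0
  · simp [hc]
  · have := (hF _ hc).1
    have ha : a ≤ d := by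
      rw [← this]
      calc a = mab N s d a b (Sum.inl 0) := (mab_inl_zero _ _).symm
        _ ≤ _ := Finset.single_le_sum (f := fun i => mab N s d a b (Sum.inl i))
          (fun i _ => Nat.zero_le _) (Finset.mem_univ 0)
    rw [if_pos (mem_support_iff.mpr hc), if_pos ha]

lemma natDegree_line_le {R : Type*} [CommRing R] [Nontrivial R] (q : MvPolynomial (Fin (s+1+1) ⊕ Fin (N+1+1)) R) :
    (line R q).natDegree ≤ q.totalDegree := by
  have h := MvPolynomial.aeval_natDegree_le (n := 1) q le_rfl (Sum.elim
    (Fin.cons (α := fun _ => Polynomial R) 1 fun _ => 0)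
    (Fin.cons (α := fun _ => Polynomial R) Polynomial.X
      (Fin.cons (α := fun _ => Polynomial R) 1 fun _ => 0)) :
      Fin (s+1+1) ⊕ Fin (N+1+1) → Polynomial R) (by
    rintro (k | k)
    · refine Fin.cases ?_ (fun k => ?_) k <;> simp
    · refine Fin.cases ?_ (fun k => Fin.cases ?_ (fun k => ?_) k) k <;> simp)
  rw [mul_one] at h
  exact h

/-- Monomials of bidegree `(d, 2)`. -/
abbrev Mon (n r d : ℕ) : Type :=
  {m : (Fin (n+1) ⊕ Fin (r+2)) →₀ ℕ // (∑ i, m (Sum.inl i)) = d ∧ (∑ j, m (Sum.inr j)) = 2}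

/-- If the coefficients are algebraically independent, the restrictions to the line
`x = (t, 1, 0, …, 0)` of the coefficients of `z₀²` and of `z₁²` have no common root. -/
lemma no_common_root {k : Type*} [Field k] [Algebra ℚ k]
    {F : MvPolynomial (Fin (N+1+1) ⊕ Fin (s+1+2)) k} (hF : Bihom d F)
    (hind : AlgebraicIndependent ℚ fun m : Mon (N+1) (s+1) d => coeff m.1 F) (t : k)
    (h2 : (line k ((toPoly k F).coeff 2)).eval t = 0)
    (h0 : (line k ((toPoly k F).coeff 0)).eval t = 0) : False := by
  let M : ∀ a b, a ≤ d → b ≤ 2 → Mon (N+1) (s+1) d := fun a b ha hb =>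
    ⟨mab N s d a b, sum_inl_mab ha, sum_inr_mab hb⟩
  let m0 := M 0 0 (Nat.zero_le _) (Nat.zero_le _)
  let S := Algebra.adjoin ℚ ((fun m : Mon (N+1) (s+1) d => coeff m.1 F) '' {m | m ≠ m0})
  have hdeg : ∀ b, (line k ((toPoly k F).coeff b)).natDegree < d + 1 := fun b => by
    rw [Nat.lt_succ_iff, Polynomial.natDegree_le_iff_coeff_eq_zero]
    intro a ha
    rw [line_coeff hF, if_neg (by omega)]
  have hmem : ∀ a b (ha : a ≤ d) (hb : b ≤ 2), (a ≠ 0 ∨ b ≠ 0) → coeff (mab N s d a b) F ∈ S := by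
    intro a b ha hb hab
    refine Algebra.subset_adjoin ⟨M a b ha hb, ?_, rfl⟩
    intro h
    have h' : mab N s d a b = mab N s d 0 0 := congrArg Subtype.val h
    have e1 := congrArg (· (Sum.inl 0)) h'
    have e2 := congrArg (· (Sum.inr 0)) h'
    simp only [mab_inl_zero, mab_inr_zero] at e1 e2
    omega
  rw [Polynomial.eval_eq_sum_range' (hdeg 2)] at h2
  rw [Polynomial.eval_eq_sum_range' (hdeg 0)] at h0
  have ht : IsAlgebraic S t := by
    let p : Polynomial S := ∑ a : Fin (d+1), Polynomial.monomial (a : ℕ)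
      ⟨coeff (mab N s d a 2) F, hmem a 2 (Nat.lt_succ_iff.mp a.2) le_rfl (Or.inr two_ne_zero)⟩
    refine ⟨p, fun hp => ?_, ?_⟩
    · have h := congrArg (Polynomial.coeff · d) hp
      simp only [p, Polynomial.finset_sum_coeff, Polynomial.coeff_monomial,
        Polynomial.coeff_zero] at h
      rw [Finset.sum_eq_single (Fin.last d)] at h
      · rw [if_pos (Fin.val_last d)] at h
        exact hind.ne_zero (M d 2 le_rfl le_rfl) (congrArg Subtype.val h)
      · intro b _ hb
        rw [if_neg]
        exact fun h => hb (Fin.ext h)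
      · intro h; exact absurd (Finset.mem_univ _) h
    · rw [← h2, Finset.sum_range]
      simp only [p, map_sum, Polynomial.aeval_monomial]
      refine Finset.sum_congr rfl fun a _ => ?_
      rw [line_coeff hF, if_pos (Nat.lt_succ_iff.mp a.2)]
      rfl
  refine hind.transcendental_adjoin (s := {m | m ≠ m0}) (i := m0) (by simp) ?_
  change IsAlgebraic S _
  rw [Finset.sum_range_succ'] at h0
  have e : coeff m0.1 F = - ∑ a ∈ Finset.range d,
      (line k ((toPoly k F).coeff 0)).coeff (a+1) * t ^ (a+1) := by
    rw [pow_zero, mul_one, line_coeff hF 0, if_pos (Nat.zero_le _)] at h0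
    exact eq_neg_of_add_eq_zero_right h0
  rw [e]
  refine IsAlgebraic.neg (Finset.sum_induction _ (IsAlgebraic S) (fun _ _ h h' => h.add h')
    isAlgebraic_zero fun a ha => ?_)
  rw [Finset.mem_range] at ha
  refine IsAlgebraic.mul ?_ (ht.pow _)
  rw [line_coeff hF, if_pos (by omega)]
  exact isAlgebraic_algebraMap (⟨_, hmem (a+1) 0 (by omega) (Nat.zero_le _)
    (Or.inl (by omega))⟩ : S)

/-- The generic equation has no prime factor free of `z₀`. -/
lemma prim {k : Type*} [Field k] [IsAlgClosed k] [Algebra ℚ k]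
    {F : MvPolynomial (Fin (N+1+1) ⊕ Fin (s+1+2)) k} (hF : Bihom d F)
    (hind : AlgebraicIndependent ℚ fun m : Mon (N+1) (s+1) d => coeff m.1 F)
    (p : MvPolynomial (Fin (s+1+1) ⊕ Fin (N+1+1)) k) (hp : Prime p) :
    ¬ Polynomial.C p ∣ toPoly k F := by
  intro hdvd
  rw [Polynomial.C_dvd_iff_dvd_coeff] at hdvd
  obtain ⟨g, hg⟩ := hdvd 2
  have hlead : (line k ((toPoly k F).coeff 2)).coeff d ≠ 0 := by
    rw [line_coeff hF, if_pos le_rfl]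
    exact hind.ne_zero (⟨mab N s d d 2, sum_inl_mab le_rfl, sum_inr_mab le_rfl⟩ :
      Mon (N+1) (s+1) d)
  have h1 : d ≤ (line k ((toPoly k F).coeff 2)).natDegree := Polynomial.le_natDegree_of_ne_zero hlead
  have hA : line k ((toPoly k F).coeff 2) ≠ 0 := fun h => hlead (by rw [h]; simp)
  have h2 := totalDegree_coeff_two hF
  have hg0 : g ≠ 0 := by
    rintro rfl
    rw [hg] at hA; simp at hA
  rw [hg, map_mul] at hA h1
  rw [Polynomial.natDegree_mul (left_ne_zero_of_mul hA) (right_ne_zero_of_mul hA)] at h1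
  rw [hg, totalDegree_mul_of_isDomain hp.ne_zero hg0] at h2
  have h3 := natDegree_line_le p
  have h4 := natDegree_line_le g
  have hpos : p.totalDegree ≠ 0 := by
    intro h0
    rw [totalDegree_eq_zero_iff_eq_C] at h0
    apply hp.not_unit
    have : coeff 0 p ≠ 0 := fun h => hp.ne_zero (by rw [h0, h, C_0])
    rw [h0]
    exact (isUnit_iff_ne_zero.mpr this).map C
  obtain ⟨t, ht⟩ := IsAlgClosed.exists_root (line k p) (by
    rw [Polynomial.degree_eq_natDegree (left_ne_zero_of_mul hA)]
    norm_cast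
    omega)
  have hroot : ∀ b, (line k ((toPoly k F).coeff b)).eval t = 0 := fun b => by
    obtain ⟨q, hq⟩ := hdvd b
    rw [hq, map_mul, Polynomial.eval_mul, ht.eq_zero, zero_mul]
  exact no_common_root hF hind t (hroot 2) (hroot 0)
end Primitive

/-! ### The special equation has bidegree `(d, 2)` -/

section SpBihom
variable {n r d : ℕ} {R : Type*} [CommRing R]

/-- The bidegree of the variables. -/
def bw : Fin (n+1) ⊕ Fin (r+2) → ℕ × ℕ := Sum.elim (fun _ => (1, 0)) fun _ => (0, 1)

lemma bihom_of_weighted {f : MvPolynomial (Fin (n+1) ⊕ Fin (r+2)) R}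
    (hf : IsWeightedHomogeneous bw f (d, 2)) : Bihom d f := by
  intro m hm
  have h := hf hm
  rw [Finsupp.weight_apply, Finsupp.sum_fintype _ _ (by simp)] at h
  simp only [Fintype.sum_sum_type, bw, Sum.elim_inl, Sum.elim_inr] at h
  have h1 := congrArg Prod.fst h
  have h2 := congrArg Prod.snd h
  simp [Prod.fst_sum, Prod.snd_sum] at h1 h2
  exact ⟨h1, h2⟩

lemma IsWeightedHomogeneous.pow' {σ M : Type*} [AddCommMonoid M] {w : σ → M}
    {f : MvPolynomial σ R} {a b : M} {k : ℕ} (hf : IsWeightedHomogeneous w f a) (h : k • a = b) :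
    IsWeightedHomogeneous w (f ^ k) b := h ▸ hf.pow k

lemma weighted_sum {σ M ι : Type*} [AddCommMonoid M] {w : σ → M} (s : Finset ι)
    {f : ι → MvPolynomial σ R} {a : M} (hf : ∀ i ∈ s, IsWeightedHomogeneous w (f i) a) :
    IsWeightedHomogeneous w (∑ i ∈ s, f i) a :=
  (weightedHomogeneousSubmodule R w a).sum_mem hf

lemma bihom_spPoly (hd : n + 2 ≤ 2 * (d / 2)) (e : Fin (r+2) → J n) : Bihom d (spPoly d e R) := by
  apply bihom_of_weighted
  set u : Fin (n+1) → MvPolynomial (Fin (n+1) ⊕ Fin (r+2)) R :=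
    lam fun i => X (Sum.inl i) with hu
  have hX : ∀ i, IsWeightedHomogeneous bw
      (X (Sum.inl i) : MvPolynomial (Fin (n+1) ⊕ Fin (r+2)) R) (1, 0) := fun i =>
    isWeightedHomogeneous_X R bw (Sum.inl i)
  have hz : ∀ k, IsWeightedHomogeneous bw
      (X (Sum.inr k) ^ 2 : MvPolynomial (Fin (n+1) ⊕ Fin (r+2)) R) (0, 2) := fun k =>
    IsWeightedHomogeneous.pow' (isWeightedHomogeneous_X R bw (Sum.inr k)) (by simp [bw])
  have hU : ∀ i, IsWeightedHomogeneous bw (u i) (1, 0) := by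
    intro i
    refine Fin.cases ?_ (fun i => ?_) i
    · rw [hu, lam_zero]
      exact (hX 0).sub (weighted_sum _ fun i _ => hX _)
    · exact hX _
  have hS : IsWeightedHomogeneous bw (∑ i, u i) (1, 0) := weighted_sum _ fun i _ => hU _
  have hcc : IsWeightedHomogeneous bw (cc d u) (d, 0) := by
    have h1 := IsWeightedHomogeneous.pow' (hU (Fin.last n)) (k := d - 2 * (d / 2))
      (b := (d - 2 * (d / 2), 0)) (by simp)
    have h2 := IsWeightedHomogeneous.pow' hS (k := 2 * (d / 2))
      (b := (2 * (d / 2), 0)) (by simp)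
    have h3 := IsWeightedHomogeneous.pow' (hU (Fin.last n)) (k := 2 * (d / 2) - n - 2)
      (b := (2 * (d / 2) - n - 2, 0)) (by simp)
    have h4 := IsWeightedHomogeneous.prod Finset.univ u (fun _ => ((1, 0) : ℕ × ℕ)) fun i _ => hU i
    have h5 := (hS.mul h3).mul h4
    have e5 : (1, 0) + (2 * (d / 2) - n - 2, 0) + ∑ _i : Fin (n+1), ((1, 0) : ℕ × ℕ)
        = (2 * (d / 2), 0) := by
      simp; omega
    rw [e5] at h5
    have h6 := h1.mul (h2.add h5)
    have e6 : ((d - 2 * (d / 2), 0) : ℕ × ℕ) + (2 * (d / 2), 0) = (d, 0) := by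
      simp; omega
    rw [e6] at h6
    exact h6
  have hcf : ∀ ε, IsWeightedHomogeneous bw (cf d u ε) (d, 0) := by
    intro ε
    have h1 := IsWeightedHomogeneous.pow' (hU (Fin.last n)) (k := d - sz ε)
      (b := (d - sz ε, 0)) (by simp)
    have h2 : IsWeightedHomogeneous bw (mon (fun i => u i.castSucc) ε)
        (∑ i, if ε i then ((1, 0) : ℕ × ℕ) else 0) := by
      refine IsWeightedHomogeneous.prod Finset.univ _ _ fun i _ => ?_
      split_ifs
      · exact hU _
      · exact isWeightedHomogeneous_one R _
    have h3 := h1.mul h2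
    have e3 : ((d - sz ε, 0) : ℕ × ℕ) + (∑ i, if ε i then ((1, 0) : ℕ × ℕ) else 0) = (d, 0) := by
      have := sz_le ε
      have : (∑ i, if ε i then ((1, 0) : ℕ × ℕ) else 0) = (sz ε, 0) := by
        ext
        · simp [sz, Prod.fst_sum, apply_ite Prod.fst]
        · simp [Prod.snd_sum, apply_ite Prod.snd]
      rw [this]; simp; omega
    rw [e3] at h3
    exact h3
  have hfin : ∀ c k, IsWeightedHomogeneous bw c (d, 0) → IsWeightedHomogeneous bw
      (c * X (Sum.inr k) ^ 2 : MvPolynomial (Fin (n+1) ⊕ Fin (r+2)) R) (d, 2) := fun c k hc => by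
    simpa using hc.mul (hz k)
  exact (hfin _ _ hcc).add (weighted_sum _ fun j _ => hfin _ _ (hcf _))

lemma map_spPoly {S : Type*} [CommRing S] (φ : R →+* S) (e : Fin (r+2) → J n) :
    MvPolynomial.map φ (spPoly d e R) = spPoly d e S := by
  rw [spPoly, map_sp, map_lam]
  simp [spPoly]
end SpBihom

/-! ### Degeneration of the generic equation to the special one -/

/-- Algebraically independent elements of `K` lie in a valuation ring in which they reduce to
prescribed rational numbers (Chevalley). -/
lemma exists_valuationSubring {K ι : Type*} [Field K] [Algebra ℚ K] (c : ι → K)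
    (hc : AlgebraicIndependent ℚ c) (a : ι → ℚ) :
    ∃ O : ValuationSubring K, ∃ _ : CharZero (IsLocalRing.ResidueField O),
      ∃ cO : ι → O, (∀ i, (cO i : K) = c i) ∧
        ∃ φ : ℚ →+* IsLocalRing.ResidueField O, ∀ i, IsLocalRing.residue O (cO i) = φ (a i) := by
  let A : Subring K := (Algebra.adjoin ℚ (Set.range c)).toSubring
  let g : A →+* ℚ := (aeval a : MvPolynomial ι ℚ →ₐ[ℚ] ℚ).toRingHom.comp
    hc.aevalEquiv.symm.toAlgHom.toRingHom
  obtain ⟨O, hAO, hO⟩ := Ideal.image_subset_nonunits_valuationSubring (RingHom.ker g)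
    (RingHom.ker_ne_top g)
  let q : ℚ →+* O := ((Subring.inclusion hAO).comp
    (algebraMap ℚ (Algebra.adjoin ℚ (Set.range c))) : ℚ →+* O.toSubring)
  have hq : ∀ t, (q t : K) = algebraMap ℚ K t := fun t => rfl
  have hcA : ∀ i, c i ∈ Algebra.adjoin ℚ (Set.range c) := fun i =>
    Algebra.subset_adjoin (Set.mem_range_self i)
  refine ⟨O, charZero_of_injective_ringHom ((IsLocalRing.residue O).comp q).injective,
    fun i => ⟨c i, hAO (hcA i)⟩, fun i => rfl, (IsLocalRing.residue O).comp q, fun i => ?_⟩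
  rw [RingHom.comp_apply, ← sub_eq_zero, ← map_sub, IsLocalRing.residue_eq_zero_iff]
  have h : (⟨c i, hcA i⟩ - algebraMap ℚ _ (a i) : Algebra.adjoin ℚ (Set.range c)) ∈ RingHom.ker g := by
    have hX : hc.aevalEquiv.symm ⟨c i, hcA i⟩ = X i := by
      rw [AlgEquiv.symm_apply_eq]
      apply Subtype.ext
      exact ((hc.algebraMap_aevalEquiv (X i)).trans (aeval_X _ _)).symm
    rw [RingHom.mem_ker]
    change aeval a (hc.aevalEquiv.symm (⟨c i, hcA i⟩ - algebraMap ℚ _ (a i))) = 0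
    rw [map_sub, map_sub, hX, aeval_X, AlgEquiv.commutes, AlgHom.commutes]
    exact sub_self _
  have h2 : (((⟨c i, hAO (hcA i)⟩ - q (a i) : O)) : K) ∈ O.nonunits := hO ⟨_, h, rfl⟩
  exact O.coe_mem_nonunits_iff.mp h2

/-- The generic equation lifts to a valuation ring over which it reduces to the special one. -/
lemma exists_degeneration {K : Type*} [Field K] [Algebra ℚ K] {n r d : ℕ}
    (hd : n + 2 ≤ 2 * (d / 2)) (e : Fin (r+2) → J n)
    (F : MvPolynomial (Fin (n+1) ⊕ Fin (r+2)) K) (hF : Bihom d F)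
    (hind : AlgebraicIndependent ℚ fun m : Mon n r d => coeff m.1 F) :
    ∃ O : ValuationSubring K, ∃ _ : CharZero (IsLocalRing.ResidueField O),
      ∃ FO : MvPolynomial (Fin (n+1) ⊕ Fin (r+2)) O, MvPolynomial.map O.subtype FO = F ∧
        Bihom d FO ∧ MvPolynomial.map (IsLocalRing.residue O) FO = spPoly d e _ := by
  obtain ⟨O, h0, cO, hcO, φ, hφ⟩ := exists_valuationSubring _ hind
    fun m => coeff m.1 (spPoly d e ℚ)
  have hrange : F ∈ Set.range (MvPolynomial.map O.subtype) := by
    rw [mem_range_map_iff_coeffs_subset]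
    intro t ht
    obtain ⟨m, hm, rfl⟩ := mem_coeffs_iff.mp ht
    exact ⟨cO ⟨m, hF m (mem_support_iff.mp hm)⟩, hcO _⟩
  obtain ⟨FO, hFO⟩ := hrange
  have hB : Bihom d FO := by
    intro m hm
    refine hF m ?_
    rw [← hFO, coeff_map]
    exact fun h => hm (Subtype.ext h)
  refine ⟨O, h0, FO, hFO, hB, ?_⟩
  rw [← map_spPoly φ]
  ext m
  rw [coeff_map, coeff_map]
  by_cases hm : (∑ i, m (Sum.inl i)) = d ∧ (∑ j, m (Sum.inr j)) = 2
  · rw [← hφ ⟨m, hm⟩]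
    congr 1
    apply Subtype.ext
    rw [hcO, ← hFO, coeff_map]
    rfl
  · rw [show coeff m FO = 0 from not_not.mp fun h => hm (hB m h),
      show coeff m (spPoly d e ℚ) = 0 from not_not.mp fun h => hm (bihom_spPoly hd e m h),
      map_zero, map_zero]

/-! ### Indexing the special quadric bundle -/

/-- An indexing of some square-free monomials, starting with `1` and containing all multiples of
the first variable. -/
lemma exists_index {N r : ℕ} (h1 : 2 ^ N ≤ r + 1) (h2 : r + 2 ≤ 2 ^ (N+1)) :
    ∃ e : Fin (r+2) → J (N+1), Function.Injective e ∧ (e 0 = fun _ => false) ∧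
      ∀ ε : J N, ∃ j : Fin (r+1), e j.succ = Fin.cons true ε := by
  classical
  let T : Finset (J (N+1)) := Finset.univ.image fun ε : J N => (Fin.cons true ε : J (N+1))
  let T' : Finset (J (N+1)) := Finset.univ.erase fun _ => false
  have hT : T.card ≤ r + 1 := by
    refine Finset.card_image_le.trans ?_
    simpa [J] using h1
  have hT' : r + 1 ≤ T'.card := by
    rw [Finset.card_erase_of_mem (Finset.mem_univ _)]
    simp [J]
    omega
  have hTT : T ⊆ T' := by
    intro ε hε
    obtain ⟨ε', _, rfl⟩ := Finset.mem_image.mp hε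
    refine Finset.mem_erase.mpr ⟨fun h => ?_, Finset.mem_univ _⟩
    have := congrFun h 0
    simp at this
  obtain ⟨U, hTU, hUT, hU⟩ := Finset.exists_subsuperset_card_eq hTT hT hT'
  let f := U.equivFinOfCardEq hU
  refine ⟨Fin.cons (α := fun _ => J (N+1)) (fun _ => false) fun j => (f.symm j).1, ?_, rfl, ?_⟩
  · rw [Fin.cons_injective_iff]
    constructor
    · rintro ⟨j, hj⟩
      exact (Finset.mem_erase.mp (hUT (f.symm j).2)).1 hj
    · exact Subtype.val_injective.comp f.symm.injective
  · intro ε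
    refine ⟨f ⟨Fin.cons true ε, hTU (Finset.mem_image_of_mem _ (Finset.mem_univ ε))⟩, ?_⟩
    rw [Fin.cons_succ, f.symm_apply_apply]

/-! ### The very general hypersurface -/

instance (n r d : ℕ) : Finite (Mon n r d) := by
  refine Set.Finite.to_subtype (Set.Finite.subset (Set.finite_Iic
    (Finsupp.equivFunOnFinite.symm fun _ : Fin (n+1) ⊕ Fin (r+2) => d + 2)) ?_)
  rintro m ⟨h1, h2⟩
  intro k
  rw [Finsupp.equivFunOnFinite_symm_apply_apply]
  rcases k with i | i
  · have := Finset.single_le_sum (f := fun i => m (Sum.inl i)) (fun i _ => Nat.zero_le _)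
      (Finset.mem_univ i)
    omega
  · have := Finset.single_le_sum (f := fun i => m (Sum.inr i)) (fun i _ => Nat.zero_le _)
      (Finset.mem_univ i)
    omega

lemma exists_coeff {n r d : ℕ} (c : Mon n r d → ℂ) :
    ∃ F : BidegSpace n r d, ∀ m : Mon n r d, coeff m.1 F.1 = c m := by
  classical
  have := Fintype.ofFinite (Mon n r d)
  let F : BiAmb n r := ∑ m : Mon n r d, monomial m.1 (c m)
  have hF : ∀ k, coeff k F = ∑ m : Mon n r d, if m.1 = k then c m else 0 := fun k => by
    simp [F, coeff_sum, coeff_monomial]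
  refine ⟨⟨F, fun k hk => ?_⟩, fun m => ?_⟩
  · rw [hF] at hk
    obtain ⟨m, _, hm⟩ := Finset.exists_ne_zero_of_sum_ne_zero hk
    have : m.1 = k := by
      by_contra h
      exact hm (if_neg h)
    exact this ▸ m.2
  · change coeff m.1 F = _
    rw [hF, Finset.sum_eq_single m]
    · simp
    · intro b _ hb
      exact if_neg fun h => hb (Subtype.ext h)
    · simp

/-- A very general equation has algebraically independent coefficients. -/
lemma veryGenerally_of_indep {n r d : ℕ} {Q : BidegSpace n r d → Prop}
    (h : ∀ F, AlgebraicIndependent ℚ (fun m : Mon n r d => coeff m.1 F.1) → Q F) :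
    VeryGenerallyOn (bidegCoords n r d) Q := by
  classical
  have : Nonempty {p : MvPolynomial (Mon n r d) ℚ // p ≠ 0} := ⟨1, one_ne_zero⟩
  have : Countable (MvPolynomial (Mon n r d) ℚ) := by
    rw [← Cardinal.mk_le_aleph0_iff]
    refine MvPolynomial.cardinalMk_le_max.trans ?_
    simp [Cardinal.mk_le_aleph0_iff]
  obtain ⟨p, hp⟩ := exists_surjective_nat {p : MvPolynomial (Mon n r d) ℚ // p ≠ 0}
  refine ⟨fun k => {F | aeval (fun m : Mon n r d => coeff m.1 F.1) (p k).1 = 0}, fun k => ⟨?_, ?_⟩,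
    fun F hF => h F ?_⟩
  · refine ⟨{fun F => aeval (fun m : Mon n r d => coeff m.1 F.1) (p k).1}, ?_, by simp⟩
    rw [Set.singleton_subset_iff, SetLike.mem_coe]
    generalize (p k).1 = q
    induction q using MvPolynomial.induction_on with
    | C a =>
      have : (fun F : BidegSpace n r d => aeval (fun m : Mon n r d => coeff m.1 F.1) (C a))
          = algebraMap ℂ (BidegSpace n r d → ℂ) (a : ℂ) := by
        funext F; simp
      rw [this]
      exact Subalgebra.algebraMap_mem _ _
    | add a b ha hb =>
      simp only [map_add]
      exact Subalgebra.add_mem _ ha hb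
    | mul_X a m ha =>
      simp only [map_mul, aeval_X]
      exact Subalgebra.mul_mem _ ha (Algebra.subset_adjoin ⟨m.1, rfl⟩)
  · intro huniv
    apply (p k).2
    apply MvPolynomial.map_injective (algebraMap ℚ ℂ) (algebraMap ℚ ℂ).injective
    rw [map_zero]
    refine MvPolynomial.funext fun c => ?_
    obtain ⟨F, hF⟩ := exists_coeff c
    have := Set.eq_univ_iff_forall.mp huniv F
    simp only [hF, Set.mem_ofPred_eq] at this
    rw [eval_map, map_zero]
    exact this
  · rw [algebraicIndependent_iff]
    intro q hq
    by_contra hq0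
    obtain ⟨k, hk⟩ := hp ⟨q, hq0⟩
    exact hF k (by simpa [hk] using hq)

/-- A hypersurface whose coefficients are algebraically independent is integral and not stably
rational. -/
lemma indep_not_stably_rational {N s d : ℕ} (h1 : 2 ^ N ≤ s + 1 + 1)
    (h2 : s + 1 + 2 ≤ 2 ^ (N+1)) (hd : N + 1 + 2 ≤ 2 * (d / 2)) (F : BidegSpace (N+1) (s+1) d)
    (hind : AlgebraicIndependent ℚ (fun m : Mon (N+1) (s+1) d => coeff m.1 F.1)) :
    IsDomain (BiConeRing F) ∧ ¬ IsStablyRationalSpec (BiConeRing F) := by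
  obtain ⟨e, he, he0, heT⟩ := exists_index h1 h2
  have hF : Bihom d F.1 := F.2
  obtain ⟨O, hchar, FO, hFO, hB, hred⟩ := exists_degeneration hd e F.1 hF hind
  obtain ⟨G, _, L, _, ι, j, P, ψ, x', hψC, hker, hx, hx', hT, hz, hinf⟩ :=
    exists_place O (Nat.succ_pos s) hd e heT FO hB hred (by
      rw [hFO]; exact prim hF hind)
  rw [hFO] at hker
  let π : BiAmb (N+1) (s+1) →+* BiConeRing F := Ideal.Quotient.mk (Ideal.span {F.1})
  have hspan : ∀ a ∈ Ideal.span {F.1}, ψ a = 0 := fun a ha =>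
    (hker a).mpr (Ideal.mem_span_singleton.mp ha)
  let χ : BiConeRing F →+* G := Ideal.Quotient.lift (Ideal.span {F.1}) ψ hspan
  have hχπ : ∀ g, χ (π g) = ψ g := fun g => Ideal.Quotient.lift_mk _ _ _
  have hχ : Function.Injective χ := by
    rw [injective_iff_map_eq_zero]
    intro a ha
    obtain ⟨g, rfl⟩ : ∃ g, π g = a := Ideal.Quotient.mk_surjective a
    rw [hχπ, hker] at ha
    exact Ideal.Quotient.eq_zero_iff_mem.mpr (Ideal.mem_span_singleton.mpr ha)
  have hdom : IsDomain (BiConeRing F) := hχ.isDomain χ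
  have : CharZero L := charZero_of_injective_ringHom j.injective
  refine ⟨hdom, ?_⟩
  rintro ⟨m, D, ⟨ev⟩⟩
  refine not_stably_rational_aux (m := m) (D := D) (G' := FractionRing (MvPolynomial (Fin m) G))
    (L' := FractionRing (MvPolynomial (Fin m) L))
    (E := FractionRing (MvPolynomial (Fin m) (BiConeRing F)))
    (T := RatFF D) P (Nat.succ_pos N) hd e he he0 FO hB hred ψ x' hψC hx hx' hT hz π χ hχ hχπ
    ?_ ev.toRingEquiv ?_
  · rw [hFO]
    exact Ideal.Quotient.eq_zero_iff_mem.mpr (Ideal.mem_span_singleton_self _)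
  · intro c
    exact ev.commutes c

end QB

/-- **Corollary 7.3 (Schreieder).**  Let `n, r` be positive integers with
`2^{n-1} - 1 ≤ r ≤ 2ⁿ - 2`.  Then a very general complex hypersurface
`X ⊂ ℙⁿ × ℙ^{r+1}` of bidegree `(d, 2)` with `d ≥ 2ⁿ + n - 1` is not stably rational. -/
theorem very_general_bidegree_d_2_hypersurface_not_stably_rational
    (n r : ℕ) (hn : 0 < n) (hr : 0 < r)
    (hr1 : 2^(n-1) - 1 ≤ r) (hr2 : r ≤ 2^n - 2)
    (d : ℕ) (hd : 2^n + n - 1 ≤ d) :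
    VeryGenerallyOn (bidegCoords n r d) fun F =>
      IsDomain (BiConeRing F) ∧ ¬ IsStablyRationalSpec (BiConeRing F) := by
  obtain ⟨N, rfl⟩ : ∃ N, n = N + 1 := ⟨n - 1, by omega⟩
  obtain ⟨s, rfl⟩ : ∃ s, r = s + 1 := ⟨r - 1, by omega⟩
  have hpow : 2 ^ (N+1) = 2 * 2 ^ N := by rw [pow_succ, mul_comm]
  rw [Nat.add_sub_cancel] at hr1
  exact QB.veryGenerally_of_indep fun F hF =>
    QB.indep_not_stably_rational (by omega) (by omega) (by omega) F hF
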